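/- Suppose 𝔼[z(0)] = ∞. Then ℙ-almost surely, as t → ∞, log P^ω₀(X_t = 0)/log t → −(3α+1)/(4α) if d = 1, and log P^ω₀(X_t = 0)/log t → −1/(2α) − d/2 if d ≥ 2; that is, P^ω₀(X_t = 0) = t^{−(3α+1)/(4α)+o(1)} for d = 1 and P^ω₀(X_t = 0) = t^{−1/(2α)−d/2+o(1)} for d ≥ 2. -/

import Mathlib

open MeasureTheory ProbabilityTheory Filter Set

noncomputable section

/-- `n`-step transition probabilities of the discrete-time simple random walk on `ℤ^m`. -/
def srwKernel (m : ℕ) : ℕ → (Fin m → ℤ) → (Fin m → ℤ) → ℝ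
  | 0, x, y => if x = y then 1 else 0
  | n + 1, x, y =>
      (∑ i : Fin m, (srwKernel m n (Function.update x i (x i + 1)) y
        + srwKernel m n (Function.update x i (x i - 1)) y)) / (2 * m)

/-- Transition kernel of the continuous-time simple random walk on `ℤ^m` which jumps to
each of its `2m` nearest neighbours at rate `1` (total jump rate `2m`). -/
def heatKernel (m : ℕ) (t : ℝ) (x y : Fin m → ℤ) : ℝ :=
  ∑' n : ℕ, Real.exp (-(2 * m) * t) * ((2 * m) * t) ^ n / n.factorial * srwKernel m n x y

/-- `(P, S)` is (a realization of) the continuous-time simple random walk on `ℤ^m`: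
under `P x` the process `S` starts at `x`, has right-continuous (piecewise constant)
paths, and its finite-dimensional distributions are given by the heat kernel. -/
structure IsCTSRW (m : ℕ) {Ω : Type*} [MeasurableSpace Ω]
    (P : (Fin m → ℤ) → Measure Ω) (S : ℝ → Ω → (Fin m → ℤ)) : Prop where
  prob : ∀ x, IsProbabilityMeasure (P x)
  meas : Measurable fun p : ℝ × Ω => S p.1 p.2
  start : ∀ x, ∀ᵐ ω ∂ P x, S 0 ω = x
  rightCont : ∀ x, ∀ᵐ ω ∂ P x, ∀ t : ℝ, 0 ≤ t →
    ∃ ε > (0 : ℝ), ∀ u, t ≤ u → u < t + ε → S u ω = S t ω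
  fdd : ∀ x (n : ℕ) (t : Fin (n + 1) → ℝ), 0 ≤ t 0 →
    (∀ i : Fin n, t i.castSucc ≤ t i.succ) →
    ∀ y : Fin (n + 1) → (Fin m → ℤ),
      (P x {ω | ∀ i, S (t i) ω = y i}).toReal
        = heatKernel m (t 0) x (y 0)
          * ∏ i : Fin n, heatKernel m (t i.succ - t i.castSucc) (y i.castSucc) (y i.succ)

/-- `z` is an i.i.d. nonnegative random scenery on `ℤ^d` whose common upper tail decays
like `r^{-α+o(1)}`. -/
structure IsScenery (d : ℕ) (α : ℝ) {Ω : Type*} [MeasurableSpace Ω]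
    (μ : Measure Ω) (z : (Fin d → ℤ) → Ω → ℝ) : Prop where
  prob : IsProbabilityMeasure μ
  meas : ∀ x, Measurable (z x)
  nonneg : ∀ x ω, 0 ≤ z x ω
  indep : iIndepFun z μ
  ident : ∀ x, IdentDistrib (z x) (z 0) μ μ
  tail : Tendsto (fun r : ℝ => Real.log (μ {ω | r < z 0 ω}).toReal / Real.log r)
    atTop (nhds (-α))

/-- The random walk in random scenery `A(t) = ∫₀ᵗ z(S_u) du`. -/
def rwrs {Ωz Ωw : Type*} (d : ℕ) (z : (Fin d → ℤ) → Ωz → ℝ)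
    (S : ℝ → Ωw → (Fin d → ℤ)) (t : ℝ) (ζ : Ωz) (ω : Ωw) : ℝ :=
  ∫ u in Set.Ioc (0 : ℝ) t, z (S u ω) ζ

end
open MeasureTheory ProbabilityTheory Filter Set

noncomputable section

/-- The clock process `A²(t) = ∫₀ᵗ z(S²_u) du`, where `S²` is the second (ℤ^d-valued)
component of the walk on `ℤ^{1+d}`. -/
def clock (d : ℕ) {Ωz Ωw : Type*} (z : (Fin d → ℤ) → Ωz → ℝ)
    (S : ℝ → Ωw → (Fin (d + 1) → ℤ)) (t : ℝ) (ζ : Ωz) (ω : Ωw) : ℝ :=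
  ∫ u in Set.Ioc (0 : ℝ) t, z (fun i => S u ω i.succ) ζ

/-- The variable-speed random walk `X_t = (S¹_{A²(t)}, S²_t)` in the layered conductance
field `ω(x, x±e₁) = z(x₂)`, `ω(x, x±e_i) = 1` for `i ≥ 2` (coordinate `0` of the walk on
`ℤ^{1+d}` is the ℤ-coordinate, coordinates `1,…,d` form the ℤ^d-coordinate). -/
def layeredWalk (d : ℕ) {Ωz Ωw : Type*} (z : (Fin d → ℤ) → Ωz → ℝ)
    (S : ℝ → Ωw → (Fin (d + 1) → ℤ)) (t : ℝ) (ζ : Ωz) (ω : Ωw) : ℤ × (Fin d → ℤ) :=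
  (S (clock d z S t ζ ω) ω 0, fun i => S t ω i.succ)

/-- Euclidean norm of a point of `ℤ^{1+d} = ℤ × ℤ^d`. -/
def euclNormProd (d : ℕ) (x : ℤ × (Fin d → ℤ)) : ℝ :=
  Real.sqrt ((x.1 : ℝ) ^ 2 + ∑ i, (x.2 i : ℝ) ^ 2)

end

section
section
open MeasureTheory ProbabilityTheory Filter Set

/-- normalized Lebesgue measure on the circle -/
noncomputable def circM : Measure ℝ :=
  (ENNReal.ofReal (2 * Real.pi))⁻¹ • (volume.restrict (Ioc (-Real.pi) Real.pi))

instance circM_prob : IsProbabilityMeasure circM := by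
  constructor
  have : (0:ℝ) < 2 * Real.pi := by positivity
  simp only [circM, Measure.smul_apply, Measure.restrict_apply MeasurableSet.univ, univ_inter,
    Real.volume_Ioc, smul_eq_mul]
  rw [show Real.pi - -Real.pi = 2 * Real.pi by ring]
  exact ENNReal.inv_mul_cancel (by simpa using this) ENNReal.ofReal_ne_top

theorem circM_integral {E : Type*} [NormedAddCommGroup E] [NormedSpace ℝ E] (f : ℝ → E) :
    ∫ θ, f θ ∂circM = (2 * Real.pi)⁻¹ • ∫ θ in (-Real.pi)..Real.pi, f θ := by
  have : (0:ℝ) < 2 * Real.pi := by positivity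
  rw [circM, integral_smul_measure, intervalIntegral.integral_of_le (by linarith)]
  rw [ENNReal.toReal_inv, ENNReal.toReal_ofReal this.le]

theorem circM_exp (k : ℤ) :
    ∫ θ, Complex.exp (Complex.I * k * θ) ∂circM = if k = 0 then 1 else 0 := by
  split_ifs with h
  · simp [h]
  · rw [circM_integral]
    have hk : Complex.I * (k:ℂ) ≠ 0 := by simp [h]
    rw [integral_exp_mul_complex hk]
    have : Complex.exp (Complex.I * k * (Real.pi:ℝ)) = Complex.exp (Complex.I * k * ((-Real.pi : ℝ):ℂ)) := by
      rw [Complex.exp_eq_exp_iff_exists_int]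
      exact ⟨k, by push_cast; ring⟩
    rw [this]; simp

/-- one-dimensional continuous time kernel (Fourier form) -/
noncomputable def qk (t : ℝ) (k : ℤ) : ℝ :=
  ∫ θ, Real.cos (k * θ) * Real.exp (-(2 * t * (1 - Real.cos θ))) ∂circM

noncomputable def qkc (t : ℝ) (k : ℤ) : ℂ :=
  ∫ θ, Complex.exp (Complex.I * k * θ) * (Real.exp (-(2 * t * (1 - Real.cos θ))) : ℝ) ∂circM

theorem bdd_integrable_circ {α : Type*} [MeasurableSpace α] {m : Measure α} [IsFiniteMeasure m] {E : Type*} [NormedAddCommGroup E] [NormedSpace ℝ E]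
    {f : α → E} (hf : AEStronglyMeasurable f m) (C : ℝ) (h : ∀ x, ‖f x‖ ≤ C) : Integrable f m :=
  Integrable.of_bound hf C (Eventually.of_forall h)

theorem circ_supp : ∀ᵐ θ ∂circM, θ ∈ Ioc (-Real.pi) Real.pi := by
  rw [circM]
  exact Measure.ae_smul_measure (ae_restrict_mem measurableSet_Ioc) _

theorem cont_int_circ {E : Type*} [NormedAddCommGroup E] [NormedSpace ℝ E]
    {f : ℝ → E} (hf : Continuous f) : Integrable f circM := by
  rw [circM]
  refine Integrable.smul_measure ?_ (by simp [Real.pi_pos])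
  exact (hf.integrableOn_Icc).mono_set Ioc_subset_Icc_self

theorem qkc_eq (t : ℝ) (k : ℤ) : qkc t k = qk t k := by
  have h1 : (qkc t k).re = qk t k := by
    rw [qkc, qk, ← RCLike.re_eq_complex_re, ← integral_re]
    · congr 1; ext θ
      rw [RCLike.re_eq_complex_re, Complex.re_mul_ofReal]
      congr 1
      rw [show Complex.I * k * θ = ((k * θ : ℝ) : ℂ) * Complex.I by push_cast; ring,
        Complex.exp_ofReal_mul_I_re]
    · apply cont_int_circ; fun_prop
  have h2 : (qkc t k).im = 0 := by
    rw [qkc, ← RCLike.im_eq_complex_im, ← integral_im]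
    · have : ∀ θ : ℝ, RCLike.im (Complex.exp (Complex.I * k * θ) * (Real.exp (-(2 * t * (1 - Real.cos θ))) : ℝ)) = Real.sin (k * θ) * Real.exp (-(2 * t * (1 - Real.cos θ))) := by
        intro θ
        rw [RCLike.im_eq_complex_im, Complex.im_mul_ofReal]
        congr 1
        rw [show Complex.I * k * θ = ((k * θ : ℝ) : ℂ) * Complex.I by push_cast; ring,
          Complex.exp_ofReal_mul_I_im]
      simp_rw [this]
      rw [circM_integral]
      have h3 := intervalIntegral.integral_comp_neg (a := -Real.pi) (b := Real.pi) (fun θ : ℝ => Real.sin (k * θ) * Real.exp (-(2 * t * (1 - Real.cos θ))))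
      simp only [mul_neg, Real.sin_neg, Real.cos_neg, neg_neg, neg_mul, intervalIntegral.integral_neg] at h3
      have : ∫ θ in (-Real.pi)..Real.pi, Real.sin (k * θ) * Real.exp (-(2 * t * (1 - Real.cos θ))) = 0 := by linarith
      rw [this]; simp
    · apply cont_int_circ; fun_prop
  apply Complex.ext <;> simp [h1, h2]

noncomputable abbrev circPi (m : ℕ) : Measure (Fin m → ℝ) := Measure.pi (fun _ => circM)

theorem srw_fourier (m : ℕ) (hm : 1 ≤ m) (n : ℕ) (x y : Fin m → ℤ) :
    (srwKernel m n x y : ℂ) = ∫ θ, (∏ i, Complex.exp (Complex.I * (x i - y i : ℤ) * θ i)) *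
      (((∑ i, Real.cos (θ i)) / m : ℝ) : ℂ) ^ n ∂(circPi m) := by
  induction n generalizing x with
  | zero =>
    simp only [pow_zero, mul_one]
    rw [integral_fintype_prod_eq_prod (fun i (θ : ℝ) => Complex.exp (Complex.I * (x i - y i : ℤ) * θ))]
    simp_rw [circM_exp]
    rw [srwKernel, Finset.prod_ite_zero]
    by_cases h : x = y
    · simp [h]
    · have : ¬ ∀ i ∈ Finset.univ, x i - y i = 0 := by
        intro h2; apply h; ext i; have := h2 i (Finset.mem_univ i); omega
      simp only [this, h, if_false]; simp
  | succ n ih =>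
    have hm' : (m:ℂ) ≠ 0 := by exact_mod_cast (by omega : m ≠ 0)
    have hI : ∀ w : Fin m → ℤ, Integrable (fun θ : Fin m → ℝ => (∏ i, Complex.exp (Complex.I * (w i - y i : ℤ) * θ i)) *
      (((∑ i, Real.cos (θ i)) / m : ℝ) : ℂ) ^ n) (circPi m) := by
      intro w
      refine bdd_integrable_circ (C := 1) ?_ ?_
      · apply Continuous.aestronglyMeasurable; fun_prop
      · intro θ
        rw [norm_mul, norm_prod, norm_pow]
        have : ∀ i, ‖Complex.exp (Complex.I * (w i - y i : ℤ) * θ i)‖ = 1 := by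
          intro i
          rw [show Complex.I * (w i - y i : ℤ) * θ i = (((w i - y i : ℤ) * θ i : ℝ) : ℂ) * Complex.I by push_cast; ring,
            Complex.norm_exp_ofReal_mul_I]
        simp only [this, Finset.prod_const_one, one_mul]
        apply pow_le_one₀ (norm_nonneg _)
        rw [Complex.norm_real, Real.norm_eq_abs, abs_div, div_le_one (by simp; omega)]
        refine (Finset.abs_sum_le_sum_abs _ _).trans ?_
        refine (Finset.sum_le_sum fun i _ => Real.abs_cos_le_one _).trans ?_
        simp
    rw [srwKernel, Complex.ofReal_div, Complex.ofReal_sum]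
    simp_rw [Complex.ofReal_add, ih]
    simp_rw [← integral_add (hI _) (hI _)]
    rw [← integral_finsetSum Finset.univ (fun i _ => (hI (Function.update x i (x i + 1))).fun_add (hI (Function.update x i (x i - 1)))), ← integral_div]
    congr 1; ext θ
    have key : ∀ i : Fin m, ((∏ j, Complex.exp (Complex.I * ((Function.update x i (x i + 1)) j - y j : ℤ) * θ j)) *
      (((∑ i, Real.cos (θ i)) / m : ℝ) : ℂ) ^ n + (∏ j, Complex.exp (Complex.I * ((Function.update x i (x i - 1)) j - y j : ℤ) * θ j)) *
      (((∑ i, Real.cos (θ i)) / m : ℝ) : ℂ) ^ n) = (∏ i, Complex.exp (Complex.I * (x i - y i : ℤ) * θ i)) *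
      (((∑ i, Real.cos (θ i)) / m : ℝ) : ℂ) ^ n * (2 * Real.cos (θ i)) := by
      intro i
      have h1 : ∀ s : ℤ, (∏ j, Complex.exp (Complex.I * ((Function.update x i (x i + s)) j - y j : ℤ) * θ j)) = Complex.exp (Complex.I * s * θ i) * ∏ j, Complex.exp (Complex.I * (x j - y j : ℤ) * θ j) := by
        intro s
        rw [← Finset.mul_prod_erase _ _ (Finset.mem_univ i), ← Finset.mul_prod_erase _ (fun j => Complex.exp (Complex.I * (x j - y j : ℤ) * θ j)) (Finset.mem_univ i)]
        rw [← mul_assoc, ← Complex.exp_add]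
        congr 1
        · simp; ring_nf
        · apply Finset.prod_congr rfl
          intro j hj
          rw [Function.update_of_ne (Finset.ne_of_mem_erase hj)]
      rw [h1 1, sub_eq_add_neg (x i) 1, h1 (-1)]
      have : (2 * Real.cos (θ i) : ℂ) = Complex.exp (Complex.I * (1:ℤ) * θ i) + Complex.exp (Complex.I * (-1:ℤ) * θ i) := by
        rw [Complex.ofReal_cos, Complex.cos]
        push_cast
        ring_nf
      rw [this]; ring
    rw [Finset.sum_congr rfl (fun i _ => key i), ← Finset.mul_sum]
    push_cast
    rw [← Finset.mul_sum, pow_succ]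
    field_simp

theorem heat_prod (m : ℕ) (hm : 1 ≤ m) (t : ℝ) (x y : Fin m → ℤ) :
    heatKernel m t x y = ∏ i, qk t (x i - y i) := by
  have hm' : (m:ℝ) ≠ 0 := by exact_mod_cast (by omega : m ≠ 0)
  have hc : ∀ θ : Fin m → ℝ, |(∑ i, Real.cos (θ i)) / m| ≤ 1 := by
    intro θ
    rw [abs_div, div_le_one (by simp; omega)]
    refine (Finset.abs_sum_le_sum_abs _ _).trans ?_
    refine (Finset.sum_le_sum fun i _ => Real.abs_cos_le_one _).trans ?_
    simp
  have hn : ∀ θ : Fin m → ℝ, ‖(∏ i, Complex.exp (Complex.I * (x i - y i : ℤ) * θ i))‖ = 1 := by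
    intro θ
    rw [norm_prod]
    apply Finset.prod_eq_one
    intro i _
    rw [show Complex.I * (x i - y i : ℤ) * θ i = (((x i - y i : ℤ) * θ i : ℝ) : ℂ) * Complex.I by push_cast; ring,
            Complex.norm_exp_ofReal_mul_I]
  set a : ℕ → ℝ := fun n => Real.exp (-(2 * m) * t) * ((2 * m) * t) ^ n / n.factorial with ha
  have hasum : Summable (fun n => |a n|) := by
    have := (Real.summable_pow_div_factorial |2 * m * t|).mul_left (Real.exp (-(2 * m) * t))
    refine this.congr fun n => ?_
    simp only [ha, abs_div, abs_mul, abs_pow, Real.abs_exp, Nat.abs_cast]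
    ring
  set F : ℕ → (Fin m → ℝ) → ℂ := fun n θ => (a n : ℂ) * ((∏ i, Complex.exp (Complex.I * (x i - y i : ℤ) * θ i)) *
      (((∑ i, Real.cos (θ i)) / m : ℝ) : ℂ) ^ n) with hF
  have hFb : ∀ n θ, ‖F n θ‖ ≤ |a n| := by
    intro n θ
    simp only [hF]
    rw [norm_mul, norm_mul, hn, one_mul, norm_pow, Complex.norm_real, Complex.norm_real]
    exact mul_le_of_le_one_right (norm_nonneg _) (pow_le_one₀ (norm_nonneg _) (hc θ))
  have hFi : ∀ n, Integrable (F n) (circPi m) := fun n =>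
    bdd_integrable_circ (C := |a n|) (by apply Continuous.aestronglyMeasurable; simp only [hF]; fun_prop) (hFb n)
  have hs := hasSum_integral_of_summable_integral_norm hFi (by
    refine Summable.of_nonneg_of_le (fun n => integral_nonneg fun _ => norm_nonneg _) (fun n => ?_) hasum
    calc ∫ θ, ‖F n θ‖ ∂(circPi m) ≤ ∫ θ, |a n| ∂(circPi m) :=
          integral_mono (hFi n).norm (integrable_const _) (hFb n)
      _ = |a n| := by simp)
  have h1 : ∀ n, ∫ θ, F n θ ∂(circPi m) = ((a n * srwKernel m n x y : ℝ) : ℂ) := by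
    intro n
    simp only [hF]
    rw [integral_const_mul, ← srw_fourier m hm]; push_cast; ring
  simp_rw [h1] at hs
  have h2 : ∫ θ, ∑' n, F n θ ∂(circPi m) = ((∏ i, qk t (x i - y i) : ℝ) : ℂ) := by
    push_cast
    simp_rw [← qkc_eq, qkc]
    rw [← integral_fintype_prod_eq_prod (fun i (θ : ℝ) => Complex.exp (Complex.I * (x i - y i : ℤ) * θ) * (Real.exp (-(2 * t * (1 - Real.cos θ))) : ℝ))]
    congr 1; ext θ
    rw [Finset.prod_mul_distrib]
    simp only [hF]
    have : ∀ n, (a n : ℂ) * ((∏ i, Complex.exp (Complex.I * (x i - y i : ℤ) * θ i)) *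
      (((∑ i, Real.cos (θ i)) / m : ℝ) : ℂ) ^ n) = (∏ i, Complex.exp (Complex.I * (x i - y i : ℤ) * θ i)) * ((a n * ((∑ i, Real.cos (θ i)) / m) ^ n : ℝ) : ℂ) := by
      intro n; push_cast; ring
    simp_rw [this]
    rw [tsum_mul_left, ← Complex.ofReal_tsum, ← Complex.ofReal_prod, ← Real.exp_sum]
    congr 2
    have h3 : ∀ n, a n * ((∑ i, Real.cos (θ i)) / m) ^ n = Real.exp (-(2 * m) * t) * ((2 * t * ∑ i, Real.cos (θ i)) ^ n / n.factorial) := by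
      intro n
      simp only [ha]
      rw [show 2 * t * ∑ i, Real.cos (θ i) = (2 * m * t) * ((∑ i, Real.cos (θ i)) / m) by field_simp, mul_pow (2 * (m:ℝ) * t)]
      ring
    simp_rw [h3]
    rw [tsum_mul_left, ← congrFun Real.exp_eq_exp_ℝ _ |>.trans (congrFun (NormedSpace.exp_eq_tsum_div (𝔸 := ℝ)) _), ← Real.exp_add]
    congr 1
    simp only [mul_sub, mul_one, neg_sub, Finset.sum_sub_distrib, Finset.sum_const, Finset.card_univ, Fintype.card_fin, nsmul_eq_mul, ← Finset.mul_sum]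
    ring
  rw [h2] at hs
  have hs2 := Complex.hasSum_ofReal.1 hs
  rw [heatKernel]
  exact hs2.tsum_eq
end

section
open MeasureTheory ProbabilityTheory Filter Set

theorem qk_heat (t : ℝ) (k : ℤ) : qk t k = heatKernel 1 t (fun _ => k) 0 := by
  rw [heat_prod 1 le_rfl]; simp

theorem srw_nonneg (m n : ℕ) (x y : Fin m → ℤ) : 0 ≤ srwKernel m n x y := by
  induction n generalizing x with
  | zero => rw [srwKernel]; split_ifs <;> norm_num
  | succ n ih =>
    rw [srwKernel]
    exact div_nonneg (Finset.sum_nonneg fun i _ => add_nonneg (ih _) (ih _)) (by positivity)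

theorem qk_nonneg {t : ℝ} (ht : 0 ≤ t) (k : ℤ) : 0 ≤ qk t k := by
  rw [qk_heat, heatKernel]
  refine tsum_nonneg fun n => ?_
  have := srw_nonneg 1 n (fun _ => k) 0
  positivity

theorem qk_neg (t : ℝ) (k : ℤ) : qk t (-k) = qk t k := by
  simp [qk]

theorem qk_int (t : ℝ) (k : ℤ) : Integrable (fun θ => Real.cos (k * θ) * Real.exp (-(2 * t * (1 - Real.cos θ)))) circM :=
  cont_int_circ (by fun_prop)

theorem qk_zero_eq (t : ℝ) : qk t 0 = ∫ θ, Real.exp (-(2 * t * (1 - Real.cos θ))) ∂circM := by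
  simp [qk]

theorem qk_int0 (t : ℝ) : Integrable (fun θ => Real.exp (-(2 * t * (1 - Real.cos θ)))) circM :=
  cont_int_circ (by fun_prop)

theorem qk_le (t : ℝ) (k : ℤ) : qk t k ≤ qk t 0 := by
  rw [qk_zero_eq, qk]
  refine integral_mono (qk_int t k) (qk_int0 t) fun θ => ?_
  exact mul_le_of_le_one_left (Real.exp_pos _).le (Real.cos_le_one _)

theorem qk_anti {s t : ℝ} (h : s ≤ t) : qk t 0 ≤ qk s 0 := by
  rw [qk_zero_eq, qk_zero_eq]
  refine integral_mono (qk_int0 t) (qk_int0 s) fun θ => ?_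
  apply Real.exp_le_exp.2
  have := Real.cos_le_one θ
  nlinarith

theorem qk_zero_zero : qk 0 0 = 1 := by
  rw [qk_zero_eq]; simp

theorem qk_le_one {t : ℝ} (ht : 0 ≤ t) (k : ℤ) : qk t k ≤ 1 :=
  (qk_le t k).trans ((qk_anti ht).trans qk_zero_zero.le)

theorem qk_upper {t : ℝ} (ht : 0 < t) : qk t 0 ≤ (Real.sqrt t)⁻¹ := by
  have hb : 0 < 4 * t / Real.pi ^ 2 := by positivity
  have hInt0 := integrable_exp_neg_mul_sq hb
  rw [qk_zero_eq, circM_integral, intervalIntegral.integral_of_le (by linarith [Real.pi_pos])]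
  have h1 : ∫ θ in Ioc (-Real.pi) Real.pi, Real.exp (-(2 * t * (1 - Real.cos θ))) ≤
      ∫ θ in Ioc (-Real.pi) Real.pi, Real.exp (-(4 * t / Real.pi ^ 2) * θ ^ 2) := by
    refine setIntegral_mono_on ?_ hInt0.integrableOn measurableSet_Ioc ?_
    · exact (Continuous.integrableOn_Icc (by fun_prop)).mono_set Ioc_subset_Icc_self
    · intro θ hθ
      apply Real.exp_le_exp.2
      have := Real.cos_le_one_sub_mul_cos_sq (x := θ) (abs_le.2 ⟨hθ.1.le, hθ.2⟩)
      have h2 : 2 / Real.pi ^ 2 * θ ^ 2 ≤ 1 - Real.cos θ := by linarith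
      have h3 := mul_le_mul_of_nonneg_left h2 (by positivity : 0 ≤ 2 * t)
      have : 2 * t * (2 / Real.pi ^ 2 * θ ^ 2) = (4 * t / Real.pi ^ 2) * θ ^ 2 := by ring
      linarith
  have h2 : ∫ θ in Ioc (-Real.pi) Real.pi, Real.exp (-(4 * t / Real.pi ^ 2) * θ ^ 2) ≤
      Real.sqrt (Real.pi / (4 * t / Real.pi ^ 2)) := by
    rw [← integral_gaussian]
    exact setIntegral_le_integral hInt0 (Eventually.of_forall fun _ => (Real.exp_pos _).le)
  have h3 : Real.sqrt (Real.pi / (4 * t / Real.pi ^ 2)) ≤ 2 * Real.pi * (Real.sqrt t)⁻¹ := by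
    rw [Real.sqrt_le_left (by positivity), mul_pow, inv_pow, Real.sq_sqrt ht.le]
    have : Real.pi ≤ 4 := Real.pi_le_four
    rw [show Real.pi / (4 * t / Real.pi ^ 2) = (Real.pi / 4) * Real.pi ^ 2 * t⁻¹ by field_simp]
    gcongr
    nlinarith [Real.pi_pos, sq_nonneg Real.pi]
  rw [smul_eq_mul, inv_mul_le_iff₀ (by positivity)]
  linarith

theorem qk_lower {t : ℝ} (ht : 1 ≤ t) : (10 * Real.sqrt t)⁻¹ ≤ qk t 0 := by
  have hs : 1 ≤ Real.sqrt t := Real.one_le_sqrt.2 ht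
  set r := (Real.sqrt t)⁻¹ with hr
  have hr0 : 0 < r := by positivity
  have hr1 : r ≤ 1 := inv_le_one_of_one_le₀ hs
  have hpi : 3 < Real.pi := Real.pi_gt_three
  rw [qk_zero_eq, circM_integral, intervalIntegral.integral_of_le (by linarith [Real.pi_pos])]
  have hi : IntegrableOn (fun θ => Real.exp (-(2 * t * (1 - Real.cos θ)))) (Ioc (-Real.pi) Real.pi) :=
    (Continuous.integrableOn_Icc (by fun_prop)).mono_set Ioc_subset_Icc_self
  have h1 : ∫ θ in Ioc (-r) r, Real.exp (-(2 * t * (1 - Real.cos θ))) ≤ ∫ θ in Ioc (-Real.pi) Real.pi, Real.exp (-(2 * t * (1 - Real.cos θ))) := by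
    refine setIntegral_mono_set hi (Eventually.of_forall fun _ => (Real.exp_pos _).le) ?_
    exact (Ioc_subset_Ioc (by linarith) (by linarith)).eventuallyLE
  have h2 : ∫ θ in Ioc (-r) r, Real.exp (-1) ≤ ∫ θ in Ioc (-r) r, Real.exp (-(2 * t * (1 - Real.cos θ))) := by
    refine setIntegral_mono_on (by simp) (hi.mono_set (Ioc_subset_Ioc (by linarith) (by linarith))) measurableSet_Ioc ?_
    intro θ hθ
    apply Real.exp_le_exp.2
    have h3 := Real.one_sub_sq_div_two_le_cos (x := θ)
    have h4 : θ ^ 2 ≤ r ^ 2 := sq_le_sq' hθ.1.le hθ.2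
    have h5 : t * r ^ 2 = 1 := by
      rw [hr, inv_pow, Real.sq_sqrt (by linarith)]; field_simp
    have h6 : t * θ ^ 2 ≤ 1 := by rw [← h5]; gcongr
    nlinarith
  rw [setIntegral_const] at h2
  simp only [measureReal_def, Real.volume_Ioc, smul_eq_mul] at h2
  rw [ENNReal.toReal_ofReal (by linarith)] at h2
  rw [smul_eq_mul, mul_inv, ← hr]
  have h7 : (10:ℝ)⁻¹ * r ≤ (2 * Real.pi)⁻¹ * ((r - -r) * Real.exp (-1)) := by
    rw [Real.exp_neg, show (2 * Real.pi)⁻¹ * ((r - -r) * (Real.exp 1)⁻¹) = (Real.pi * Real.exp 1)⁻¹ * r by field_simp; ring]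
    gcongr
    have := Real.exp_one_lt_d9
    have := Real.pi_lt_d2
    nlinarith [Real.exp_pos 1]
  refine h7.trans ?_
  gcongr
  exact h2.trans h1

theorem srw1_le (n : ℕ) (θ : ℝ) (x y : Fin 1 → ℤ) :
    srwKernel 1 n x y ≤ Real.exp (θ * (x 0 - y 0)) * Real.cosh θ ^ n := by
  induction n generalizing x with
  | zero =>
    rw [srwKernel]; split_ifs with h
    · simp [h]
    · simp; positivity
  | succ n ih =>
    rw [srwKernel]
    simp only [Finset.univ_unique, Fin.default_eq_zero, Finset.sum_singleton, Nat.cast_one, mul_one]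
    have h1 := ih (Function.update x 0 (x 0 + 1))
    have h2 := ih (Function.update x 0 (x 0 - 1))
    simp only [Function.update_self] at h1 h2
    push_cast at h1 h2
    rw [show θ * ((x 0:ℝ) + 1 - y 0) = θ * (x 0 - y 0) + θ by ring, Real.exp_add] at h1
    rw [show θ * ((x 0:ℝ) - 1 - y 0) = θ * (x 0 - y 0) + -θ by ring, Real.exp_add] at h2
    rw [pow_succ]
    nth_rewrite 2 [Real.cosh_eq]
    rw [div_le_iff₀ (by norm_num)]
    have : Real.exp (θ * (x 0 - y 0)) * (Real.cosh θ ^ n * ((Real.exp θ + Real.exp (-θ)) / 2)) * 2 =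
      Real.exp (θ * (x 0 - y 0)) * Real.exp θ * Real.cosh θ ^ n + Real.exp (θ * (x 0 - y 0)) * Real.exp (-θ) * Real.cosh θ ^ n := by ring
    linarith

theorem srw_le_one (n : ℕ) (x y : Fin 1 → ℤ) : srwKernel 1 n x y ≤ 1 := by
  simpa using srw1_le n 0 x y

theorem qk_exp {t : ℝ} (ht : 0 ≤ t) (θ : ℝ) (k : ℤ) :
    qk t k ≤ Real.exp (θ * k) * Real.exp (2 * t * (Real.cosh θ - 1)) := by
  rw [qk_heat, heatKernel]
  have hsum : HasSum (fun n : ℕ => Real.exp (θ * k) * Real.exp (-(2 * t)) * ((2 * t * Real.cosh θ) ^ n / n.factorial)) (Real.exp (θ * k) * Real.exp (-(2 * t)) * Real.exp (2 * t * Real.cosh θ)) := by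
    refine HasSum.mul_left _ ?_
    rw [Real.exp_eq_exp_ℝ]
    exact NormedSpace.expSeries_div_hasSum_exp (𝔸 := ℝ) _
  have hle : ∀ n : ℕ, Real.exp (-(2 * (1:ℕ)) * t) * (2 * (1:ℕ) * t) ^ n / n.factorial * srwKernel 1 n (fun _ => k) 0 ≤ Real.exp (θ * k) * Real.exp (-(2 * t)) * ((2 * t * Real.cosh θ) ^ n / n.factorial) := by
    intro n
    have := srw1_le n θ (fun _ => k) 0
    simp only [Pi.zero_apply, Int.cast_zero, sub_zero] at this
    calc _ ≤ Real.exp (-(2 * (1:ℕ)) * t) * (2 * (1:ℕ) * t) ^ n / n.factorial * (Real.exp (θ * k) * Real.cosh θ ^ n) := by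
          gcongr
      _ = _ := by rw [mul_pow (2 * t)]; push_cast; ring_nf
  have hnn : ∀ n : ℕ, 0 ≤ Real.exp (-(2 * (1:ℕ)) * t) * (2 * (1:ℕ) * t) ^ n / n.factorial * srwKernel 1 n (fun _ => k) 0 := by
    intro n
    have := srw_nonneg 1 n (fun _ => k) 0
    positivity
  calc _ ≤ _ := Summable.tsum_le_tsum hle (Summable.of_nonneg_of_le hnn hle hsum.summable) hsum.summable
    _ = _ := by
      rw [hsum.tsum_eq, mul_assoc, ← Real.exp_add]; ring_nf

theorem cosh_le_aux {θ : ℝ} (h0 : 0 ≤ θ) (h1 : θ ≤ 1) : Real.cosh θ - 1 ≤ θ ^ 2 := by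
  have := Real.cosh_le_exp_half_sq θ
  have h2 : Real.exp (θ ^ 2 / 2) ≤ 1 + θ ^ 2 := by
    have h3 : |θ ^ 2 / 2| ≤ 1 := by rw [abs_of_nonneg (by positivity)]; nlinarith
    have := Real.abs_exp_sub_one_le h3
    rw [abs_of_nonneg (by positivity : 0 ≤ θ ^ 2 / 2)] at this
    have := (abs_le.1 this).2
    linarith
  linarith

theorem qk_tail {t T : ℝ} (ht : 0 ≤ t) (htT : t ≤ T) (hT : 1 ≤ T) (k : ℤ) :
    qk t k ≤ Real.exp 2 * Real.exp (-(|(k:ℝ)| / Real.sqrt T)) := by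
  have hs : 1 ≤ Real.sqrt T := Real.one_le_sqrt.2 hT
  have key : ∀ j : ℤ, qk t j ≤ Real.exp 2 * Real.exp (-((j:ℝ) / Real.sqrt T)) := by
    intro j
    rw [← qk_neg]
    have h := qk_exp ht (Real.sqrt T)⁻¹ (-j)
    refine h.trans ?_
    rw [mul_comm]
    gcongr
    · have h1 := cosh_le_aux (θ := (Real.sqrt T)⁻¹) (by positivity) (inv_le_one_of_one_le₀ hs)
      rw [inv_pow, Real.sq_sqrt (by linarith)] at h1
      have : 2 * t * (Real.cosh (Real.sqrt T)⁻¹ - 1) ≤ 2 * t * T⁻¹ := by gcongr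
      have h3 : t * T⁻¹ ≤ 1 := by
        rw [← div_eq_mul_inv]; exact div_le_one_of_le₀ htT (by linarith)
      linarith
    · push_cast; apply le_of_eq; ring
  rcases le_total 0 k with h | h
  · rw [abs_of_nonneg (by exact_mod_cast h)]; exact key k
  · rw [abs_of_nonpos (by exact_mod_cast h), ← qk_neg]
    simpa using key (-k)

theorem qk_cont : Continuous (fun t => qk t 0) := by
  simp_rw [qk_zero_eq]
  rw [continuous_iff_continuousAt]
  intro t0
  refine continuousAt_of_dominated (bound := fun _ => Real.exp (4 * (|t0| + 1))) ?_ ?_ (integrable_const _) ?_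
  · exact Eventually.of_forall fun t => by apply Continuous.aestronglyMeasurable; fun_prop
  · filter_upwards [Metric.ball_mem_nhds t0 one_pos] with t ht
    refine Eventually.of_forall fun θ => ?_
    rw [Real.norm_eq_abs, Real.abs_exp]
    apply Real.exp_le_exp.2
    rw [Metric.mem_ball, Real.dist_eq] at ht
    have h1 : |t| ≤ |t0| + 1 := by
      have := abs_sub_abs_le_abs_sub t t0; linarith
    have h2 := neg_abs_le t
    have h3 := Real.cos_le_one θ
    have h4 := Real.neg_one_le_cos θ
    nlinarith [abs_nonneg t]
  · exact Eventually.of_forall fun θ => by fun_prop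

/-- the `d`-dimensional kernel in product form -/
noncomputable def pk {d : ℕ} (t : ℝ) (x y : Fin d → ℤ) : ℝ := ∏ i, qk t (x i - y i)

theorem pk_nonneg {d : ℕ} {t : ℝ} (ht : 0 ≤ t) (x y : Fin d → ℤ) : 0 ≤ pk t x y :=
  Finset.prod_nonneg fun _ _ => qk_nonneg ht _

theorem pk_symm {d : ℕ} (t : ℝ) (x y : Fin d → ℤ) : pk t x y = pk t y x := by
  unfold pk
  refine Finset.prod_congr rfl fun i _ => ?_
  rw [← qk_neg]; ring_nf

theorem pk_diag {d : ℕ} (t : ℝ) (x : Fin d → ℤ) : pk t x x = qk t 0 ^ d := by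
  simp [pk]

theorem pk_le_diag {d : ℕ} {t : ℝ} (ht : 0 ≤ t) (x y : Fin d → ℤ) : pk t x y ≤ qk t 0 ^ d := by
  unfold pk
  refine (Finset.prod_le_prod (fun i _ => qk_nonneg ht _) (fun i _ => qk_le t _)).trans ?_
  simp
end

section
open MeasureTheory ProbabilityTheory Filter Set
open scoped ENNReal NNReal

theorem tsum_pi_prod {κ : Type*} (f : κ → ℝ≥0∞) (n : ℕ) :
    ∑' a : Fin n → κ, ∏ i, f (a i) = (∑' k, f k) ^ n := by
  induction n with
  | zero => simp
  | succ n ih =>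
    rw [← (Fin.consEquiv (fun _ : Fin (n+1) => κ)).tsum_eq, ENNReal.tsum_prod']
    simp only [Fin.consEquiv_apply, Fin.prod_univ_succ, Fin.cons_zero, Fin.cons_succ]
    simp_rw [ENNReal.tsum_mul_left]
    rw [ih, ENNReal.tsum_mul_right, pow_succ']

theorem tsum_chain {κ : Type*} (f : κ → ℝ≥0∞) (hf : ∑' k, f k = 1) (n : ℕ)
    (c : Fin n → κ → κ → ℝ≥0∞) (hc : ∀ i x, ∑' y, c i x y = 1) :
    ∑' a : Fin (n+1) → κ, f (a 0) * ∏ i : Fin n, c i (a i.castSucc) (a i.succ) = 1 := by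
  induction n with
  | zero =>
    rw [← (Equiv.funUnique (Fin 1) κ).symm.tsum_eq]
    simpa using hf
  | succ n ih =>
    rw [← (Fin.snocEquiv (fun _ : Fin (n+2) => κ)).tsum_eq, ENNReal.tsum_prod', ENNReal.tsum_comm]
    simp only [Fin.snocEquiv_apply, Fin.prod_univ_castSucc]
    have h0 : ∀ (b : Fin (n+1) → κ) (a : κ), (Fin.snoc b a : Fin (n+2) → κ) 0 = b 0 := by
      intro b a
      rw [← Fin.castSucc_zero, Fin.snoc_castSucc (α := fun _ => κ)]
    simp only [Fin.succ_castSucc, Fin.snoc_castSucc (α := fun _ => κ), Fin.succ_last, Fin.snoc_last (α := fun _ => κ), h0]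
    simp_rw [← mul_assoc]
    simp_rw [ENNReal.tsum_mul_left, hc, mul_one]
    exact ih (fun i => c i.castSucc) (fun i x => hc _ x)

theorem measure_eq_tsum_fiber {Ω κ : Type*} [MeasurableSpace Ω] [Countable κ] [MeasurableSpace κ] [MeasurableSingletonClass κ]
    (ν : Measure Ω) {V : Ω → κ} (hV : Measurable V) {E : Set Ω} (hE : MeasurableSet E) :
    ν E = ∑' b, ν {ω | V ω = b ∧ ω ∈ E} := by
  rw [← measure_iUnion]
  · congr 1; ext ω; simp
  · intro a b hab
    rw [Function.onFun, Set.disjoint_left]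
    rintro ω ⟨h1, _⟩ ⟨h2, _⟩
    exact hab (h1.symm.trans h2)
  · intro b
    exact (hV (measurableSet_singleton b)).inter hE

theorem indep_of_prod {Ω κ κ' : Type*} [MeasurableSpace Ω] [Countable κ] [MeasurableSpace κ] [MeasurableSingletonClass κ]
    [Countable κ'] [MeasurableSpace κ'] [MeasurableSingletonClass κ']
    (ν : Measure Ω) [IsProbabilityMeasure ν] {U : Ω → κ} {V : Ω → κ'} (hU : Measurable U) (hV : Measurable V)
    (F : κ → ℝ≥0∞) (G : κ' → ℝ≥0∞) (hF : ∑' a, F a = 1) (hG : ∑' b, G b = 1)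
    (h : ∀ a b, ν {ω | U ω = a ∧ V ω = b} = F a * G b) : IndepFun U V ν ∧ ∀ b, ν {ω | V ω = b} = G b := by
  have hVb : ∀ b, ν {ω | V ω = b} = G b := by
    intro b
    have h0 : ν {ω | V ω = b} = ∑' a, ν {ω | U ω = a ∧ V ω = b} := measure_eq_tsum_fiber ν hU (hV (measurableSet_singleton b))
    rw [h0]
    simp only [h]
    rw [ENNReal.tsum_mul_right, hF, one_mul]
  have hUa : ∀ a, ν {ω | U ω = a} = F a := by
    intro a
    have h0 : ν {ω | U ω = a} = ∑' b, ν {ω | V ω = b ∧ U ω = a} := measure_eq_tsum_fiber ν hV (hU (measurableSet_singleton a))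
    rw [h0]
    simp only [and_comm, h]
    rw [ENNReal.tsum_mul_left, hG, mul_one]
  refine ⟨?_, hVb⟩
  rw [indepFun_iff_map_prod_eq_prod_map_map hU.aemeasurable hV.aemeasurable]
  apply Measure.ext_of_singleton
  rintro ⟨a, b⟩
  rw [Measure.map_apply (hU.prodMk hV) (measurableSet_singleton _), ← Set.singleton_prod_singleton,
    Measure.prod_prod, Measure.map_apply hU (measurableSet_singleton _), Measure.map_apply hV (measurableSet_singleton _)]
  have h1 := hUa a
  have h2 := hVb b
  have h3 := h a b
  simp only [Set.preimage, Set.mem_prod, Set.mem_singleton_iff]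
  rw [h1, h2, h3]

/-- the `ℤ^d` walk, started at the origin -/
structure Walk0 (d : ℕ) {Ω : Type*} [MeasurableSpace Ω] (ν : Measure Ω) (Y : ℝ → Ω → (Fin d → ℤ)) : Prop where
  prob : IsProbabilityMeasure ν
  meas : Measurable fun p : ℝ × Ω => Y p.1 p.2
  fdd : ∀ (n : ℕ) (t : Fin (n + 1) → ℝ), 0 ≤ t 0 → (∀ i : Fin n, t i.castSucc ≤ t i.succ) →
    ∀ y : Fin (n + 1) → (Fin d → ℤ),
      ν {ω | ∀ i, Y (t i) ω = y i} = ENNReal.ofReal (pk (t 0) 0 (y 0)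
          * ∏ i : Fin n, pk (t i.succ - t i.castSucc) (y i.castSucc) (y i.succ))

section
variable {d : ℕ} {Ωw : Type*} [MeasurableSpace Ωw]
    {P : (Fin (d + 1) → ℤ) → Measure Ωw} {S : ℝ → Ωw → (Fin (d + 1) → ℤ)}

theorem qk_tsum (hS : IsCTSRW (d + 1) P S) {t : ℝ} (ht : 0 ≤ t) :
    ∑' k : ℤ, ENNReal.ofReal (qk t k) = 1 := by
  have := hS.prob 0
  have hm : Measurable (S t) := hS.meas.comp measurable_prodMk_left
  have h1 := measure_eq_tsum_fiber (P 0) hm MeasurableSet.univ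
  simp only [measure_univ, Set.mem_univ, and_true] at h1
  have h2 : ∀ b, (P 0) {ω | S t ω = b} = ∏ i, ENNReal.ofReal (qk t (b i)) := by
    intro b
    have := hS.fdd 0 0 (fun _ => t) ht (by simp) (fun _ => b)
    simp only [forall_const, Finset.univ_eq_empty, Finset.prod_empty, mul_one] at this
    rw [← ENNReal.ofReal_toReal (measure_ne_top (P 0) _), this, heat_prod _ (by omega), ENNReal.ofReal_prod_of_nonneg]
    · refine Finset.prod_congr rfl fun i _ => ?_
      rw [← qk_neg]; simp
    · exact fun i _ => qk_nonneg ht _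
  simp_rw [h2] at h1
  rw [tsum_pi_prod (fun k => ENNReal.ofReal (qk t k))] at h1
  exact (ENNReal.pow_right_strictMono (Nat.succ_ne_zero d)).injective (by simpa using h1.symm)

theorem pk_tsum (hS : IsCTSRW (d + 1) P S) {e : ℕ} {t : ℝ} (ht : 0 ≤ t) (x : Fin e → ℤ) :
    ∑' y, ENNReal.ofReal (pk t x y) = 1 := by
  have h : ∀ y, ENNReal.ofReal (pk t x y) = ∏ i, ENNReal.ofReal (qk t ((Equiv.subLeft x y) i)) := by
    intro y
    rw [pk, ENNReal.ofReal_prod_of_nonneg fun i _ => qk_nonneg ht _]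
    rfl
  simp_rw [h]
  rw [(Equiv.subLeft x).tsum_eq (fun y : Fin e → ℤ => ∏ i, ENNReal.ofReal (qk t (y i))), tsum_pi_prod (fun k => ENNReal.ofReal (qk t k)), qk_tsum hS ht, one_pow]

theorem fdd_split (hS : IsCTSRW (d + 1) P S) (n : ℕ) (t : Fin (n + 1) → ℝ) (h0 : 0 ≤ t 0)
    (hmono : ∀ i : Fin n, t i.castSucc ≤ t i.succ) :
    IndepFun (fun ω i => S (t i) ω 0) (fun ω i => fun j : Fin d => S (t i) ω j.succ) (P 0) ∧
    ∀ y : Fin (n+1) → (Fin d → ℤ), (P 0) {ω | (fun i => fun j : Fin d => S (t i) ω j.succ) = y} = ENNReal.ofReal (pk (t 0) 0 (y 0)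
          * ∏ i : Fin n, pk (t i.succ - t i.castSucc) (y i.castSucc) (y i.succ)) := by
  have := hS.prob 0
  have hm : ∀ s, Measurable (S s) := fun s => hS.meas.comp measurable_prodMk_left
  have hd : ∀ i : Fin n, 0 ≤ t i.succ - t i.castSucc := fun i => sub_nonneg.2 (hmono i)
  have hcast : ∀ {e : ℕ} (y : Fin (n+1) → (Fin e → ℤ)), ENNReal.ofReal (pk (t 0) 0 (y 0)
          * ∏ i : Fin n, pk (t i.succ - t i.castSucc) (y i.castSucc) (y i.succ)) = ENNReal.ofReal (pk (t 0) 0 (y 0)) * ∏ i : Fin n, ENNReal.ofReal (pk (t i.succ - t i.castSucc) (y i.castSucc) (y i.succ)) := by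
    intro e y
    rw [ENNReal.ofReal_mul (pk_nonneg h0 _ _), ENNReal.ofReal_prod_of_nonneg fun i _ => pk_nonneg (hd i) _ _]
  have hsum : ∀ {e : ℕ}, ∑' y : Fin (n+1) → (Fin e → ℤ), ENNReal.ofReal (pk (t 0) 0 (y 0)
          * ∏ i : Fin n, pk (t i.succ - t i.castSucc) (y i.castSucc) (y i.succ)) = 1 := by
    intro e
    simp_rw [hcast]
    exact tsum_chain (fun k => ENNReal.ofReal (pk (t 0) 0 k)) (pk_tsum hS h0 _) n
      (fun i a b => ENNReal.ofReal (pk (t i.succ - t i.castSucc) a b)) (fun i x => pk_tsum hS (hd i) x)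
  refine indep_of_prod (P 0) ?_ ?_ (fun a => ENNReal.ofReal (pk (t 0) 0 (fun _ : Fin 1 => a 0)
          * ∏ i : Fin n, pk (t i.succ - t i.castSucc) (fun _ : Fin 1 => a i.castSucc) (fun _ => a i.succ))) _ ?_ hsum ?_
  · fun_prop
  · fun_prop
  · rw [← (hsum (e := 1)), ← (Equiv.piCongrRight (fun _ : Fin (n+1) => (Equiv.funUnique (Fin 1) ℤ).symm)).tsum_eq]
    rfl
  · intro a b
    have := hS.fdd 0 n t h0 hmono (fun i => Fin.cons (a i) (b i))
    have hset : {ω | (fun i => S (t i) ω 0) = a ∧ (fun i => fun j : Fin d => S (t i) ω j.succ) = b} = {ω | ∀ i, S (t i) ω = (Fin.cons (a i) (b i) : Fin (d+1) → ℤ)} := by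
      ext ω
      simp only [Set.mem_ofPred_eq]
      constructor
      · rintro ⟨rfl, rfl⟩ i
        ext j
        refine Fin.cases ?_ (fun j => ?_) j <;> simp
      · intro h
        constructor
        · ext i; rw [h i]; simp
        · ext i j; rw [h i]; simp
    rw [hset, ← ENNReal.ofReal_toReal (measure_ne_top (P 0) _), this, ← ENNReal.ofReal_mul]
    · congr 1
      have hk : ∀ (s : ℝ) (x y : Fin (d+1) → ℤ), heatKernel (d+1) s x y = pk s (fun _ : Fin 1 => x 0) (fun _ => y 0) * pk s (fun j : Fin d => x j.succ) (fun j => y j.succ) := by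
        intro s x y
        rw [heat_prod _ (by omega), Fin.prod_univ_succ]; simp [pk]
      simp only [hk, Finset.prod_mul_distrib, Fin.cons_zero, Fin.cons_succ]
      simp only [Pi.zero_apply]
      rw [show (fun _ : Fin 1 => (0:ℤ)) = 0 from rfl, show (fun _ : Fin d => (0:ℤ)) = 0 from rfl]
      ring
    · exact mul_nonneg (pk_nonneg h0 _ _) (Finset.prod_nonneg fun i _ => pk_nonneg (hd i) _ _)

theorem walk0_of (hS : IsCTSRW (d + 1) P S) : Walk0 d (P 0) (fun s ω => fun j : Fin d => S s ω j.succ) := by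
  refine ⟨hS.prob 0, ?_, ?_⟩
  · have := hS.meas
    refine measurable_pi_lambda _ fun j => (measurable_pi_apply _).comp this
  · intro n t h0 hmono y
    rw [← (fdd_split hS n t h0 hmono).2 y]
    congr 1; ext ω; simp [funext_iff]

theorem indep_proc (hS : IsCTSRW (d + 1) P S) :
    IndepFun (fun ω (s : ℝ≥0) => S s ω 0) (fun ω (s : ℝ≥0) => fun j : Fin d => S s ω j.succ) (P 0) := by
  have := hS.prob 0
  have hm : ∀ s, Measurable (S s) := fun s => hS.meas.comp measurable_prodMk_left
  refine IndepFun.process_indepFun_process (X := fun (s : ℝ≥0) ω => S s ω 0) (Y := fun (s : ℝ≥0) ω => fun j : Fin d => S s ω j.succ) ?_ ?_ ?_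
  · intro i; fun_prop
  · intro i; fun_prop
  · intro I J
    set K := insert 0 (I ∪ J) with hK
    have hcard : K.card = (K.card - 1) + 1 := by
      have : 0 < K.card := Finset.card_pos.2 ⟨0, Finset.mem_insert_self _ _⟩
      omega
    have h := (fdd_split hS (K.card - 1) (fun i => ((K.orderEmbOfFin hcard i : ℝ≥0) : ℝ)) (NNReal.coe_nonneg _) (by
      intro i
      simp only [NNReal.coe_le_coe, OrderEmbedding.le_iff_le]
      exact Fin.castSucc_le_succ i)).1
    have hr : ∀ s ∈ K, ∃ i, K.orderEmbOfFin hcard i = s := by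
      intro s hs
      have := Finset.range_orderEmbOfFin K hcard
      have h2 : s ∈ Set.range (K.orderEmbOfFin hcard) := by rw [this]; exact hs
      exact h2
    choose! φ hφ using hr
    have hI : ∀ i : I, (i : ℝ≥0) ∈ K := fun i => by simp [hK]
    have hJ : ∀ i : J, (i : ℝ≥0) ∈ K := fun i => by simp [hK]
    have := h.comp (φ := fun (a : Fin (K.card - 1 + 1) → ℤ) (i : I) => a (φ i)) (ψ := fun (a : Fin (K.card - 1 + 1) → (Fin d → ℤ)) (i : J) => a (φ i)) (by fun_prop) (by fun_prop)
    convert this using 1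
    · ext ω i; simp [hφ _ (hI i)]
    · ext ω i; simp [hφ _ (hJ i)]
end
end

section
open MeasureTheory ProbabilityTheory Filter Set
open scoped ENNReal NNReal

theorem ceil_grid (u : ℝ) (hu : 0 ≤ u) (n : ℕ) : u ≤ (⌈u * (n+1)⌉₊ : ℝ) / (n+1) ∧ (⌈u * (n+1)⌉₊ : ℝ) / (n+1) < u + 1 / ((n:ℝ)+1) := by
  have hn : (0:ℝ) < n + 1 := by positivity
  constructor
  · rw [le_div_iff₀ hn]; exact Nat.le_ceil _
  · rw [div_lt_iff₀ hn]
    have := Nat.ceil_lt_add_one (show 0 ≤ u * (n+1) by positivity)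
    field_simp
    linarith

theorem ceil_grid_ev (u : ℝ) (hu : 0 ≤ u) {ε : ℝ} (hε : 0 < ε) : ∀ᶠ n : ℕ in atTop, u ≤ (⌈u * (n+1)⌉₊ : ℝ) / (n+1) ∧ (⌈u * (n+1)⌉₊ : ℝ) / (n+1) < u + ε := by
  have h := (tendsto_one_div_add_atTop_nhds_zero_nat (𝕜 := ℝ)).eventually (gt_mem_nhds hε)
  filter_upwards [h] with n hn
  have := ceil_grid u hu n
  exact ⟨this.1, this.2.trans (by linarith)⟩

theorem ceil_grid_tendsto (u : ℝ) (hu : 0 ≤ u) : Tendsto (fun n : ℕ => (⌈u * (n+1)⌉₊ : ℝ) / (n+1)) atTop (nhds u) := by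
  have h := (tendsto_one_div_add_atTop_nhds_zero_nat (𝕜 := ℝ)).const_add u
  rw [add_zero] at h
  exact tendsto_of_tendsto_of_tendsto_of_le_of_le tendsto_const_nhds h (fun n => (ceil_grid u hu n).1) (fun n => (ceil_grid u hu n).2.le)

/-- time integral along the walk of a function is a measurable functional of the path -/
theorem pathFunctional {κ : Type*} [Countable κ] [MeasurableSpace κ] [MeasurableSingletonClass κ] (c : κ → ℝ≥0∞) (t : ℝ) :
    ∃ F : (ℝ≥0 → κ) → ℝ≥0∞, Measurable F ∧ ∀ w : ℝ → κ, Measurable w →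
      (∀ t : ℝ, 0 ≤ t → ∃ ε > (0 : ℝ), ∀ u, t ≤ u → u < t + ε → w u = w t) →
      ∫⁻ u in Ioc 0 t, c (w u) = F (fun s => w s) := by
  classical
  let gr : ℝ → ℕ → ℝ≥0 := fun u n => ((⌈u * (n+1)⌉₊ : ℝ≥0)) / (n+1)
  let Fn : ℕ → κ → (ℝ≥0 → κ) → ℝ≥0∞ := fun n y w => ∫⁻ u in Ioc (0:ℝ) t, (if w (gr u n) = y then 1 else 0)
  refine ⟨fun w => ∑' y, c y * limsup (fun n => Fn n y w) atTop, ?_, ?_⟩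
  · refine Measurable.tsum fun y => ?_
    refine Measurable.const_mul ?_ _
    refine Measurable.limsup fun n => ?_
    have h1 : Measurable (fun p : (ℝ≥0 → κ) × ℕ => if p.1 ((p.2 : ℝ≥0) / (n+1)) = y then (1:ℝ≥0∞) else 0) := by
      refine measurable_from_prod_countable_left fun k => ?_
      refine Measurable.ite ?_ measurable_const measurable_const
      have hk : Measurable (fun w : ℝ≥0 → κ => w ((k : ℝ≥0) / (n+1))) := measurable_pi_apply _
      exact hk (measurableSet_singleton y)
    have h2 : Measurable (fun p : (ℝ≥0 → κ) × ℝ => (p.1, ⌈p.2 * (n+1)⌉₊)) := by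
      refine measurable_fst.prodMk ?_
      exact Nat.measurable_ceil.comp (measurable_snd.mul_const _)
    exact Measurable.lintegral_prod_right' (h1.comp h2)
  · intro w hw hrc
    have h1 : ∀ y, limsup (fun n => Fn n y (fun s => w s)) atTop = ∫⁻ u in Ioc (0:ℝ) t, (if w u = y then 1 else 0) := by
      intro y
      refine Tendsto.limsup_eq ?_
      refine tendsto_lintegral_of_dominated_convergence (fun _ => 1) ?_ ?_ ?_ ?_
      · intro n
        refine Measurable.ite ?_ measurable_const measurable_const
        have : Measurable (fun u : ℝ => w (gr u n)) := by
          have h3 : Measurable (fun k : ℕ => w (((k : ℝ≥0) / (n+1) : ℝ≥0))) := measurable_of_countable _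
          exact h3.comp (Nat.measurable_ceil.comp (measurable_id.mul_const ((n:ℝ)+1)))
        exact this (measurableSet_singleton y)
      · intro n
        refine Eventually.of_forall fun u => ?_
        dsimp only
        split_ifs <;> simp
      · simp
      · refine (ae_restrict_mem measurableSet_Ioc).mono fun u hu => ?_
        obtain ⟨ε, hε, he⟩ := hrc u hu.1.le
        refine tendsto_const_nhds.congr' ?_
        filter_upwards [ceil_grid_ev u hu.1.le hε] with n hn
        have : ((gr u n : ℝ≥0) : ℝ) = (⌈u * (n+1)⌉₊ : ℝ) / (n+1) := by simp [gr]
        have h9 : w (gr u n) = w u := by rw [this, he _ hn.1 hn.2]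
        simp only [h9]
    simp only [h1]
    have hm : ∀ y, Measurable (fun u => if w u = y then (1:ℝ≥0∞) else 0) := fun y =>
      Measurable.ite (hw (measurableSet_singleton y)) measurable_const measurable_const
    simp_rw [← lintegral_const_mul _ (hm _)]
    rw [← lintegral_tsum fun y => ((hm y).const_mul _).aemeasurable]
    congr 1; ext u
    rw [tsum_eq_single (w u)]
    · simp
    · intro b hb; simp [hb.symm]

section
variable {d : ℕ} {Ωz Ωw : Type*} [MeasurableSpace Ωw]
    {P : (Fin (d + 1) → ℤ) → Measure Ωw} {S : ℝ → Ωw → (Fin (d + 1) → ℤ)}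

theorem S1_law (hS : IsCTSRW (d + 1) P S) {s : ℝ} (hs : 0 ≤ s) : (P 0) {ω | S s ω 0 = 0} = ENNReal.ofReal (qk s 0) := by
  have := hS.prob 0
  have hm : Measurable (S s) := hS.meas.comp measurable_prodMk_left
  have h0 : MeasurableSet {ω | S s ω 0 = 0} := by
    have : Measurable (fun ω => S s ω 0) := by fun_prop
    exact this (measurableSet_singleton 0)
  rw [measure_eq_tsum_fiber (P 0) (V := fun ω => fun j : Fin d => S s ω j.succ) (by fun_prop) h0]
  have h2 : ∀ b : Fin d → ℤ, (P 0) {ω | (fun j : Fin d => S s ω j.succ) = b ∧ ω ∈ {ω | S s ω 0 = 0}} = ENNReal.ofReal (qk s 0) * ENNReal.ofReal (pk s 0 b) := by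
    intro b
    have := hS.fdd 0 0 (fun _ => s) hs (by simp) (fun _ => Fin.cons 0 b)
    simp only [forall_const, Finset.univ_eq_empty, Finset.prod_empty, mul_one] at this
    have hset : {ω | (fun j : Fin d => S s ω j.succ) = b ∧ ω ∈ {ω | S s ω 0 = 0}} = {ω | S s ω = (Fin.cons 0 b : Fin (d+1) → ℤ)} := by
      ext ω
      simp only [Set.mem_ofPred_eq]
      constructor
      · rintro ⟨rfl, h⟩
        ext j
        refine Fin.cases ?_ (fun j => ?_) j <;> simp [h]
      · intro h
        rw [h]; simp
    rw [hset, ← ENNReal.ofReal_toReal (measure_ne_top (P 0) _), this, heat_prod _ (by omega), Fin.prod_univ_succ, ENNReal.ofReal_mul (qk_nonneg hs _)]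
    simp [pk]
  simp_rw [h2]
  rw [ENNReal.tsum_mul_left, pk_tsum hS hs, mul_one]

theorem indep_eval (hS : IsCTSRW (d + 1) P S) {G : (ℝ≥0 → (Fin d → ℤ)) → ℝ} (hG : Measurable G) (hG0 : ∀ w, 0 ≤ G w)
    {E : Set (ℝ≥0 → (Fin d → ℤ))} (hE : MeasurableSet E) :
    (P 0) {ω | S (G (fun s j => S s ω j.succ)) ω 0 = 0 ∧ (fun (s : ℝ≥0) (j : Fin d) => S s ω j.succ) ∈ E}
      = ∫⁻ ω in {ω | (fun (s : ℝ≥0) (j : Fin d) => S s ω j.succ) ∈ E}, ENNReal.ofReal (qk (G (fun s j => S s ω j.succ)) 0) ∂(P 0) := by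
  classical
  have := hS.prob 0
  have hm : ∀ s, Measurable (S s) := fun s => hS.meas.comp measurable_prodMk_left
  set Yp : Ωw → (ℝ≥0 → (Fin d → ℤ)) := fun ω s j => S s ω j.succ with hYp
  have hYm : Measurable Yp := by
    refine measurable_pi_lambda _ fun s => measurable_pi_lambda _ fun j => ?_
    have := hm s
    fun_prop
  have hind := indep_proc hS
  set E' : Set Ωw := {ω | Yp ω ∈ E} with hE'
  have hEm : MeasurableSet E' := hYm hE
  set A : Ωw → ℝ := fun ω => G (Yp ω) with hA
  have hAm : Measurable A := hG.comp hYm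
  have hA0 : ∀ ω, 0 ≤ A ω := fun ω => hG0 _
  have hjm : Measurable (fun p : ℝ × Ωw => S p.1 p.2 0) := by have := hS.meas; fun_prop
  have hSA : ∀ {B : Ωw → ℝ}, Measurable B → Measurable (fun ω => if S (B ω) ω 0 = 0 then (1:ℝ≥0∞) else 0) := by
    intro B hB
    refine Measurable.ite ?_ measurable_const measurable_const
    exact (hjm.comp (hB.prodMk measurable_id)) (measurableSet_singleton 0)
  let An : ℕ → Ωw → ℝ := fun n ω => (⌈A ω * (n+1)⌉₊ : ℝ) / (n+1)
  have hKm : ∀ n : ℕ, Measurable (fun ω => ⌈A ω * (n+1)⌉₊) := fun n => Nat.measurable_ceil.comp (hAm.mul_const _)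
  have hAnm : ∀ n, Measurable (An n) := fun n => by
    have h3 : Measurable (fun k : ℕ => (k : ℝ) / (n+1)) := measurable_of_countable _
    exact h3.comp (hKm n)
  have hrw : (P 0) {ω | S (A ω) ω 0 = 0 ∧ Yp ω ∈ E} = ∫⁻ ω in E', (if S (A ω) ω 0 = 0 then (1:ℝ≥0∞) else 0) ∂(P 0) := by
    have hset : MeasurableSet {ω | S (A ω) ω 0 = 0} := (hjm.comp (hAm.prodMk measurable_id)) (measurableSet_singleton 0)
    rw [show (fun ω => if S (A ω) ω 0 = 0 then (1:ℝ≥0∞) else 0) = {ω | S (A ω) ω 0 = 0}.indicator 1 from by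
      ext ω; simp [Set.indicator_apply]]
    rw [lintegral_indicator_one hset, Measure.restrict_apply hset]
    rfl
  have hn : ∀ n, ∫⁻ ω in E', (if S (An n ω) ω 0 = 0 then (1:ℝ≥0∞) else 0) ∂(P 0) = ∫⁻ ω in E', ENNReal.ofReal (qk (An n ω) 0) ∂(P 0) := by
    intro n
    have hs : ∀ k : ℕ, MeasurableSet {ω | ⌈A ω * (n+1)⌉₊ = k} := fun k => hKm n (measurableSet_singleton k)
    have hun : E' = ⋃ k : ℕ, E' ∩ {ω | ⌈A ω * (n+1)⌉₊ = k} := by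
      ext ω; simp
    have hdis : Pairwise (Function.onFun Disjoint fun k : ℕ => E' ∩ {ω | ⌈A ω * (n+1)⌉₊ = k}) := by
      intro a b hab
      rw [Function.onFun, Set.disjoint_left]
      rintro ω ⟨_, h1⟩ ⟨_, h2⟩
      exact hab (h1.symm.trans h2)
    rw [hun, lintegral_iUnion (fun k => hEm.inter (hs k)) hdis, lintegral_iUnion (fun k => hEm.inter (hs k)) hdis]
    congr 1; ext k
    have hk0 : (0:ℝ) ≤ (k:ℝ) / (n+1) := by positivity
    have e1 : ∫⁻ ω in E' ∩ {ω | ⌈A ω * (n+1)⌉₊ = k}, (if S (An n ω) ω 0 = 0 then (1:ℝ≥0∞) else 0) ∂(P 0)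
       = ∫⁻ ω in E' ∩ {ω | ⌈A ω * (n+1)⌉₊ = k}, {ω | S ((k:ℝ)/(n+1)) ω 0 = 0}.indicator 1 ω ∂(P 0) := by
      refine setLIntegral_congr_fun (hEm.inter (hs k)) ?_
      rintro ω ⟨_, h⟩
      have h' : ⌈A ω * (n+1)⌉₊ = k := h
      simp [Set.indicator_apply, An, h']
    have e2 : ∫⁻ ω in E' ∩ {ω | ⌈A ω * (n+1)⌉₊ = k}, ENNReal.ofReal (qk (An n ω) 0) ∂(P 0)
       = ∫⁻ ω in E' ∩ {ω | ⌈A ω * (n+1)⌉₊ = k}, ENNReal.ofReal (qk ((k:ℝ)/(n+1)) 0) ∂(P 0) := by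
      refine setLIntegral_congr_fun (hEm.inter (hs k)) ?_
      rintro ω ⟨_, h⟩
      have h' : ⌈A ω * (n+1)⌉₊ = k := h
      simp [An, h']
    have hset : MeasurableSet {ω | S ((k:ℝ)/(n+1)) ω 0 = 0} := by
      have : Measurable (fun ω => S ((k:ℝ)/(n+1)) ω 0) := by
        have := hm ((k:ℝ)/(n+1)); fun_prop
      exact this (measurableSet_singleton 0)
    rw [e1, e2, lintegral_indicator_one hset, setLIntegral_const, Measure.restrict_apply hset, ← S1_law hS hk0]
    have hi := hind.measure_inter_preimage_eq_mul {w : ℝ≥0 → ℤ | w ((k:ℝ≥0)/(n+1)) = 0} (E ∩ {w | ⌈G w * (n+1)⌉₊ = k})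
      ((measurable_pi_apply ((k:ℝ≥0)/(n+1))) (measurableSet_singleton 0))
      (hE.inter ((Nat.measurable_ceil.comp (hG.mul_const _)) (measurableSet_singleton k)))
    convert hi using 2
    · ext ω
      have h7 : (Yp ω ∈ E ∧ ⌈G (Yp ω) * (n+1)⌉₊ = k) ↔ (ω ∈ E' ∧ ⌈A ω * (n+1)⌉₊ = k) := Iff.rfl
      simp only [Set.mem_inter_iff, Set.mem_preimage, Set.mem_ofPred_eq, NNReal.coe_div, NNReal.coe_natCast, NNReal.coe_add, NNReal.coe_one, ← h7]
      exact Iff.rfl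
    · simp
    · rfl
  rw [hrw]
  have l1 : Tendsto (fun n => ∫⁻ ω in E', (if S (An n ω) ω 0 = 0 then (1:ℝ≥0∞) else 0) ∂(P 0)) atTop (nhds (∫⁻ ω in E', (if S (A ω) ω 0 = 0 then (1:ℝ≥0∞) else 0) ∂(P 0))) := by
    refine tendsto_lintegral_of_dominated_convergence (fun _ => 1) (fun n => hSA (hAnm n)) ?_ (by simp) ?_
    · intro n
      refine Eventually.of_forall fun u => ?_
      dsimp only
      split_ifs <;> simp
    · refine ae_restrict_of_ae ?_
      filter_upwards [hS.rightCont 0] with ω hω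
      obtain ⟨ε, hε, he⟩ := hω (A ω) (hA0 ω)
      refine tendsto_const_nhds.congr' ?_
      filter_upwards [ceil_grid_ev (A ω) (hA0 ω) hε] with n hn
      rw [he _ hn.1 hn.2]
  have l2 : Tendsto (fun n => ∫⁻ ω in E', ENNReal.ofReal (qk (An n ω) 0) ∂(P 0)) atTop (nhds (∫⁻ ω in E', ENNReal.ofReal (qk (A ω) 0) ∂(P 0))) := by
    refine tendsto_lintegral_of_dominated_convergence (fun _ => 1) (fun n => (qk_cont.measurable.comp (hAnm n)).ennreal_ofReal) ?_ (by simp) ?_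
    · intro n
      refine Eventually.of_forall fun u => ?_
      dsimp only
      refine ENNReal.ofReal_le_one.2 (qk_le_one ?_ 0)
      positivity
    · refine Eventually.of_forall fun ω => ?_
      exact ENNReal.tendsto_ofReal ((qk_cont.tendsto _).comp (ceil_grid_tendsto (A ω) (hA0 ω)))
  simp_rw [hn] at l1
  exact tendsto_nhds_unique l1 l2

/-- quenched return probability -/
theorem key_identity (hS : IsCTSRW (d + 1) P S) (z : (Fin d → ℤ) → Ωz → ℝ) (hz : ∀ x ζ, 0 ≤ z x ζ) (ζ : Ωz) {t : ℝ} (ht : 0 ≤ t) :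
    (P 0) {ω | layeredWalk d z S t ζ ω = 0} = 
      ∫⁻ ω in {ω | (fun j : Fin d => S t ω j.succ) = 0}, ENNReal.ofReal (qk (∫⁻ u in Ioc 0 t, ENNReal.ofReal (z (fun j => S u ω j.succ) ζ)).toReal 0) ∂(P 0) := by
  have := hS.prob 0
  obtain ⟨F, hFm, hF⟩ := pathFunctional (fun y : Fin d → ℤ => ENNReal.ofReal (z y ζ)) t
  have h1 := indep_eval hS (G := fun w => (F w).toReal) hFm.ennreal_toReal (fun w => ENNReal.toReal_nonneg)
    (E := {w | w ⟨t, ht⟩ = 0}) ((measurable_pi_apply (⟨t, ht⟩ : ℝ≥0)) (measurableSet_singleton 0))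
  have hp : ∀ ω, Measurable (fun u => fun j : Fin d => S u ω j.succ) := by
    intro ω
    have h2 : Measurable (fun u => S u ω) := hS.meas.comp measurable_prodMk_right
    refine measurable_pi_lambda _ fun j => ?_
    exact (measurable_pi_apply _).comp h2
  have hFa : ∀ᵐ ω ∂(P 0), ∫⁻ u in Ioc 0 t, ENNReal.ofReal (z (fun j => S u ω j.succ) ζ) = F (fun s j => S s ω j.succ) := by
    filter_upwards [hS.rightCont 0] with ω hω
    refine hF _ (hp ω) ?_
    intro s hs
    obtain ⟨ε, hε, he⟩ := hω s hs
    exact ⟨ε, hε, fun u h1 h2 => by rw [he u h1 h2]⟩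
  have hcl : ∀ ω, clock d z S t ζ ω = (∫⁻ u in Ioc 0 t, ENNReal.ofReal (z (fun j => S u ω j.succ) ζ)).toReal := by
    intro ω
    rw [clock, integral_eq_lintegral_of_nonneg_ae (Eventually.of_forall fun u => hz _ _)]
    have : Measurable (fun y : Fin d → ℤ => z y ζ) := measurable_of_countable _
    exact (this.comp (hp ω)).aestronglyMeasurable
  calc _ = (P 0) {ω | S (F (fun s j => S s ω j.succ)).toReal ω 0 = 0 ∧ (fun (s : ℝ≥0) (j : Fin d) => S s ω j.succ) ∈ {w : ℝ≥0 → (Fin d → ℤ) | w ⟨t, ht⟩ = 0}} := by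
        refine measure_congr ?_
        filter_upwards [hFa] with ω hω
        refine propext ?_
        show layeredWalk d z S t ζ ω = 0 ↔ (_ ∧ _)
        rw [layeredWalk, hcl, hω, Prod.ext_iff]
        rfl
    _ = _ := h1
    _ = _ := by
        refine lintegral_congr_ae (ae_restrict_of_ae ?_)
        filter_upwards [hFa] with ω hω
        rw [hω]
end
end

section
open MeasureTheory ProbabilityTheory Filter Set
open scoped ENNReal NNReal

section
variable {d : ℕ} {α : ℝ} {Ωz : Type*} [MeasurableSpace Ωz] {μ : Measure Ωz} {z : (Fin d → ℤ) → Ωz → ℝ}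

theorem scen_low (hα : 0 < α) (hz : IsScenery d α μ z) {γ : ℝ} (hγ : α < γ) :
    ∀ᶠ r : ℝ in atTop, r ^ (-γ) ≤ (μ {ω | r < z 0 ω}).toReal := by
  have h1 := hz.tail.eventually (lt_mem_nhds (show -γ < -α by linarith))
  have h2 := hz.tail.eventually (gt_mem_nhds (show -α < 0 by linarith))
  filter_upwards [h1, h2, eventually_gt_atTop 1] with r h1 h2 hr
  have hl : 0 < Real.log r := Real.log_pos hr
  have hp : 0 < (μ {ω | r < z 0 ω}).toReal := by
    rcases eq_or_lt_of_le (ENNReal.toReal_nonneg (a := μ {ω | r < z 0 ω})) with h | h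
    · rw [← h] at h2; simp at h2
    · exact h
  rw [lt_div_iff₀ hl] at h1
  rw [Real.rpow_def_of_pos (by linarith), ← Real.le_log_iff_exp_le hp]
  linarith

theorem scen_up (hα : 0 < α) (hz : IsScenery d α μ z) {γ : ℝ} (hγ : γ < α) :
    ∀ᶠ r : ℝ in atTop, (μ {ω | r < z 0 ω}).toReal ≤ r ^ (-γ) := by
  have h1 := hz.tail.eventually (gt_mem_nhds (show -α < -γ by linarith))
  have h2 := hz.tail.eventually (gt_mem_nhds (show -α < 0 by linarith))
  filter_upwards [h1, h2, eventually_gt_atTop 1] with r h1 h2 hr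
  have hl : 0 < Real.log r := Real.log_pos hr
  have hp : 0 < (μ {ω | r < z 0 ω}).toReal := by
    rcases eq_or_lt_of_le (ENNReal.toReal_nonneg (a := μ {ω | r < z 0 ω})) with h | h
    · rw [← h] at h2; simp at h2
    · exact h
  rw [div_lt_iff₀ hl] at h1
  rw [Real.rpow_def_of_pos (by linarith), ← Real.log_le_iff_le_exp hp]
  linarith

theorem scen_moment (hα : 0 < α) (hz : IsScenery d α μ z) {β : ℝ} (hβ : 0 < β) (hβα : β < α) :
    ∫⁻ ω, ENNReal.ofReal (z 0 ω) ^ β ∂μ < ∞ := by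
  have := hz.prob
  have e : ∀ ω, ENNReal.ofReal (z 0 ω) ^ β = ENNReal.ofReal (z 0 ω ^ β) := fun ω =>
    ENNReal.ofReal_rpow_of_nonneg (hz.nonneg 0 ω) hβ.le
  simp_rw [e]
  rw [lintegral_rpow_eq_lintegral_meas_lt_mul μ (Eventually.of_forall fun ω => hz.nonneg 0 ω) (hz.meas 0).aemeasurable hβ]
  refine ENNReal.mul_lt_top ENNReal.ofReal_lt_top ?_
  obtain ⟨γ, h1, h2⟩ := exists_between hβα
  obtain ⟨R, hR⟩ := eventually_atTop.1 ((scen_up hα hz h2).and (eventually_gt_atTop 0))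
  have hR0 : 0 < R := (hR R le_rfl).2
  rw [← Ioc_union_Ioi_eq_Ioi hR0.le]
  refine (lintegral_union_le _ _ _).trans_lt (ENNReal.add_lt_top.2 ⟨?_, ?_⟩)
  · have hi : IntegrableOn (fun t : ℝ => t ^ (β - 1)) (Ioc 0 R) :=
      (intervalIntegrable_iff_integrableOn_Ioc_of_le hR0.le).1 (intervalIntegral.intervalIntegrable_rpow' (by linarith))
    refine lt_of_le_of_lt (lintegral_mono fun t => ?_) hi.lintegral_lt_top
    calc _ ≤ 1 * ENNReal.ofReal (t ^ (β - 1)) := by gcongr; exact prob_le_one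
      _ = _ := one_mul _
  · have hi : IntegrableOn (fun t : ℝ => t ^ (-γ + (β - 1))) (Ioi R) := integrableOn_Ioi_rpow_of_lt (by linarith) hR0
    refine lt_of_le_of_lt (setLIntegral_mono' measurableSet_Ioi fun t ht => ?_) hi.lintegral_lt_top
    have ht' : R < t := ht
    have h3 := (hR t ht'.le).1
    rw [Real.rpow_add (hR0.trans ht'), ENNReal.ofReal_mul (Real.rpow_nonneg (hR0.trans ht').le _)]
    gcongr
    rw [← ENNReal.ofReal_toReal (measure_ne_top μ _)]
    exact ENNReal.ofReal_le_ofReal h3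

theorem alpha_le (hα : 0 < α) (hz : IsScenery d α μ z) (hinf : ¬ Integrable (z 0) μ) : α ≤ 1 := by
  by_contra h
  push Not at h
  have := scen_moment hα hz one_pos h
  simp only [ENNReal.rpow_one] at this
  refine hinf ⟨(hz.meas 0).aestronglyMeasurable, ?_⟩
  rw [hasFiniteIntegral_iff_ofReal (Eventually.of_forall fun ω => hz.nonneg 0 ω)]
  exact this
end
end

section
open MeasureTheory ProbabilityTheory Filter Set
open scoped ENNReal NNReal

theorem sum_rpow_le' {ι : Type*} (s : Finset ι) (f : ι → ℝ≥0∞) {β : ℝ} (h0 : 0 < β) (h1 : β ≤ 1) :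
    (∑ i ∈ s, f i) ^ β ≤ ∑ i ∈ s, f i ^ β := by
  classical
  induction s using Finset.induction_on with
  | empty => simp [h0]
  | insert a s ha ih =>
    rw [Finset.sum_insert ha, Finset.sum_insert ha]
    exact (ENNReal.rpow_add_le_add_rpow _ _ h0.le h1).trans (by gcongr)

theorem tsum_rpow_le {ι : Type*} (f : ι → ℝ≥0∞) {β : ℝ} (h0 : 0 < β) (h1 : β ≤ 1) :
    (∑' i, f i) ^ β ≤ ∑' i, f i ^ β := by
  rw [ENNReal.tsum_eq_iSup_sum]
  have := (ENNReal.orderIsoRpow β h0).map_iSup (fun s : Finset ι => ∑ i ∈ s, f i)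
  simp only [ENNReal.orderIsoRpow_apply] at this
  rw [this]
  refine iSup_le fun s => (sum_rpow_le' s f h0 h1).trans ?_
  exact ENNReal.sum_le_tsum s

theorem lint_jensen {Ω : Type*} [MeasurableSpace Ω] {ν : Measure Ω} {f : Ω → ℝ≥0∞} (hf : Measurable f) {β : ℝ} (h0 : 0 < β) (h1 : β ≤ 1) :
    ∫⁻ ω, f ω ^ β ∂ν ≤ (∫⁻ ω, f ω ∂ν) ^ β * (ν univ) ^ (1 - β) := by
  have := ENNReal.lintegral_mul_norm_pow_le (μ := ν) (g := fun _ => 1) hf.aemeasurable aemeasurable_const h0.le (show 0 ≤ 1 - β by linarith) (by ring)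
  simpa using this

section
variable {Ω κ : Type*} [MeasurableSpace Ω] [Countable κ] [MeasurableSpace κ] [MeasurableSingletonClass κ]

theorem block_bound (ν : Measure Ω) [SFinite ν] (Y : ℝ → Ω → κ) (hY : Measurable fun p : ℝ × Ω => Y p.1 p.2)
    (c : κ → ℝ≥0∞) {β : ℝ} (h0 : 0 < β) (h1 : β ≤ 1) (B : Set ℝ) (hB : MeasurableSet B) (r : ℝ)
    (q : κ → ℝ≥0∞) (g : κ → κ → ℝ≥0∞) (K : ℝ≥0∞)
    (hq : ∀ x, ν {ω | Y r ω = x} ≤ K * q x)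
    (hg : ∀ x y, ∫⁻ u in B, ν {ω | Y r ω = x ∧ Y u ω = y} ≤ K * q x * g x y) :
    ∫⁻ ω, (∫⁻ u in B, c (Y u ω)) ^ β ∂ν ≤ K * ∑' x, ∑' y, c y ^ β * (q x * g x y ^ β) := by
  classical
  have hYr : ∀ u, Measurable (Y u) := fun u => hY.comp measurable_prodMk_left
  have hYω : ∀ ω, Measurable (fun u => Y u ω) := fun ω => hY.comp measurable_prodMk_right
  have hS : ∀ y, MeasurableSet {p : Ω × ℝ | Y p.2 p.1 = y} := fun y => (hY.comp measurable_swap) (measurableSet_singleton y)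
  let l : κ → Ω → ℝ≥0∞ := fun y ω => ∫⁻ u in B, {p : Ω × ℝ | Y p.2 p.1 = y}.indicator 1 (ω, u)
  have hI : ∀ y, Measurable (fun p : Ω × ℝ => {p : Ω × ℝ | Y p.2 p.1 = y}.indicator (1 : Ω × ℝ → ℝ≥0∞) p) := fun y => measurable_one.indicator (hS y)
  have hl : ∀ y, Measurable (l y) := fun y => Measurable.lintegral_prod_right' (hI y)
  have e1 : ∀ ω, ∫⁻ u in B, c (Y u ω) = ∑' y, c y * l y ω := by
    intro ω
    have hm : ∀ y, Measurable (fun u => {p : Ω × ℝ | Y p.2 p.1 = y}.indicator (1 : Ω × ℝ → ℝ≥0∞) (ω, u)) := fun y => (hI y).comp measurable_prodMk_left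
    simp_rw [l, ← lintegral_const_mul _ (hm _)]
    rw [← lintegral_tsum fun y => ((hm y).const_mul _).aemeasurable]
    congr 1; ext u
    rw [tsum_eq_single (Y u ω)]
    · simp
    · intro b hb; simp [hb.symm]
  have e2 : ∀ x y, ∫⁻ ω in {ω | Y r ω = x}, l y ω ^ β ∂ν ≤ K * (q x * g x y ^ β) := by
    intro x y
    have hx : MeasurableSet {ω | Y r ω = x} := hYr r (measurableSet_singleton x)
    refine (lint_jensen (hl y) h0 h1).trans ?_
    have e3 : ∫⁻ ω in {ω | Y r ω = x}, l y ω ∂ν = ∫⁻ u in B, ν {ω | Y r ω = x ∧ Y u ω = y} := by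
      simp only [l]
      rw [lintegral_lintegral_swap (hI y).aemeasurable]
      congr 1; ext u
      have hu : MeasurableSet {ω | Y u ω = y} := hYr u (measurableSet_singleton y)
      have : (fun ω => {p : Ω × ℝ | Y p.2 p.1 = y}.indicator (1 : Ω × ℝ → ℝ≥0∞) (ω, u)) = {ω | Y u ω = y}.indicator 1 := by
        ext ω; simp [Set.indicator_apply]
      rw [this, lintegral_indicator_one hu, Measure.restrict_apply hu]
      congr 1; ext ω; simp [and_comm]
    rw [e3, Measure.restrict_apply_univ]
    calc _ ≤ (K * q x * g x y) ^ β * (K * q x) ^ (1 - β) := by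
          have : 0 ≤ 1 - β := by linarith
          gcongr
          · exact hg x y
          · exact hq x
      _ = ((K * q x) ^ β * (K * q x) ^ (1 - β)) * g x y ^ β := by
          rw [ENNReal.mul_rpow_of_nonneg (K * q x) _ h0.le]; ring
      _ = _ := by
          rw [← ENNReal.rpow_add_of_nonneg _ _ h0.le (by linarith)]
          simp [mul_assoc]
  calc _ ≤ ∫⁻ ω, ∑' y, c y ^ β * l y ω ^ β ∂ν := by
        refine lintegral_mono fun ω => ?_
        simp only [e1]
        refine (tsum_rpow_le _ h0 h1).trans (le_of_eq ?_)
        congr 1; ext y; rw [ENNReal.mul_rpow_of_nonneg _ _ h0.le]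
    _ = ∑' y, c y ^ β * ∫⁻ ω, l y ω ^ β ∂ν := by
        rw [lintegral_tsum fun y => (((hl y).pow_const β).const_mul _).aemeasurable]
        congr 1; ext y; rw [lintegral_const_mul _ ((hl y).pow_const β)]
    _ = ∑' y, c y ^ β * ∑' x, ∫⁻ ω in {ω | Y r ω = x}, l y ω ^ β ∂ν := by
        congr 1; ext y; congr 1
        rw [← lintegral_iUnion (s := fun x => {ω | Y r ω = x}) (fun x => hYr r (measurableSet_singleton x))]
        · rw [show (⋃ x, {ω | Y r ω = x}) = univ from by ext ω; simp, Measure.restrict_univ]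
        · intro a b hab
          rw [Function.onFun, Set.disjoint_left]
          intro ω h1 h2
          exact hab (h1.symm.trans h2)
    _ ≤ ∑' y, c y ^ β * ∑' x, K * (q x * g x y ^ β) := by
        gcongr with y x; exact e2 x y
    _ = _ := by
        simp_rw [← ENNReal.tsum_mul_left]
        rw [ENNReal.tsum_comm]
        congr 1; ext x; congr 1; ext y; ring

theorem blocks_bound (ν : Measure Ω) [SFinite ν] (Y : ℝ → Ω → κ) (hY : Measurable fun p : ℝ × Ω => Y p.1 p.2)
    (c : κ → ℝ≥0∞) {β : ℝ} (h0 : 0 < β) (h1 : β ≤ 1) (p : ℝ → κ → κ → ℝ≥0∞) (x0 : κ) (K : ℝ≥0∞) (T b : ℝ) (hb : 0 < b) (n : ℕ) (hT : T ≤ n * b)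
    (hpm : ∀ x y, Measurable (fun u => p u x y)) (hp0 : ∀ x, p 0 x x = 1)
    (hp : ∀ r u, 0 ≤ r → r ≤ u → u ≤ T → ∀ x y, ν {ω | Y r ω = x ∧ Y u ω = y} ≤ K * p r x0 x * p (u - r) x y) :
    ∫⁻ ω, (∫⁻ u in Ioc 0 T, c (Y u ω)) ^ β ∂ν ≤ K * ∑ k : Fin n, ∑' x, ∑' y, c y ^ β * (p (k * b) x0 x * (∫⁻ u in Ioc 0 b, p u x y) ^ β) := by
  have hYω : ∀ ω, Measurable (fun u => Y u ω) := fun ω => hY.comp measurable_prodMk_right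
  let B : Fin n → Set ℝ := fun k => Ioc 0 T ∩ Ioc (k * b) ((k+1) * b)
  have hcov : Ioc 0 T ⊆ ⋃ k, B k := by
    intro u hu
    have hu1 : 0 < u / b := div_pos hu.1 hb
    have hub : u = u / b * b := by field_simp
    have hc0 : 0 < ⌈u / b⌉₊ := Nat.ceil_pos.2 hu1
    have hcn : ⌈u / b⌉₊ ≤ n := by
      rw [Nat.ceil_le, div_le_iff₀ hb]; exact hu.2.trans hT
    refine mem_iUnion.2 ⟨⟨⌈u / b⌉₊ - 1, by omega⟩, hu, ?_, ?_⟩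
    · have h5 := Nat.ceil_lt_add_one hu1.le
      have h4 : ((⌈u / b⌉₊ - 1 : ℕ) : ℝ) = (⌈u / b⌉₊ : ℝ) - 1 := by rw [Nat.cast_sub hc0]; simp
      show ((⌈u / b⌉₊ - 1 : ℕ) : ℝ) * b < u
      rw [h4]
      nlinarith
    · have h5 := Nat.le_ceil (u / b)
      have h4 : ((⌈u / b⌉₊ - 1 : ℕ) : ℝ) = (⌈u / b⌉₊ : ℝ) - 1 := by rw [Nat.cast_sub hc0]; simp
      show u ≤ (((⌈u / b⌉₊ - 1 : ℕ) : ℝ) + 1) * b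
      rw [h4]
      nlinarith
  have hm : ∀ k, Measurable (fun ω => ∫⁻ u in B k, c (Y u ω)) := by
    intro k
    have : Measurable (fun p : Ω × ℝ => c (Y p.2 p.1)) := (measurable_of_countable c).comp (hY.comp measurable_swap)
    exact Measurable.lintegral_prod_right' this
  calc _ ≤ ∫⁻ ω, ∑ k, (∫⁻ u in B k, c (Y u ω)) ^ β ∂ν := by
        refine lintegral_mono fun ω => ?_
        refine le_trans ?_ (sum_rpow_le' Finset.univ _ h0 h1)
        gcongr
        refine (lintegral_mono_set hcov).trans ((lintegral_iUnion_le _ _).trans ?_)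
        rw [tsum_fintype]
    _ = ∑ k, ∫⁻ ω, (∫⁻ u in B k, c (Y u ω)) ^ β ∂ν := lintegral_finsetSum _ fun k _ => (hm k).pow_const β
    _ ≤ ∑ k : Fin n, K * ∑' x, ∑' y, c y ^ β * (p (k * b) x0 x * (∫⁻ u in Ioc 0 b, p u x y) ^ β) := by
        refine Finset.sum_le_sum fun k _ => ?_
        have hk0 : (0:ℝ) ≤ k * b := by positivity
        rcases le_or_gt ((k:ℝ) * b) T with hk | hk
        · refine block_bound ν Y hY c h0 h1 (B k) (measurableSet_Ioc.inter measurableSet_Ioc) (k * b) _ _ K ?_ ?_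
          · intro x
            have := hp (k*b) (k*b) hk0 le_rfl hk x x
            simpa [hp0] using this
          · intro x y
            calc _ ≤ ∫⁻ u in B k, K * p (k*b) x0 x * p (u - k*b) x y := by
                  refine setLIntegral_mono' (measurableSet_Ioc.inter measurableSet_Ioc) fun u hu => ?_
                  exact hp _ _ hk0 hu.2.1.le hu.1.2 x y
              _ ≤ ∫⁻ u in Ioc (k * b) ((k+1) * b), K * p (k*b) x0 x * p (u - k*b) x y := lintegral_mono_set inter_subset_right
              _ = ∫⁻ u in Ioc 0 b, K * p (k*b) x0 x * p u x y := by
                  rw [← lintegral_indicator measurableSet_Ioc, ← lintegral_indicator measurableSet_Ioc,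
                    ← lintegral_sub_right_eq_self ((Ioc 0 b).indicator fun u => K * p (k*b) x0 x * p u x y) ((k:ℝ) * b)]
                  congr 1; ext u
                  simp only [Set.indicator_apply, mem_Ioc]
                  congr 1
                  refine propext (and_congr ?_ ?_) <;> constructor <;> intro h <;> linarith
              _ ≤ _ := by
                  rw [lintegral_const_mul _ (hpm x y)]
        · have : B k = ∅ := by
            ext u
            simp only [B, mem_inter_iff, mem_Ioc, mem_empty_iff_false, iff_false]
            rintro ⟨⟨_, h2⟩, h3, _⟩
            linarith
          simp [this, h0]
    _ = _ := by rw [Finset.mul_sum]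
end
end

section
open MeasureTheory ProbabilityTheory Filter Set
open scoped ENNReal NNReal

theorem qk_meas (k : ℤ) : Measurable (fun t => qk t k) := by
  unfold qk
  have h : StronglyMeasurable (fun p : ℝ × ℝ => Real.cos (k * p.2) * Real.exp (-(2 * p.1 * (1 - Real.cos p.2)))) :=
    Continuous.stronglyMeasurable (by fun_prop)
  exact (h.integral_prod_right' (ν := circM)).measurable

theorem pk_meas {d : ℕ} (x y : Fin d → ℤ) : Measurable (fun t => pk t x y) := by
  unfold pk
  exact Finset.measurable_prod _ fun i _ => qk_meas _

noncomputable def Wsum (d : ℕ) (c : (Fin d → ℤ) → ℝ≥0∞) (β b : ℝ) (n : ℕ) : ℝ≥0∞ :=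
  ∑ k : Fin n, ∑' x, ∑' y, c y ^ β * (ENNReal.ofReal (pk (k * b) 0 x) * (∫⁻ u in Ioc 0 b, ENNReal.ofReal (pk u x y)) ^ β)

section
variable {Ω : Type*} [MeasurableSpace Ω] {d : ℕ} {ν : Measure Ω} {Y : ℝ → Ω → (Fin d → ℤ)}

theorem fdd3 (hY : Walk0 d ν Y) {r u t : ℝ} (h0 : 0 ≤ r) (h1 : r ≤ u) (h2 : u ≤ t) (x y w : Fin d → ℤ) :
    ν {ω | Y r ω = x ∧ Y u ω = y ∧ Y t ω = w} = ENNReal.ofReal (pk r 0 x * pk (u - r) x y * pk (t - u) y w) := by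
  have := hY.fdd 2 ![r, u, t] h0 (by intro i; fin_cases i <;> simp [h1, h2]) ![x, y, w]
  simp only [Fin.forall_fin_succ, Fin.prod_univ_succ] at this
  simpa [mul_assoc] using this

theorem fdd1 (hY : Walk0 d ν Y) {t : ℝ} (h0 : 0 ≤ t) (x : Fin d → ℤ) :
    ν {ω | Y t ω = x} = ENNReal.ofReal (pk t 0 x) := by
  have := hY.fdd 0 ![t] h0 (by simp) ![x]
  simpa using this

theorem bridge_bound (hY : Walk0 d ν Y) (c : (Fin d → ℤ) → ℝ≥0∞) {β : ℝ} (h0 : 0 < β) (h1 : β ≤ 1) {t b : ℝ} (ht : 0 < t)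
    (hb : 0 < b) (n : ℕ) (hn : t / 2 ≤ n * b) :
    ∫⁻ ω in {ω | Y t ω = 0}, (∫⁻ u in Ioc 0 t, c (Y u ω)) ^ β ∂ν ≤ 2 * (ENNReal.ofReal (qk (t/2) 0 ^ d) * Wsum d c β b n) := by
  have := hY.prob
  have hYr : ∀ u, Measurable (Y u) := fun u => hY.meas.comp measurable_prodMk_left
  have hcm : Measurable (fun p : Ω × ℝ => c (Y p.2 p.1)) := (measurable_of_countable c).comp (hY.meas.comp measurable_swap)
  have hp0 : ∀ x : Fin d → ℤ, ENNReal.ofReal (pk 0 x x) = 1 := by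
    intro x; rw [pk_diag, qk_zero_zero]; simp
  have hE : MeasurableSet {ω | Y t ω = 0} := hYr t (measurableSet_singleton 0)
  have hdiag : ∀ s, t / 2 ≤ s → ∀ x y : Fin d → ℤ, pk s x y ≤ qk (t/2) 0 ^ d := by
    intro s hs x y
    refine (pk_le_diag (by linarith) x y).trans ?_
    exact pow_le_pow_left₀ (qk_nonneg (by linarith) _) (qk_anti hs) _
  have hpm : ∀ x y : Fin d → ℤ, Measurable (fun u => ENNReal.ofReal (pk u x y)) := fun x y => (pk_meas x y).ennreal_ofReal
  have A1 := blocks_bound (ν.restrict {ω | Y t ω = 0}) Y hY.meas c h0 h1 (fun u x y => ENNReal.ofReal (pk u x y)) 0 (ENNReal.ofReal (qk (t/2) 0 ^ d))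
    (t/2) b hb n hn hpm hp0 (by
      intro r u hr hru hu x y
      have hm : MeasurableSet {ω | Y r ω = x ∧ Y u ω = y} := (hYr r (measurableSet_singleton x)).inter (hYr u (measurableSet_singleton y))
      rw [Measure.restrict_apply hm]
      have := fdd3 hY hr hru (show u ≤ t by linarith) x y 0
      rw [show {ω | Y r ω = x ∧ Y u ω = y} ∩ {ω | Y t ω = 0} = {ω | Y r ω = x ∧ Y u ω = y ∧ Y t ω = 0} from by ext ω; simp [and_assoc], this]
      rw [← ENNReal.ofReal_mul (pow_nonneg (qk_nonneg (by linarith) _) _), ← ENNReal.ofReal_mul (mul_nonneg (pow_nonneg (qk_nonneg (by linarith) _) _) (pk_nonneg hr _ _))]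
      refine ENNReal.ofReal_le_ofReal ?_
      have e1 := hdiag (t-u) (by linarith) y 0
      have e2 := pk_nonneg hr 0 x
      have e3 := pk_nonneg (show 0 ≤ u - r by linarith) x y
      nlinarith [mul_nonneg e2 e3])
  have A2 := blocks_bound (ν.restrict {ω | Y t ω = 0}) (fun u => Y (t - u)) (hY.meas.comp ((measurable_const.sub measurable_fst).prodMk measurable_snd)) c h0 h1 (fun u x y => ENNReal.ofReal (pk u x y)) 0 (ENNReal.ofReal (qk (t/2) 0 ^ d))
    (t/2) b hb n hn hpm hp0 (by
      intro r u hr hru hu x y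
      have hm : MeasurableSet {ω | Y (t - r) ω = x ∧ Y (t - u) ω = y} := (hYr _ (measurableSet_singleton x)).inter (hYr _ (measurableSet_singleton y))
      rw [Measure.restrict_apply hm]
      have := fdd3 hY (show 0 ≤ t - u by linarith) (show t - u ≤ t - r by linarith) (show t - r ≤ t by linarith) y x 0
      rw [show {ω | Y (t - r) ω = x ∧ Y (t - u) ω = y} ∩ {ω | Y t ω = 0} = {ω | Y (t - u) ω = y ∧ Y (t - r) ω = x ∧ Y t ω = 0} from by ext ω; simp; tauto, this]
      rw [← ENNReal.ofReal_mul (pow_nonneg (qk_nonneg (by linarith) _) _), ← ENNReal.ofReal_mul (mul_nonneg (pow_nonneg (qk_nonneg (by linarith) _) _) (pk_nonneg hr _ _))]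
      refine ENNReal.ofReal_le_ofReal ?_
      rw [show t - r - (t - u) = u - r by ring, show t - (t - r) = r by ring, pk_symm (u-r) y x, pk_symm r x 0]
      have e1 := hdiag (t-u) (by linarith) 0 y
      have e2 := pk_nonneg hr 0 x
      have e3 := pk_nonneg (show 0 ≤ u - r by linarith) x y
      nlinarith [mul_nonneg e2 e3])
  have hrev : ∀ ω, ∫⁻ u in Ioc (t/2) t, c (Y u ω) = ∫⁻ u in Ioc 0 (t/2), c (Y (t - u) ω) := by
    intro ω
    rw [← setLIntegral_congr (Ico_ae_eq_Ioc (a := (0:ℝ)) (b := t/2))]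
    rw [← lintegral_indicator measurableSet_Ioc, ← lintegral_indicator measurableSet_Ico,
      ← lintegral_sub_left_eq_self ((Ioc (t/2) t).indicator fun u => c (Y u ω)) t]
    congr 1; ext u
    simp only [Set.indicator_apply, mem_Ioc, mem_Ico]
    congr 1
    refine propext ⟨fun h => ⟨?_, ?_⟩, fun h => ⟨?_, ?_⟩⟩ <;> linarith [h.1, h.2]
  calc _ ≤ ∫⁻ ω in {ω | Y t ω = 0}, ((∫⁻ u in Ioc 0 (t/2), c (Y u ω)) ^ β + (∫⁻ u in Ioc 0 (t/2), c (Y (t - u) ω)) ^ β) ∂ν := by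
        refine lintegral_mono fun ω => ?_
        refine le_trans ?_ (ENNReal.rpow_add_le_add_rpow _ _ h0.le h1)
        rw [← hrev]
        gcongr
        rw [← Ioc_union_Ioc_eq_Ioc (show (0:ℝ) ≤ t/2 by linarith) (show t/2 ≤ t by linarith)]
        exact lintegral_union_le _ _ _
    _ = _ + _ := by
        refine lintegral_add_left ?_ _
        exact (Measurable.lintegral_prod_right' hcm).pow_const β
    _ ≤ _ := by
        rw [two_mul]
        exact add_le_add A1 A2
end
end

section
open MeasureTheory ProbabilityTheory Filter Set
open scoped ENNReal NNReal

theorem geo_sum {s : ℝ} (hs : 0 < s) : ∑' k : ℤ, ENNReal.ofReal (Real.exp (-(s * |(k:ℝ)|))) ≤ ENNReal.ofReal (2 * (1 + 1 / s)) := by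
  have hsurj : Function.Surjective (fun p : Bool × ℕ => if p.1 then (p.2 : ℤ) else -(p.2 : ℤ)) := by
    intro k
    rcases Int.eq_nat_or_neg k with ⟨n, rfl | rfl⟩
    · exact ⟨(true, n), by simp⟩
    · exact ⟨(false, n), by simp⟩
  refine (ENNReal.tsum_le_tsum_comp_of_surjective hsurj _).trans ?_
  rw [ENNReal.tsum_prod', tsum_bool]
  have h : ∀ n : ℕ, ENNReal.ofReal (Real.exp (-(s * (n:ℝ)))) = ENNReal.ofReal (Real.exp (-s)) ^ n := by
    intro n
    rw [← ENNReal.ofReal_pow (Real.exp_pos _).le, ← Real.exp_nat_mul]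
    congr 2; ring
  have hg : ∑' n : ℕ, ENNReal.ofReal (Real.exp (-(s * (n:ℝ)))) ≤ ENNReal.ofReal (1 + 1 / s) := by
    simp_rw [h]
    rw [ENNReal.tsum_geometric]
    have h1 : Real.exp (-s) * (1 + s) ≤ 1 := by
      have := Real.add_one_le_exp s
      calc _ ≤ Real.exp (-s) * Real.exp s := by gcongr; linarith
        _ = 1 := by rw [← Real.exp_add]; simp
    have h2 : s / (1 + s) ≤ 1 - Real.exp (-s) := by
      rw [div_le_iff₀ (by linarith)]; nlinarith
    have h3 : 0 < s / (1 + s) := by positivity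
    rw [← ENNReal.ofReal_one, ← ENNReal.ofReal_sub _ (Real.exp_pos _).le, ← ENNReal.ofReal_inv_of_pos (by linarith)]
    refine ENNReal.ofReal_le_ofReal ?_
    calc (1 - Real.exp (-s))⁻¹ ≤ (s / (1+s))⁻¹ := by gcongr
      _ = 1 + 1 / s := by field_simp; ring
  have e1 : ∑' b : ℕ, ENNReal.ofReal (Real.exp (-(s * |(((if (false, b).1 = true then ((false, b).2 : ℤ) else -((false, b).2 : ℤ)) : ℤ) : ℝ)|))) = ∑' n : ℕ, ENNReal.ofReal (Real.exp (-(s * (n:ℝ)))) := by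
    congr 1; ext n; simp
  have e2 : ∑' b : ℕ, ENNReal.ofReal (Real.exp (-(s * |(((if (true, b).1 = true then ((true, b).2 : ℤ) else -((true, b).2 : ℤ)) : ℤ) : ℝ)|))) = ∑' n : ℕ, ENNReal.ofReal (Real.exp (-(s * (n:ℝ)))) := by
    congr 1; ext n; simp
  rw [e1, e2, two_mul, ENNReal.ofReal_add (by positivity) (by positivity)]
  exact add_le_add hg hg

theorem tsum_shift_prod {d : ℕ} (x : Fin d → ℤ) (f : ℤ → ℝ≥0∞) : ∑' y : Fin d → ℤ, ∏ i, f (x i - y i) = (∑' k, f k) ^ d := by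
  rw [← tsum_pi_prod, ← (Equiv.subLeft x).tsum_eq (fun y : Fin d → ℤ => ∏ i, f (y i))]
  rfl

theorem G_one (d : ℕ) {β : ℝ} (h0 : 0 < β) : ∃ C : ℝ≥0∞, C ≠ ∞ ∧ ∀ x : Fin d → ℤ,
    ∑' y, (∫⁻ u in Ioc (0:ℝ) 1, ENNReal.ofReal (pk u x y)) ^ β ≤ C := by
  refine ⟨(ENNReal.ofReal (Real.exp 2) ^ β * ENNReal.ofReal (2 * (1 + 1 / β))) ^ d, by finiteness, fun x => ?_⟩
  let f : ℤ → ℝ≥0∞ := fun k => ENNReal.ofReal (Real.exp 2) ^ β * ENNReal.ofReal (Real.exp (-(β * |(k:ℝ)|)))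
  calc _ ≤ ∑' y : Fin d → ℤ, ∏ i, f (x i - y i) := by
        refine ENNReal.tsum_le_tsum fun y => ?_
        have h1 : ∫⁻ u in Ioc (0:ℝ) 1, ENNReal.ofReal (pk u x y) ≤ ∏ i, ENNReal.ofReal (Real.exp 2 * Real.exp (-|((x i - y i : ℤ):ℝ)|)) := by
          calc _ ≤ ∫⁻ u in Ioc (0:ℝ) 1, ∏ i, ENNReal.ofReal (Real.exp 2 * Real.exp (-|((x i - y i : ℤ):ℝ)|)) := by
                refine setLIntegral_mono' measurableSet_Ioc fun u hu => ?_
                rw [pk, ENNReal.ofReal_prod_of_nonneg fun i _ => qk_nonneg hu.1.le _]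
                refine Finset.prod_le_prod' fun i _ => ENNReal.ofReal_le_ofReal ?_
                simpa using qk_tail hu.1.le hu.2 le_rfl (x i - y i)
            _ = _ := by simp
        refine (ENNReal.rpow_le_rpow h1 h0.le).trans (le_of_eq ?_)
        rw [← ENNReal.prod_rpow_of_nonneg h0.le]
        refine Finset.prod_congr rfl fun i _ => ?_
        rw [ENNReal.ofReal_mul (Real.exp_pos _).le, ENNReal.mul_rpow_of_nonneg _ _ h0.le, ENNReal.ofReal_rpow_of_nonneg (Real.exp_pos (-_)).le h0.le, ← Real.exp_mul]
        simp only [f]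
        congr 3; ring
    _ = (∑' k, f k) ^ d := tsum_shift_prod x f
    _ ≤ _ := by
        gcongr
        simp only [f]
        rw [ENNReal.tsum_mul_left]
        gcongr
        exact geo_sum h0

theorem int_rpow_le {N s : ℝ} (hN : 0 < N) (hs : 0 ≤ s) (hs1 : s ≤ 1/2) : ∫⁻ u in Ioc 0 N, ENNReal.ofReal (u ^ (-s)) ≤ ENNReal.ofReal (2 * N ^ (1 - s)) := by
  have hi : IntegrableOn (fun t : ℝ => t ^ (-s)) (Ioc 0 N) :=
      (intervalIntegrable_iff_integrableOn_Ioc_of_le hN.le).1 (intervalIntegral.intervalIntegrable_rpow' (by linarith))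
  rw [← ofReal_integral_eq_lintegral_ofReal hi ((ae_restrict_mem measurableSet_Ioc).mono fun u hu => Real.rpow_nonneg hu.1.le _)]
  refine ENNReal.ofReal_le_ofReal ?_
  rw [← intervalIntegral.integral_of_le hN.le, integral_rpow (Or.inl (by linarith)), Real.zero_rpow (by linarith), sub_zero, div_le_iff₀ (by linarith), show -s + 1 = 1 - s by ring]
  have := Real.rpow_nonneg hN.le (1 - s)
  nlinarith

theorem G_dim1 {β η : ℝ} (h0 : 0 < β) (h1 : β ≤ 1) (hη : 0 < η) (hη1 : η ≤ 1) : ∃ C : ℝ≥0∞, C ≠ ∞ ∧ ∀ N : ℝ, 1 ≤ N → ∀ x : Fin 1 → ℤ,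
    ∑' y, (∫⁻ u in Ioc (0:ℝ) N, ENNReal.ofReal (pk u x y)) ^ β ≤ C * ENNReal.ofReal (N ^ ((1+β)/2 + η)) := by
  refine ⟨ENNReal.ofReal ((Real.exp 2 ^ η * 2) ^ β * (2 * (1 + 1 / (η * β)))), by finiteness, fun N hN x => ?_⟩
  have hN0 : 0 < N := by linarith
  have hsq : 1 ≤ Real.sqrt N := Real.one_le_sqrt.2 hN
  let f : ℤ → ℝ≥0∞ := fun k => ENNReal.ofReal ((Real.exp 2 ^ η * 2 * N ^ ((1+η)/2)) ^ β) * ENNReal.ofReal (Real.exp (-((η * β / Real.sqrt N) * |(k:ℝ)|)))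
  calc _ ≤ ∑' y : Fin 1 → ℤ, ∏ i, f (x i - y i) := by
        refine ENNReal.tsum_le_tsum fun y => ?_
        simp only [Fin.prod_univ_one, Fin.isValue, pk, Finset.univ_unique, Fin.default_eq_zero, Finset.prod_singleton]
        set k := x 0 - y 0
        have h2 : ∫⁻ u in Ioc (0:ℝ) N, ENNReal.ofReal (qk u k) ≤ ENNReal.ofReal ((Real.exp 2 ^ η * 2 * N ^ ((1+η)/2)) * Real.exp (-(|(k:ℝ)| / Real.sqrt N)) ^ η) := by
          calc _ ≤ ∫⁻ u in Ioc (0:ℝ) N, ENNReal.ofReal ((Real.exp 2 * Real.exp (-(|(k:ℝ)| / Real.sqrt N))) ^ η) * ENNReal.ofReal (u ^ (-((1 - η)/2))) := by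
                refine setLIntegral_mono' measurableSet_Ioc fun u hu => ?_
                rw [← ENNReal.ofReal_mul (by positivity)]
                refine ENNReal.ofReal_le_ofReal ?_
                have hq := qk_nonneg hu.1.le k
                have e1 : qk u k = qk u k ^ η * qk u k ^ (1 - η) := by
                  rw [← Real.rpow_add_of_nonneg hq hη.le (by linarith)]; simp
                have e2 : u ^ (-((1 - η)/2)) = ((Real.sqrt u)⁻¹) ^ (1 - η) := by
                  rw [Real.sqrt_eq_rpow, ← Real.rpow_neg hu.1.le, ← Real.rpow_mul hu.1.le]; congr 1; ring
                rw [e1, e2]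
                have : 0 ≤ 1 - η := by linarith
                gcongr
                · exact qk_tail hu.1.le hu.2 hN k
                · exact (qk_le u k).trans (qk_upper hu.1)
            _ = ENNReal.ofReal ((Real.exp 2 * Real.exp (-(|(k:ℝ)| / Real.sqrt N))) ^ η) * ∫⁻ u in Ioc (0:ℝ) N, ENNReal.ofReal (u ^ (-((1 - η)/2))) := by
                rw [lintegral_const_mul]; fun_prop
            _ ≤ ENNReal.ofReal ((Real.exp 2 * Real.exp (-(|(k:ℝ)| / Real.sqrt N))) ^ η) * ENNReal.ofReal (2 * N ^ (1 - (1-η)/2)) := by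
                gcongr
                exact int_rpow_le hN0 (by linarith) (by linarith)
            _ = _ := by
                rw [← ENNReal.ofReal_mul (by positivity), Real.mul_rpow (by positivity) (by positivity), show 1 - (1-η)/2 = (1+η)/2 by ring]
                congr 1; ring
        refine (ENNReal.rpow_le_rpow h2 h0.le).trans (le_of_eq ?_)
        rw [ENNReal.ofReal_rpow_of_nonneg (by positivity) h0.le, Real.mul_rpow (by positivity) (by positivity), ENNReal.ofReal_mul (by positivity)]
        simp only [f]
        congr 2
        rw [← Real.exp_mul, ← Real.exp_mul]
        congr 1; field_simp
    _ = (∑' k, f k) ^ 1 := tsum_shift_prod x f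
    _ ≤ _ := by
        rw [pow_one]
        simp only [f]
        rw [ENNReal.tsum_mul_left]
        have hpos : 0 < η * β / Real.sqrt N := by positivity
        refine (mul_le_mul_right (geo_sum hpos) _).trans ?_
        rw [← ENNReal.ofReal_mul (by positivity), ← ENNReal.ofReal_mul (by positivity)]
        refine ENNReal.ofReal_le_ofReal ?_
        rw [Real.mul_rpow (by positivity) (by positivity), ← Real.rpow_mul hN0.le]
        have e3 : 2 * (1 + 1 / (η * β / Real.sqrt N)) ≤ 2 * (1 + 1 / (η * β)) * N ^ (1/2 : ℝ) := by
          rw [← Real.sqrt_eq_rpow]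
          have : 1 / (η * β / Real.sqrt N) = 1 / (η * β) * Real.sqrt N := by field_simp
          rw [this]
          nlinarith
        calc _ ≤ (Real.exp 2 ^ η * 2) ^ β * N ^ ((1+η)/2 * β) * (2 * (1 + 1 / (η * β)) * N ^ (1/2 : ℝ)) := by gcongr
          _ = (Real.exp 2 ^ η * 2) ^ β * (2 * (1 + 1 / (η * β))) * (N ^ ((1+η)/2 * β) * N ^ (1/2 : ℝ)) := by ring
          _ ≤ _ := by
            rw [← Real.rpow_add hN0]
            refine mul_le_mul_of_nonneg_left (Real.rpow_le_rpow_of_exponent_le hN ?_) (by positivity)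
            nlinarith [mul_nonneg hη.le (sub_nonneg.2 h1)]
end

section
open MeasureTheory ProbabilityTheory Filter Set
open scoped ENNReal NNReal

section
variable {Ω : Type*} [MeasurableSpace Ω] {μ : Measure Ω} {d : ℕ} {α : ℝ} {z : (Fin d → ℤ) → Ω → ℝ}

theorem Wsum_meas (hz : IsScenery d α μ z) (β b : ℝ) (n : ℕ) :
    Measurable (fun ζ => Wsum d (fun y => ENNReal.ofReal (z y ζ)) β b n) := by
  unfold Wsum
  refine Finset.measurable_sum _ fun k _ => Measurable.tsum fun x => Measurable.tsum fun y => ?_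
  exact ((hz.meas y).ennreal_ofReal.pow_const β).mul_const _

theorem Wsum_mean (hz : IsScenery d α μ z) (hp : ∀ t : ℝ, 0 ≤ t → ∑' y : Fin d → ℤ, ENNReal.ofReal (pk t 0 y) = 1) {β b : ℝ} (hb : 0 ≤ b) (n : ℕ) (G : ℝ≥0∞)
    (hG : ∀ x : Fin d → ℤ, ∑' y, (∫⁻ u in Ioc 0 b, ENNReal.ofReal (pk u x y)) ^ β ≤ G) :
    ∫⁻ ζ, Wsum d (fun y => ENNReal.ofReal (z y ζ)) β b n ∂μ ≤ (∫⁻ ζ, ENNReal.ofReal (z 0 ζ) ^ β ∂μ) * (n * G) := by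
  set M := ∫⁻ ζ, ENNReal.ofReal (z 0 ζ) ^ β ∂μ
  have hm : ∀ y, Measurable (fun ζ => ENNReal.ofReal (z y ζ) ^ β) := fun y => (hz.meas y).ennreal_ofReal.pow_const β
  have hM : ∀ y, ∫⁻ ζ, ENNReal.ofReal (z y ζ) ^ β ∂μ = M := by
    intro y
    exact ((hz.ident y).comp (u := fun r : ℝ => ENNReal.ofReal r ^ β) (by fun_prop)).lintegral_eq
  unfold Wsum
  rw [lintegral_finsetSum _ fun k _ => Measurable.tsum fun x => Measurable.tsum fun y => (hm y).mul_const _]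
  calc _ = ∑ k : Fin n, ∑' x, ∑' y, M * (ENNReal.ofReal (pk (k * b) 0 x) * (∫⁻ u in Ioc 0 b, ENNReal.ofReal (pk u x y)) ^ β) := by
        refine Finset.sum_congr rfl fun k _ => ?_
        rw [lintegral_tsum fun x => (Measurable.tsum fun y => (hm y).mul_const _).aemeasurable]
        refine tsum_congr fun x => ?_
        rw [lintegral_tsum fun y => ((hm y).mul_const _).aemeasurable]
        refine tsum_congr fun y => ?_
        rw [lintegral_mul_const _ (hm y), hM]
    _ ≤ ∑ k : Fin n, M * G := by
        refine Finset.sum_le_sum fun k _ => ?_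
        simp only [ENNReal.tsum_mul_left]
        gcongr
        calc _ ≤ ∑' x : Fin d → ℤ, ENNReal.ofReal (pk (k * b) 0 x) * G := by
              refine ENNReal.tsum_le_tsum fun x => ?_
              gcongr
              exact hG x
          _ = G := by rw [ENNReal.tsum_mul_right, hp _ (by positivity), one_mul]
    _ = _ := by simp; ring

theorem W_exist (hα : 0 < α) (hz : IsScenery d α μ z) (hp : ∀ t : ℝ, 0 ≤ t → ∑' y : Fin d → ℤ, ENNReal.ofReal (pk t 0 y) = 1)
    {κ β η : ℝ} (hκ : (d = 1 ∧ κ = 1/2) ∨ κ = 0) (h0 : 0 < β) (h1 : β ≤ 1) (hβ : β < α) (hη : 0 < η) (hη1 : η ≤ 1) :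
    ∃ (b : ℕ → ℝ) (n : ℕ → ℕ) (C : ℝ≥0∞), C ≠ ∞ ∧ ∀ k, 0 < b k ∧ n k * b k = 2 ^ k ∧
      ∫⁻ ζ, Wsum d (fun y => ENNReal.ofReal (z y ζ)) β (b k) (n k) ∂μ ≤ C * ENNReal.ofReal (((2:ℝ) ^ k) ^ (1 - κ * (1 - β) + η)) := by
  have hM := scen_moment hα hz h0 hβ
  set M := ∫⁻ ζ, ENNReal.ofReal (z 0 ζ) ^ β ∂μ
  rcases hκ with ⟨rfl, rfl⟩ | rfl
  · obtain ⟨C, hC, h⟩ := G_dim1 h0 h1 hη hη1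
    refine ⟨fun k => 2 ^ k, fun _ => 1, M * C, ENNReal.mul_ne_top hM.ne hC, fun k => ⟨by positivity, by simp, ?_⟩⟩
    refine (Wsum_mean hz hp (by positivity) 1 _ (h (2 ^ k) (one_le_pow₀ (by norm_num)))).trans (le_of_eq ?_)
    rw [show 1 - 1 / 2 * (1 - β) + η = (1 + β)/2 + η by ring]
    simp; ring
  · obtain ⟨C, hC, h⟩ := G_one d h0
    refine ⟨fun k => 1, fun k => 2 ^ k, M * C, ENNReal.mul_ne_top hM.ne hC, fun k => ⟨by positivity, by simp, ?_⟩⟩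
    refine (Wsum_mean hz hp (by positivity) (2 ^ k) _ h).trans ?_
    have h2 : (1:ℝ) ≤ 2 ^ k := one_le_pow₀ (by norm_num)
    calc M * (((2 ^ k : ℕ) : ℝ≥0∞) * C) = M * C * ENNReal.ofReal (2 ^ k) := by
          rw [ENNReal.ofReal_pow (by norm_num)]; simp; ring
      _ ≤ _ := by
          gcongr
          calc (2:ℝ) ^ k = (2 ^ k : ℝ) ^ (1:ℝ) := by simp
            _ ≤ _ := Real.rpow_le_rpow_of_exponent_le h2 (by linarith)

theorem borel_mean (W : ℕ → Ω → ℝ≥0∞) (hW : ∀ k, Measurable (W k)) (C : ℝ≥0∞) (hC : C ≠ ∞) {χ χ' : ℝ} (hχ : χ < χ')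
    (h : ∀ᶠ k in atTop, ∫⁻ ω, W k ω ∂μ ≤ C * ENNReal.ofReal (((2:ℝ) ^ k) ^ χ)) :
    ∀ᵐ ω ∂μ, ∀ᶠ k in atTop, W k ω ≤ ENNReal.ofReal (((2:ℝ) ^ k) ^ χ') := by
  obtain ⟨k0, hk0⟩ := eventually_atTop.1 h
  have hpos : ∀ k : ℕ, (0:ℝ) < 2 ^ k := fun k => by positivity
  let V : ℕ → Ω → ℝ≥0∞ := fun k ω => W (k + k0) ω * ENNReal.ofReal (((2:ℝ) ^ (k + k0)) ^ (-χ'))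
  have hV : ∀ k, Measurable (V k) := fun k => (hW _).mul_const _
  have hq0 : (0:ℝ) < 2 ^ (χ - χ') := by positivity
  have hq1 : (2:ℝ) ^ (χ - χ') < 1 := Real.rpow_lt_one_of_one_lt_of_neg (by norm_num) (by linarith)
  have hsum : ∫⁻ ω, ∑' k, V k ω ∂μ ≠ ∞ := by
    rw [lintegral_tsum fun k => (hV k).aemeasurable]
    have hle : ∑' k, ∫⁻ ω, V k ω ∂μ ≤ ∑' k : ℕ, C * ENNReal.ofReal (2 ^ (χ - χ')) ^ k := by
      refine ENNReal.tsum_le_tsum fun k => ?_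
      simp only [V]
      rw [lintegral_mul_const _ (hW _)]
      refine (mul_le_mul_left (hk0 (k + k0) (by omega)) _).trans ?_
      rw [mul_assoc, ← ENNReal.ofReal_mul (by positivity), ← ENNReal.ofReal_pow hq0.le, ← Real.rpow_add (hpos _)]
      gcongr
      rw [← Real.rpow_natCast 2 (k + k0), ← Real.rpow_mul (by norm_num), ← Real.rpow_natCast ((2:ℝ) ^ (χ - χ')) k, ← Real.rpow_mul (by norm_num)]
      refine Real.rpow_le_rpow_of_exponent_le (by norm_num) ?_
      push_cast
      have : (0:ℝ) ≤ k0 := by positivity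
      nlinarith
    refine ne_top_of_le_ne_top ?_ hle
    rw [ENNReal.tsum_mul_left, ENNReal.tsum_geometric]
    refine ENNReal.mul_ne_top hC (ENNReal.inv_ne_top.2 ?_)
    rw [← ENNReal.ofReal_one, ← ENNReal.ofReal_sub _ hq0.le]
    simp; linarith
  filter_upwards [ae_lt_top (Measurable.tsum hV) hsum] with ω hω
  have ht := ENNReal.tendsto_atTop_zero_of_tsum_ne_top hω.ne
  have he : ∀ᶠ k in atTop, V k ω ≤ 1 := (ht.eventually_lt_const (zero_lt_one)).mono fun k hk => hk.le
  obtain ⟨k1, hk1⟩ := eventually_atTop.1 he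
  refine eventually_atTop.2 ⟨k1 + k0, fun k hk => ?_⟩
  have := hk1 (k - k0) (by omega)
  simp only [V] at this
  rw [Nat.sub_add_cancel (by omega)] at this
  have e : ENNReal.ofReal (((2:ℝ) ^ k) ^ (-χ')) * ENNReal.ofReal (((2:ℝ) ^ k) ^ χ') = 1 := by
    rw [← ENNReal.ofReal_mul (by positivity), ← Real.rpow_add (hpos _)]; simp
  calc W k ω = W k ω * ENNReal.ofReal (((2:ℝ) ^ k) ^ (-χ')) * ENNReal.ofReal (((2:ℝ) ^ k) ^ χ') := by rw [mul_assoc, e, mul_one]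
    _ ≤ 1 * _ := by gcongr
    _ = _ := one_mul _
end
end

section
open MeasureTheory ProbabilityTheory Filter Set
open scoped ENNReal NNReal

theorem dyad_ev {p : ℕ → Prop} (h : ∀ᶠ k in atTop, p k) : ∀ᶠ t : ℝ in atTop, ∃ k, p k ∧ (2:ℝ) ^ k ≤ t ∧ t < 2 ^ (k + 1) := by
  obtain ⟨k0, hk0⟩ := eventually_atTop.1 h
  filter_upwards [eventually_ge_atTop ((2:ℝ) ^ k0)] with t ht
  have h1 : (1:ℝ) ≤ 2 ^ k0 := one_le_pow₀ (by norm_num)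
  obtain ⟨n, hn, hn'⟩ := exists_nat_pow_near (h1.trans ht) (show (1:ℝ) < 2 by norm_num)
  refine ⟨n, hk0 n ?_, hn, hn'⟩
  have := (pow_lt_pow_iff_right₀ (show (1:ℝ) < 2 by norm_num)).1 (ht.trans_lt hn')
  omega

theorem qk_half {t : ℝ} (ht : 1 ≤ t) : qk (t/2) 0 ≤ 20 * qk t 0 := by
  refine (qk_upper (by linarith)).trans (le_trans ?_ (mul_le_mul_of_nonneg_left (qk_lower ht) (by norm_num)))
  have h1 : Real.sqrt t ≤ 2 * Real.sqrt (t/2) := by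
    rw [show (2:ℝ) = Real.sqrt 4 by rw [show (4:ℝ) = 2^2 by norm_num]; simp, ← Real.sqrt_mul (by norm_num)]
    refine Real.sqrt_le_sqrt ?_
    have : √(4:ℝ) = 2 := by rw [show (4:ℝ) = 2^2 by norm_num]; simp
    rw [this]; linarith
  have h2 : 0 < Real.sqrt t := Real.sqrt_pos.2 (by linarith)
  have h3 : 0 < Real.sqrt (t/2) := Real.sqrt_pos.2 (by linarith)
  rw [inv_eq_one_div, div_le_iff₀ h3]
  field_simp
  linarith

noncomputable def Atime {d : ℕ} {Ωz Ωw : Type*} (z : (Fin d → ℤ) → Ωz → ℝ) (Y : ℝ → Ωw → (Fin d → ℤ)) (ζ : Ωz) (t : ℝ) (ω : Ωw) : ℝ≥0∞ :=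
  ∫⁻ u in Ioc 0 t, ENNReal.ofReal (z (Y u ω) ζ)

section
variable {Ω Ωw : Type*} [MeasurableSpace Ω] [MeasurableSpace Ωw] {μ : Measure Ω} {d : ℕ} {α : ℝ} {z : (Fin d → ℤ) → Ω → ℝ}
  {ν : Measure Ωw} {Y : ℝ → Ωw → (Fin d → ℤ)}

theorem Atime_meas (hY : Walk0 d ν Y) (z : (Fin d → ℤ) → Ω → ℝ) (ζ : Ω) (t : ℝ) : Measurable (Atime z Y ζ t) := by
  unfold Atime
  have hcm : Measurable (fun p : Ωw × ℝ => ENNReal.ofReal (z (Y p.2 p.1) ζ)) :=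
    (measurable_of_countable (fun y => ENNReal.ofReal (z y ζ))).comp (hY.meas.comp measurable_swap)
  exact Measurable.lintegral_prod_right' hcm

theorem walk_p (hY : Walk0 d ν Y) {t : ℝ} (ht : 0 ≤ t) : ∑' y : Fin d → ℤ, ENNReal.ofReal (pk t 0 y) = 1 := by
  have := hY.prob
  have h := measure_eq_tsum_fiber ν (show Measurable (Y t) from hY.meas.comp measurable_prodMk_left) MeasurableSet.univ
  rw [measure_univ] at h
  rw [h]
  refine tsum_congr fun y => ?_
  rw [← fdd1 hY ht]; simp

theorem A_tail (hα : 0 < α) (hα1 : α ≤ 1) (hz : IsScenery d α μ z) (hY : Walk0 d ν Y) {κ σ : ℝ}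
    (hκ : (d = 1 ∧ κ = 1/2) ∨ κ = 0) (hσ : (1 - κ) / α + κ < σ) :
    ∀ᵐ ζ ∂μ, ∀ᶠ t : ℝ in atTop, ν {ω | Y t ω = 0 ∧ Atime z Y ζ t ω = ∞} = 0 ∧
      ν {ω | Y t ω = 0 ∧ ENNReal.ofReal (t ^ σ) ≤ Atime z Y ζ t ω} ≤ ENNReal.ofReal (qk t 0 ^ d / 2) := by
  have hκ1 : 0 ≤ κ ∧ κ ≤ 1/2 := by rcases hκ with h | h <;> constructor <;> linarith
  have hsk : (1 - κ) / α < σ - κ := by linarith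
  have hsk0 : 0 < σ - κ := lt_trans (div_pos (by linarith) hα) hsk
  have hb : (1 - κ) / (σ - κ) < α := by
    rw [div_lt_iff₀ hα] at hsk
    rw [div_lt_iff₀ hsk0]; linarith
  have hb0 : 0 < (1 - κ) / (σ - κ) := div_pos (by linarith) hsk0
  obtain ⟨β, hβ1, hβ2⟩ := exists_between hb
  have hβ0 : 0 < β := hb0.trans hβ1
  have hgap : 0 < β * (σ - κ) - (1 - κ) := by
    rw [div_lt_iff₀ hsk0] at hβ1; linarith
  obtain ⟨η, hη, hη1, hη2⟩ : ∃ η : ℝ, 0 < η ∧ η ≤ 1 ∧ 4 * η ≤ β * (σ - κ) - (1 - κ) :=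
    ⟨min 1 ((β * (σ - κ) - (1 - κ))/4), by positivity, min_le_left _ _, by linarith [min_le_right 1 ((β * (σ - κ) - (1 - κ))/4)]⟩
  obtain ⟨b, n, C, hC, hW⟩ := W_exist hα hz (fun t ht => walk_p hY ht) hκ hβ0 (by linarith) hβ2 hη hη1
  have hBC := borel_mean (μ := μ) (fun k ζ => Wsum d (fun y => ENNReal.ofReal (z y ζ)) β (b k) (n k)) (fun k => Wsum_meas hz _ _ _) C hC
    (show 1 - κ * (1 - β) + η < 1 - κ * (1 - β) + 2 * η by linarith) (Eventually.of_forall fun k => (hW k).2.2)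
  filter_upwards [hBC] with ζ hζ
  have hsmall : ∀ᶠ t : ℝ in atTop, 2 * 20 ^ d * t ^ (-(2 * η)) ≤ 1 / 2 := by
    have := (tendsto_rpow_neg_atTop (show 0 < 2 * η by linarith)).const_mul (2 * 20 ^ d : ℝ)
    rw [mul_zero] at this
    exact (this.eventually_lt_const (show (0:ℝ) < 1/2 by norm_num)).mono fun t h => h.le
  filter_upwards [dyad_ev hζ, hsmall, eventually_ge_atTop 1] with t ⟨k, hk, hkt, hkt'⟩ hs ht
  have ht0 : 0 < t := by linarith
  have hnb : t / 2 ≤ n k * b k := by rw [(hW k).2.1]; rw [pow_succ] at hkt'; linarith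
  have hB := bridge_bound hY (fun y => ENNReal.ofReal (z y ζ)) hβ0 (by linarith) ht0 (hW k).1 (n k) hnb
  change ∫⁻ ω in {ω | Y t ω = 0}, (Atime z Y ζ t ω) ^ β ∂ν ≤ _ at hB
  have hAm := Atime_meas hY z ζ t
  have hE : MeasurableSet {ω | Y t ω = 0} := (show Measurable (Y t) from hY.meas.comp measurable_prodMk_left) (measurableSet_singleton 0)
  have hχ : 0 ≤ 1 - κ * (1 - β) + 2 * η := by nlinarith
  have hB2 : ∫⁻ ω in {ω | Y t ω = 0}, (Atime z Y ζ t ω) ^ β ∂ν ≤ ENNReal.ofReal (2 * (20 ^ d * qk t 0 ^ d * t ^ (1 - κ * (1 - β) + 2 * η))) := by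
    refine hB.trans ?_
    rw [ENNReal.ofReal_mul (by norm_num), ENNReal.ofReal_mul (mul_nonneg (by positivity) (pow_nonneg (qk_nonneg ht0.le _) _)), ← mul_pow]
    gcongr
    · simp
    · exact qk_nonneg (by linarith) _
    · exact qk_half ht
    · refine hk.trans (ENNReal.ofReal_le_ofReal ?_)
      gcongr
  constructor
  · have := ae_lt_top (hAm.pow_const β) (ne_top_of_le_ne_top ENNReal.ofReal_ne_top hB2)
    rw [ae_restrict_iff' hE, ae_iff] at this
    refine measure_mono_null ?_ this
    rintro ω ⟨h1, h2⟩
    simp only [Set.mem_ofPred_eq]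
    push Not
    refine ⟨h1, ?_⟩
    rw [h2, ENNReal.top_rpow_of_pos hβ0]
  · have hM := mul_meas_ge_le_lintegral (μ := ν.restrict {ω | Y t ω = 0}) (hAm.pow_const β) (ENNReal.ofReal (t ^ σ) ^ β)
    have hset : {ω | Y t ω = 0 ∧ ENNReal.ofReal (t ^ σ) ≤ Atime z Y ζ t ω} = {ω | ENNReal.ofReal (t ^ σ) ^ β ≤ Atime z Y ζ t ω ^ β} ∩ {ω | Y t ω = 0} := by
      ext ω
      simp only [Set.mem_ofPred_eq, mem_inter_iff, ENNReal.rpow_le_rpow_iff hβ0]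
      tauto
    rw [Measure.restrict_apply (measurableSet_le measurable_const (hAm.pow_const β)), ← hset] at hM
    set p := ν {ω | Y t ω = 0 ∧ ENNReal.ofReal (t ^ σ) ≤ Atime z Y ζ t ω}
    have hM2 := hM.trans hB2
    rw [ENNReal.ofReal_rpow_of_nonneg (by positivity) hβ0.le, ← Real.rpow_mul ht0.le] at hM2
    have e : ENNReal.ofReal (t ^ (-(σ * β))) * ENNReal.ofReal (t ^ (σ * β)) = 1 := by
      rw [← ENNReal.ofReal_mul (by positivity), ← Real.rpow_add ht0]; simp
    calc p = ENNReal.ofReal (t ^ (-(σ * β))) * (ENNReal.ofReal (t ^ (σ * β)) * p) := by rw [← mul_assoc, e, one_mul]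
      _ ≤ ENNReal.ofReal (t ^ (-(σ * β))) * ENNReal.ofReal (2 * (20 ^ d * qk t 0 ^ d * t ^ (1 - κ * (1 - β) + 2 * η))) := by gcongr
      _ = ENNReal.ofReal (2 * 20 ^ d * (t ^ (-(σ * β)) * t ^ (1 - κ * (1 - β) + 2 * η)) * qk t 0 ^ d) := by
          rw [← ENNReal.ofReal_mul (by positivity)]; congr 1; ring
      _ ≤ _ := by
          refine ENNReal.ofReal_le_ofReal ?_
          rw [← Real.rpow_add ht0]
          have h5 : t ^ (-(σ * β) + (1 - κ * (1 - β) + 2 * η)) ≤ t ^ (-(2 * η)) := Real.rpow_le_rpow_of_exponent_le ht (by nlinarith)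
          have h6 : (0:ℝ) ≤ qk t 0 ^ d := pow_nonneg (qk_nonneg ht0.le _) _
          calc _ ≤ 2 * 20 ^ d * t ^ (-(2 * η)) * qk t 0 ^ d := by gcongr
            _ ≤ 1/2 * qk t 0 ^ d := by gcongr
            _ = _ := by ring
end

section
variable {Ω Ωw : Type*} [MeasurableSpace Ω] [MeasurableSpace Ωw] {d : ℕ} {z : (Fin d → ℤ) → Ω → ℝ}
  {ν : Measure Ωw} {Y : ℝ → Ωw → (Fin d → ℤ)}

theorem lower_gen (hY : Walk0 d ν Y) (ζ : Ω) {t a : ℝ} (ht : 0 ≤ t) (ha : 0 ≤ a)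
    (h : ν {ω | Y t ω = 0 ∧ ENNReal.ofReal a ≤ Atime z Y ζ t ω} ≤ ENNReal.ofReal (qk t 0 ^ d / 2)) :
    ENNReal.ofReal (qk a 0 * (qk t 0 ^ d / 2)) ≤ ∫⁻ ω in {ω | Y t ω = 0}, ENNReal.ofReal (qk (Atime z Y ζ t ω).toReal 0) ∂ν := by
  have := hY.prob
  have hAm := Atime_meas hY z ζ t
  have hE : MeasurableSet {ω | Y t ω = 0} := (show Measurable (Y t) from hY.meas.comp measurable_prodMk_left) (measurableSet_singleton 0)
  have hF : MeasurableSet {ω | ENNReal.ofReal a ≤ Atime z Y ζ t ω} := measurableSet_le measurable_const hAm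
  have hq : 0 ≤ qk t 0 ^ d := pow_nonneg (qk_nonneg ht _) _
  have h1 : ENNReal.ofReal (qk t 0 ^ d / 2) ≤ ν ({ω | Y t ω = 0} \ {ω | ENNReal.ofReal a ≤ Atime z Y ζ t ω}) := by
    have h2 := measure_inter_add_sdiff (μ := ν) {ω | Y t ω = 0} hF
    rw [fdd1 hY ht, pk_diag] at h2
    have h3 : ν ({ω | Y t ω = 0} ∩ {ω | ENNReal.ofReal a ≤ Atime z Y ζ t ω}) ≤ ENNReal.ofReal (qk t 0 ^ d / 2) := h
    have h4 : ENNReal.ofReal (qk t 0 ^ d / 2) + ENNReal.ofReal (qk t 0 ^ d / 2) ≤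
        ENNReal.ofReal (qk t 0 ^ d / 2) + ν ({ω | Y t ω = 0} \ {ω | ENNReal.ofReal a ≤ Atime z Y ζ t ω}) := by
      rw [← ENNReal.ofReal_add (by positivity) (by positivity), add_halves, ← h2]
      gcongr
    exact (ENNReal.add_le_add_iff_left ENNReal.ofReal_ne_top).1 h4
  rw [ENNReal.ofReal_mul (qk_nonneg ha _)]
  calc _ ≤ ENNReal.ofReal (qk a 0) * ν ({ω | Y t ω = 0} \ {ω | ENNReal.ofReal a ≤ Atime z Y ζ t ω}) := by gcongr
    _ = ∫⁻ ω in {ω | Y t ω = 0} \ {ω | ENNReal.ofReal a ≤ Atime z Y ζ t ω}, ENNReal.ofReal (qk a 0) ∂ν := by simp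
    _ ≤ ∫⁻ ω in {ω | Y t ω = 0} \ {ω | ENNReal.ofReal a ≤ Atime z Y ζ t ω}, ENNReal.ofReal (qk (Atime z Y ζ t ω).toReal 0) ∂ν := by
        refine setLIntegral_mono' (hE.diff hF) fun ω hω => ENNReal.ofReal_le_ofReal (qk_anti ?_)
        have : Atime z Y ζ t ω < ENNReal.ofReal a := not_le.1 hω.2
        exact ENNReal.toReal_le_of_le_ofReal ha this.le
    _ ≤ _ := lintegral_mono_set sdiff_subset

theorem upper_gen (hY : Walk0 d ν Y) (ζ : Ω) {t a : ℝ} (ht : 0 ≤ t) (ha : 0 ≤ a)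
    (h : ν {ω | Y t ω = 0 ∧ Atime z Y ζ t ω = ∞} = 0) :
    ∫⁻ ω in {ω | Y t ω = 0}, ENNReal.ofReal (qk (Atime z Y ζ t ω).toReal 0) ∂ν ≤
      ENNReal.ofReal (qk a 0 * qk t 0 ^ d) + ν {ω | Y t ω = 0 ∧ Atime z Y ζ t ω ≤ ENNReal.ofReal a} := by
  have := hY.prob
  have hAm := Atime_meas hY z ζ t
  have hE : MeasurableSet {ω | Y t ω = 0} := (show Measurable (Y t) from hY.meas.comp measurable_prodMk_left) (measurableSet_singleton 0)
  have hF : MeasurableSet {ω | Atime z Y ζ t ω ≤ ENNReal.ofReal a} := measurableSet_le hAm measurable_const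
  have hae : ∀ᵐ ω ∂ν, Y t ω = 0 → Atime z Y ζ t ω ≠ ∞ := by
    rw [ae_iff]
    refine measure_mono_null (fun ω hω => ?_) h
    simpa using hω
  calc _ ≤ ∫⁻ ω in {ω | Y t ω = 0}, (ENNReal.ofReal (qk a 0) + indicator {ω | Atime z Y ζ t ω ≤ ENNReal.ofReal a} 1 ω) ∂ν := by
        refine lintegral_mono_ae ?_
        rw [ae_restrict_iff' hE]
        filter_upwards [hae] with ω hω hω0
        by_cases hc : Atime z Y ζ t ω ≤ ENNReal.ofReal a
        · have : ω ∈ {ω | Atime z Y ζ t ω ≤ ENNReal.ofReal a} := hc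
          rw [indicator_of_mem this]
          refine le_trans ?_ le_add_self
          simpa using qk_le_one ENNReal.toReal_nonneg 0
        · refine le_trans ?_ le_self_add
          refine ENNReal.ofReal_le_ofReal (qk_anti ?_)
          exact (ENNReal.ofReal_le_iff_le_toReal (hω hω0)).1 (not_le.1 hc).le
    _ = _ := by
        rw [lintegral_add_left measurable_const, lintegral_indicator_one hF, Measure.restrict_apply hF]
        simp only [lintegral_const, Measure.restrict_apply MeasurableSet.univ, univ_inter]
        rw [fdd1 hY ht, pk_diag, ← ENNReal.ofReal_mul (qk_nonneg ha _)]
        congr 2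
        ext ω; simp; tauto
end

section
variable {Ω Ωw : Type*} [MeasurableSpace Ω] [MeasurableSpace Ωw] {μ : Measure Ω} {d : ℕ} {α : ℝ} {z : (Fin d → ℤ) → Ω → ℝ}
  {P : (Fin (d + 1) → ℤ) → Measure Ωw} {S : ℝ → Ωw → (Fin (d + 1) → ℤ)}

theorem key2 (hS : IsCTSRW (d + 1) P S) (hz : IsScenery d α μ z) (ζ : Ω) {t : ℝ} (ht : 0 ≤ t) :
    (P 0) {ω | layeredWalk d z S t ζ ω = 0} = ∫⁻ ω in {ω | (fun j : Fin d => S t ω j.succ) = 0},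
      ENNReal.ofReal (qk (Atime z (fun s ω => fun j : Fin d => S s ω j.succ) ζ t ω).toReal 0) ∂(P 0) :=
  key_identity hS z hz.nonneg ζ ht

theorem lower_bound (hα : 0 < α) (hα1 : α ≤ 1) (hz : IsScenery d α μ z) (hS : IsCTSRW (d + 1) P S) {κ σ : ℝ}
    (hκ : (d = 1 ∧ κ = 1/2) ∨ κ = 0) (hσ : (1 - κ) / α + κ < σ) :
    ∀ᵐ ζ ∂μ, ∀ᶠ t : ℝ in atTop, ENNReal.ofReal (qk (t ^ σ) 0 * (qk t 0 ^ d / 2)) ≤ (P 0) {ω | layeredWalk d z S t ζ ω = 0} := by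
  filter_upwards [A_tail hα hα1 hz (walk0_of hS) hκ hσ] with ζ hζ
  filter_upwards [hζ, eventually_ge_atTop 1] with t h ht
  rw [key2 hS hz ζ (by linarith)]
  exact lower_gen (walk0_of hS) ζ (by linarith) (by positivity) h.2
end
end

section
open MeasureTheory ProbabilityTheory Filter Set
open scoped ENNReal NNReal

section
variable {κ : Type*} [DecidableEq κ]

def occ (x : ℕ → κ) (y : κ) (n : ℕ) : ℕ := ∑ k ∈ Finset.range n, if x k = y then 1 else 0

def mcount : ℕ → (ℕ → κ) → κ → ℕ → ℕ
  | 0, _, _, _ => 1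
  | p + 1, x, y, n => ∑ k ∈ Finset.range n, if x k = y then mcount p x y (k + 1) else 0

theorem pow_step (l p : ℕ) : (l + 1) ^ (p + 1) ≤ l ^ (p + 1) + (p + 1) * (l + 1) ^ p := by
  induction p with
  | zero => simp
  | succ p ih =>
    calc (l + 1) ^ (p + 1 + 1) = l * (l + 1) ^ (p + 1) + (l + 1) ^ (p + 1) := by ring
      _ ≤ l * (l ^ (p + 1) + (p + 1) * (l + 1) ^ p) + (l + 1) ^ (p + 1) := by gcongr
      _ = l ^ (p + 2) + (p + 1) * (l * (l + 1) ^ p) + (l + 1) ^ (p + 1) := by ring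
      _ ≤ l ^ (p + 2) + (p + 1) * ((l + 1) * (l + 1) ^ p) + (l + 1) ^ (p + 1) := by gcongr; omega
      _ = _ := by ring

theorem occ_pow_le (x : ℕ → κ) (y : κ) (p : ℕ) : ∀ n, occ x y n ^ p ≤ p.factorial * mcount p x y n := by
  induction p with
  | zero => intro n; simp [mcount]
  | succ p ih =>
    intro n
    induction n with
    | zero => simp [occ, mcount]
    | succ n ihn =>
      have h1 : occ x y (n + 1) = occ x y n + if x n = y then 1 else 0 := Finset.sum_range_succ _ _
      have h2 : mcount (p + 1) x y (n + 1) = mcount (p + 1) x y n + if x n = y then mcount p x y (n + 1) else 0 := Finset.sum_range_succ _ _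
      by_cases h : x n = y
      · have h3 := ih (n + 1)
        rw [h1, if_pos h] at h3
        rw [h1, h2, if_pos h, if_pos h]
        refine (pow_step _ _).trans ?_
        rw [mul_add]
        refine Nat.add_le_add ihn ?_
        rw [Nat.factorial_succ, mul_assoc]
        exact Nat.mul_le_mul_left _ h3
      · rw [h1, h2, if_neg h, if_neg h]; exact ihn

theorem mcount_congr (p : ℕ) : ∀ (x x' : ℕ → κ) (y : κ) (n : ℕ), (∀ i < n, x i = x' i) → mcount p x y n = mcount p x' y n := by
  induction p with
  | zero => intros; rfl
  | succ p ih =>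
    intro x x' y n h
    refine Finset.sum_congr rfl fun k hk => ?_
    rw [Finset.mem_range] at hk
    rw [h k hk, ih x x' y (k + 1) fun i hi => h i (by omega)]
end

section
variable {Ω : Type*} [MeasurableSpace Ω] {d : ℕ} {ν : Measure Ω} {Y : ℝ → Ω → (Fin d → ℤ)}

theorem markov_step (hY : Walk0 d ν Y) {u : ℝ} (hu : 0 ≤ u) {j k : ℕ} (hjk : j ≤ k) (f : (ℕ → Fin d → ℤ) → ℝ≥0∞)
    (hf : ∀ x x' : ℕ → Fin d → ℤ, (∀ i < j + 1, x i = x' i) → f x = f x') (y w : Fin d → ℤ) :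
    ∫⁻ ω in {ω | Y (u + j) ω = y ∧ Y (u + k) ω = w}, f (fun i => Y (u + i) ω) ∂ν =
      ENNReal.ofReal (pk (k - j) y w) * ∫⁻ ω in {ω | Y (u + j) ω = y}, f (fun i => Y (u + i) ω) ∂ν := by
  have hYr : ∀ u, Measurable (Y u) := fun u => hY.meas.comp measurable_prodMk_left
  let V : Ω → (Fin (j + 1) → Fin d → ℤ) := fun ω i => Y (u + (i:ℕ)) ω
  have hV : Measurable V := measurable_pi_lambda _ fun i => hYr _
  let F : (Fin (j + 1) → Fin d → ℤ) → ℝ≥0∞ := fun v => f (fun i => v ⟨min i j, by omega⟩)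
  have hFV : ∀ ω, f (fun i => Y (u + i) ω) = F (V ω) := by
    intro ω
    refine hf _ _ fun i hi => ?_
    have : min i j = i := by omega
    simp [V, this]
  have hgen : ∀ E : Set Ω, MeasurableSet E → ∫⁻ ω in E, f (fun i => Y (u + i) ω) ∂ν = ∑' v, F v * ν {ω | V ω = v ∧ ω ∈ E} := by
    intro E hE
    simp_rw [hFV]
    rw [← lintegral_map (measurable_of_countable F) hV, lintegral_countable']
    refine tsum_congr fun v => ?_
    rw [Measure.map_apply hV (measurableSet_singleton _), Measure.restrict_apply (hV (measurableSet_singleton _))]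
    rfl
  have hE1 : MeasurableSet {ω | Y (u + j) ω = y} := hYr _ (measurableSet_singleton y)
  have hE2 : MeasurableSet {ω | Y (u + k) ω = w} := hYr _ (measurableSet_singleton w)
  rw [show {ω | Y (u + j) ω = y ∧ Y (u + k) ω = w} = {ω | Y (u + j) ω = y} ∩ {ω | Y (u + k) ω = w} from rfl, hgen _ hE1, hgen _ (hE1.inter hE2), ← ENNReal.tsum_mul_left]
  refine tsum_congr fun v => ?_
  rw [mul_left_comm]
  congr 1
  by_cases hv : v (Fin.last j) = y
  · have h1 := hY.fdd j (fun i => u + (i:ℕ)) (by simpa using hu) (by intro i; simp) v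
    have h2 := hY.fdd (j + 1) (fun i => if (i:ℕ) ≤ j then u + (i:ℕ) else u + k) (by simpa using hu)
      (by
        intro i
        have hi : (i:ℕ) ≤ j := by omega
        have hik : (i:ℝ) ≤ k := by exact_mod_cast hi.trans hjk
        simp only [Fin.val_castSucc, Fin.val_succ, hi, if_true]
        split_ifs
        · simp
        · simpa using hik)
      (Fin.snoc v w : Fin (j + 1 + 1) → Fin d → ℤ)
    rw [Fin.prod_univ_castSucc] at h2
    have s1 : {ω | V ω = v ∧ ω ∈ {ω | Y (u + j) ω = y}} = {ω | ∀ i : Fin (j + 1), Y (u + (i:ℕ)) ω = v i} := by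
      ext ω
      simp only [Set.mem_ofPred_eq, V, funext_iff]
      constructor
      · exact fun h => h.1
      · intro h; refine ⟨h, ?_⟩
        have := h (Fin.last j)
        simp only [Fin.val_last] at this
        rw [← hv]; exact this
    have s2 : {ω | V ω = v ∧ ω ∈ {ω | Y (u + j) ω = y} ∩ {ω | Y (u + k) ω = w}} =
        {ω | ∀ i : Fin (j + 1 + 1), Y (if (i:ℕ) ≤ j then u + (i:ℕ) else u + k) ω = (Fin.snoc v w : Fin (j + 1 + 1) → Fin d → ℤ) i} := by
      ext ω
      have e : ω ∈ {ω | V ω = v ∧ ω ∈ {ω | Y (u + j) ω = y}} ↔ ω ∈ {ω | ∀ i : Fin (j + 1), Y (u + (i:ℕ)) ω = v i} := by rw [s1]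
      simp only [Set.mem_ofPred_eq, mem_inter_iff] at e ⊢
      rw [Fin.forall_fin_succ', ← and_assoc, e]
      simp only [Fin.snoc_castSucc, Fin.snoc_last, Fin.val_castSucc, Fin.val_last]
      have h3 : ∀ i : Fin (j+1), (i:ℕ) ≤ j := fun i => by omega
      simp [h3]
    rw [s1]
    calc _ = _ := congrArg ν s2
      _ = _ := h2
      _ = _ := by
        rw [h1, ← ENNReal.ofReal_mul (pk_nonneg (by simpa using hjk) _ _)]
        congr 1
        have e0 : (Fin.snoc v w : Fin (j + 1 + 1) → Fin d → ℤ) 0 = v 0 := Fin.snoc_castSucc (α := fun _ => Fin d → ℤ) w v 0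
        have e1 : ∀ i : Fin (j+1), (Fin.snoc v w : Fin (j + 1 + 1) → Fin d → ℤ) i.castSucc = v i := fun i => Fin.snoc_castSucc (α := fun _ => Fin d → ℤ) w v i
        have e2 : ∀ i : Fin j, (Fin.snoc v w : Fin (j + 1 + 1) → Fin d → ℤ) i.castSucc.succ = v i.succ := fun i => Fin.snoc_castSucc (α := fun _ => Fin d → ℤ) w v i.succ
        rw [e0]
        simp only [e1, e2]
        have h3 : ∀ i : Fin j, (i:ℕ) ≤ j := fun i => by omega
        have h4 : ∀ i : Fin j, (i:ℕ) + 1 ≤ j := fun i => by omega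
        simp [h3, h4, hv]
        ring
  · have e1 : {ω | V ω = v ∧ ω ∈ {ω | Y (u + j) ω = y}} = ∅ := by
      ext ω
      simp only [Set.mem_ofPred_eq, mem_empty_iff_false, iff_false]
      rintro ⟨rfl, h⟩
      exact hv h
    have e2 : {ω | V ω = v ∧ ω ∈ {ω | Y (u + j) ω = y} ∩ {ω | Y (u + k) ω = w}} = ∅ := by
      refine subset_empty_iff.1 (e1 ▸ ?_)
      rintro ω ⟨h, h', _⟩
      exact ⟨h, h'⟩
    rw [e1]
    calc _ = _ := congrArg ν e2
      _ = _ := by simp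
end

section
variable {Ω : Type*} [MeasurableSpace Ω] {d : ℕ} {ν : Measure Ω} {Y : ℝ → Ω → (Fin d → ℤ)}

theorem path_meas (hY : Walk0 d ν Y) (u : ℝ) (n : ℕ) (f : (ℕ → Fin d → ℤ) → ℝ≥0∞)
    (hf : ∀ x x' : ℕ → Fin d → ℤ, (∀ i < n, x i = x' i) → f x = f x') : Measurable (fun ω => f (fun i => Y (u + i) ω)) := by
  have hYr : ∀ u, Measurable (Y u) := fun u => hY.meas.comp measurable_prodMk_left
  let V : Ω → (Fin n → Fin d → ℤ) := fun ω i => Y (u + (i:ℕ)) ω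
  have hV : Measurable V := measurable_pi_lambda _ fun i => hYr _
  let F : (Fin n → Fin d → ℤ) → ℝ≥0∞ := fun v => f (fun i => if h : i < n then v ⟨i, h⟩ else 0)
  have hFV : ∀ ω, f (fun i => Y (u + i) ω) = F (V ω) := by
    intro ω
    refine hf _ _ fun i hi => ?_
    simp [V, hi]
  simp_rw [hFV]
  exact (measurable_of_countable F).comp hV

/-- mean of the occupation functional on a visit -/
noncomputable def jmean (ν : Measure Ω) (Y : ℝ → Ω → (Fin d → ℤ)) (u : ℝ) (p : ℕ) (y : Fin d → ℤ) (k : ℕ) : ℝ≥0∞ :=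
  ∫⁻ ω in {ω | Y (u + k) ω = y}, (mcount p (fun i => Y (u + i) ω) y (k + 1) : ℝ≥0∞) ∂ν

theorem mcount_meas (hY : Walk0 d ν Y) (u : ℝ) (p : ℕ) (y : Fin d → ℤ) (n : ℕ) :
    Measurable (fun ω => (mcount p (fun i => Y (u + i) ω) y n : ℝ≥0∞)) :=
  path_meas hY u n (fun x => (mcount p x y n : ℝ≥0∞)) fun x x' h => by rw [mcount_congr p x x' y n h]

theorem mcount_mean (hY : Walk0 d ν Y) (u : ℝ) (p : ℕ) (y : Fin d → ℤ) (n : ℕ) :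
    ∫⁻ ω, (mcount (p + 1) (fun i => Y (u + i) ω) y n : ℝ≥0∞) ∂ν = ∑ k ∈ Finset.range n, jmean ν Y u p y k := by
  have hYr : ∀ u, Measurable (Y u) := fun u => hY.meas.comp measurable_prodMk_left
  have e : ∀ ω, (mcount (p + 1) (fun i => Y (u + i) ω) y n : ℝ≥0∞) =
      ∑ k ∈ Finset.range n, indicator {ω | Y (u + k) ω = y} (fun ω => (mcount p (fun i => Y (u + i) ω) y (k + 1) : ℝ≥0∞)) ω := by
    intro ω
    simp only [mcount, Nat.cast_sum, Nat.cast_ite, Nat.cast_zero, Set.indicator_apply, Set.mem_ofPred_eq]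
  have hE : ∀ k : ℕ, MeasurableSet {ω | Y (u + k) ω = y} := fun k => hYr _ (measurableSet_singleton y)
  simp_rw [e]
  rw [lintegral_finsetSum _ fun k _ => (mcount_meas hY u p y (k+1)).indicator (hE _)]
  refine Finset.sum_congr rfl fun k _ => ?_
  exact lintegral_indicator (hYr _ (measurableSet_singleton y)) _

theorem jmean_succ (hY : Walk0 d ν Y) {u : ℝ} (hu : 0 ≤ u) (p : ℕ) (y : Fin d → ℤ) (k : ℕ) :
    jmean ν Y u (p + 1) y k = ∑ j ∈ Finset.range (k + 1), ENNReal.ofReal (qk (k - j) 0 ^ d) * jmean ν Y u p y j := by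
  have hYr : ∀ u, Measurable (Y u) := fun u => hY.meas.comp measurable_prodMk_left
  have hE : ∀ k : ℕ, MeasurableSet {ω | Y (u + k) ω = y} := fun k => hYr _ (measurableSet_singleton y)
  unfold jmean
  have e : ∀ ω, (mcount (p + 1) (fun i => Y (u + i) ω) y (k + 1) : ℝ≥0∞) =
      ∑ j ∈ Finset.range (k + 1), indicator {ω | Y (u + j) ω = y} (fun ω => (mcount p (fun i => Y (u + i) ω) y (j + 1) : ℝ≥0∞)) ω := by
    intro ω
    simp only [mcount, Nat.cast_sum, Nat.cast_ite, Nat.cast_zero, Set.indicator_apply, Set.mem_ofPred_eq]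
  simp_rw [e]
  rw [lintegral_finsetSum _ fun k _ => (mcount_meas hY u p y (k+1)).indicator (hE _)]
  refine Finset.sum_congr rfl fun j hj => ?_
  have hjk : j ≤ k := by rw [Finset.mem_range] at hj; omega
  rw [lintegral_indicator (hE j), Measure.restrict_restrict (hE j)]
  have := markov_step hY hu hjk (fun x => (mcount p x y (j + 1) : ℝ≥0∞)) (fun x x' h => by rw [mcount_congr p x x' y _ h]) y y
  rw [pk_diag] at this
  exact this

theorem sum_jmean_succ (hY : Walk0 d ν Y) {u : ℝ} (hu : 0 ≤ u) (p : ℕ) (y : Fin d → ℤ) (n : ℕ) :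
    ∑ k ∈ Finset.range n, jmean ν Y u (p + 1) y k ≤ (∑ j ∈ Finset.range n, ENNReal.ofReal (qk j 0 ^ d)) * ∑ k ∈ Finset.range n, jmean ν Y u p y k := by
  calc _ = ∑ k ∈ Finset.range n, ∑ j ∈ Finset.range (k + 1), ENNReal.ofReal (qk (k - j) 0 ^ d) * jmean ν Y u p y j :=
        Finset.sum_congr rfl fun k _ => jmean_succ hY hu p y k
    _ = ∑ j ∈ Finset.range n, ∑ k ∈ Finset.Ico j n, ENNReal.ofReal (qk (k - j) 0 ^ d) * jmean ν Y u p y j := by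
        refine Finset.sum_comm' fun k j => ?_
        simp only [Finset.mem_range, Finset.mem_Ico]; omega
    _ ≤ ∑ j ∈ Finset.range n, (∑ i ∈ Finset.range n, ENNReal.ofReal (qk i 0 ^ d)) * jmean ν Y u p y j := by
        refine Finset.sum_le_sum fun j _ => ?_
        rw [← Finset.sum_mul]
        gcongr
        rw [Finset.sum_Ico_eq_sum_range]
        calc _ = ∑ i ∈ Finset.range (n - j), ENNReal.ofReal (qk i 0 ^ d) := by
              refine Finset.sum_congr rfl fun i _ => ?_
              push_cast; congr 3; ring
          _ ≤ _ := Finset.sum_le_sum_of_subset (Finset.range_subset_range.2 (by omega))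
    _ = _ := by rw [Finset.mul_sum]

theorem sum_mcount (hY : Walk0 d ν Y) {u : ℝ} (hu : 0 ≤ u) (p n : ℕ) :
    ∑' y, ∫⁻ ω, (mcount (p + 1) (fun i => Y (u + i) ω) y n : ℝ≥0∞) ∂ν ≤ (∑ j ∈ Finset.range n, ENNReal.ofReal (qk j 0 ^ d)) ^ p * n := by
  simp_rw [mcount_mean hY]
  set G := ∑ j ∈ Finset.range n, ENNReal.ofReal (qk j 0 ^ d)
  have h : ∀ y, ∑ k ∈ Finset.range n, jmean ν Y u p y k ≤ G ^ p * ∑ k ∈ Finset.range n, ENNReal.ofReal (pk (u + k) 0 y) := by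
    intro y
    induction p with
    | zero =>
      rw [pow_zero, one_mul]
      refine Finset.sum_le_sum fun k _ => ?_
      simp [jmean, mcount, fdd1 hY (show 0 ≤ u + k by positivity)]
    | succ p ih =>
      refine (sum_jmean_succ hY hu p y n).trans ?_
      rw [pow_succ', mul_assoc]
      gcongr
  refine (ENNReal.tsum_le_tsum h).trans ?_
  rw [ENNReal.tsum_mul_left]
  gcongr
  rw [Summable.tsum_finsetSum fun _ _ => ENNReal.summable]
  have hw : ∀ k : ℕ, ∑' y : Fin d → ℤ, ENNReal.ofReal (pk (u + k) 0 y) = 1 := fun k => walk_p hY (by positivity)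
  simp [hw]

theorem occ_tail (hY : Walk0 d ν Y) {u : ℝ} (hu : 0 ≤ u) (p n : ℕ) {Λ : ℝ} (hΛ : 0 < Λ) :
    ν {ω | ∃ y, Λ < occ (fun i => Y (u + i) ω) y n} ≤
      ENNReal.ofReal (Λ ^ (p + 1))⁻¹ * ((p + 1).factorial * ((∑ j ∈ Finset.range n, ENNReal.ofReal (qk j 0 ^ d)) ^ p * n)) := by
  have hset : {ω | ∃ y, Λ < occ (fun i => Y (u + i) ω) y n} = ⋃ y, {ω | Λ < occ (fun i => Y (u + i) ω) y n} := by ext ω; simp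
  rw [hset]
  refine (measure_iUnion_le _).trans ?_
  calc _ ≤ ∑' y, ENNReal.ofReal (Λ ^ (p + 1))⁻¹ * ((p + 1).factorial * ∫⁻ ω, (mcount (p + 1) (fun i => Y (u + i) ω) y n : ℝ≥0∞) ∂ν) := by
        refine ENNReal.tsum_le_tsum fun y => ?_
        have hm := mcount_meas hY u (p + 1) y n
        rw [← mul_assoc, ← lintegral_const_mul _ hm]
        refine le_trans ?_ (mul_meas_ge_le_lintegral (hm.const_mul _) 1)
        rw [one_mul]
        refine measure_mono fun ω hω => ?_
        simp only [Set.mem_ofPred_eq] at hω ⊢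
        have h1 := occ_pow_le (fun i => Y (u + i) ω) y (p + 1) n
        have h2 : Λ ^ (p + 1) ≤ ((p + 1).factorial : ℝ) * mcount (p + 1) (fun i => Y (u + i) ω) y n := by
          calc Λ ^ (p + 1) ≤ (occ (fun i => Y (u + i) ω) y n : ℝ) ^ (p + 1) := by gcongr
            _ ≤ _ := by exact_mod_cast h1
        rw [← ENNReal.ofReal_natCast, ← ENNReal.ofReal_natCast, ← ENNReal.ofReal_mul (by positivity), ← ENNReal.ofReal_mul (by positivity), ENNReal.one_le_ofReal, mul_assoc]
        rw [inv_mul_eq_div, one_le_div (by positivity)]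
        exact h2
    _ ≤ _ := by
        rw [ENNReal.tsum_mul_left, ENNReal.tsum_mul_left]
        gcongr
        exact sum_mcount hY hu p n
end
end

section
open MeasureTheory ProbabilityTheory Filter Set
open scoped ENNReal NNReal

theorem exp_conv {θ x : ℝ} (h0 : 0 ≤ θ) (h1 : θ ≤ 1) : Real.exp (-(θ * x)) ≤ 1 - θ * (1 - Real.exp (-x)) := by
  have := convexOn_exp.2 (mem_univ (-x)) (mem_univ 0) h0 (show 0 ≤ 1 - θ by linarith) (by ring)
  simp only [smul_eq_mul, mul_zero, add_zero, Real.exp_zero, mul_one] at this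
  calc _ = Real.exp (θ * -x) := by congr 1; ring
    _ ≤ _ := this
    _ = _ := by ring

section
variable {Ω : Type*} [MeasurableSpace Ω] {μ : Measure Ω} {d : ℕ} {α : ℝ} {z : (Fin d → ℤ) → Ω → ℝ}

theorem laplace_one (hz : IsScenery d α μ z) {a Λ l : ℝ} (ha : 0 < a) (hΛ : 0 < Λ) (hl0 : 0 ≤ l) (hl : l ≤ Λ) (y : Fin d → ℤ) :
    ∫⁻ ζ, ENNReal.ofReal (Real.exp (-(l * z y ζ / a))) ∂μ ≤ ENNReal.ofReal (Real.exp (-(l * ((1/2) * (μ {ζ | a / Λ < z 0 ζ}).toReal / Λ)))) := by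
  have := hz.prob
  set B := {ζ | a / Λ < z y ζ}
  have hB : MeasurableSet B := measurableSet_lt measurable_const (hz.meas y)
  have hBm : μ B = μ {ζ | a / Λ < z 0 ζ} := (hz.ident y).measure_mem_eq (s := Ioi (a / Λ)) measurableSet_Ioi
  rw [← hBm]
  have hexp : Real.exp (-1) ≤ 1 / 2 := by
    rw [Real.exp_neg, inv_eq_one_div]
    exact one_div_le_one_div_of_le (by norm_num) (by linarith [Real.add_one_le_exp (1:ℝ)])
  have hpt : ∀ ζ, ENNReal.ofReal (Real.exp (-(l * z y ζ / a))) + B.indicator (fun _ => ENNReal.ofReal (l / Λ * (1/2))) ζ ≤ 1 := by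
    intro ζ
    have h1 := exp_conv (θ := l / Λ) (x := Λ / a * z y ζ) (by positivity) ((div_le_one hΛ).2 hl)
    rw [show l / Λ * (Λ / a * z y ζ) = l * z y ζ / a by field_simp] at h1
    have hz0 := hz.nonneg y ζ
    by_cases hζ : ζ ∈ B
    · rw [indicator_of_mem hζ, ← ENNReal.ofReal_add (by positivity) (by positivity), ENNReal.ofReal_le_one]
      have h2 : 1 ≤ Λ / a * z y ζ := by
        have : a / Λ < z y ζ := hζ
        rw [div_lt_iff₀ hΛ] at this
        rw [div_mul_eq_mul_div, le_div_iff₀ ha]; linarith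
      have h3 : Real.exp (-(Λ / a * z y ζ)) ≤ 1/2 := le_trans (Real.exp_le_exp.2 (by linarith)) hexp
      have h4 : 0 ≤ l / Λ := by positivity
      nlinarith
    · rw [indicator_of_notMem hζ, add_zero, ENNReal.ofReal_le_one]
      exact Real.exp_le_one_iff.2 (by have : 0 ≤ l * z y ζ / a := by positivity
                                      linarith)
  have hInt0 : ∫⁻ ζ, ENNReal.ofReal (Real.exp (-(l * z y ζ / a))) ∂μ + ENNReal.ofReal (l / Λ * (1/2)) * μ B ≤ 1 := by
    have h := lintegral_mono (μ := μ) hpt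
    rw [lintegral_add_right _ (measurable_const.indicator hB), lintegral_indicator_const hB] at h
    simpa using h
  have hq : ENNReal.ofReal (l / Λ * (1/2)) * μ B = ENNReal.ofReal (l * ((1/2) * (μ B).toReal / Λ)) := by
    conv_lhs => rw [← ENNReal.ofReal_toReal (measure_ne_top μ B)]
    rw [← ENNReal.ofReal_mul (by positivity)]
    congr 1; ring
  rw [hq] at hInt0
  set q := l * ((1/2) * (μ B).toReal / Λ)
  have hq0 : 0 ≤ q := by positivity
  refine (ENNReal.le_sub_of_add_le_right ENNReal.ofReal_ne_top hInt0).trans ?_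
  rw [← ENNReal.ofReal_one, ← ENNReal.ofReal_sub _ hq0]
  refine ENNReal.ofReal_le_ofReal ?_
  linarith [Real.add_one_le_exp (-q)]

theorem occ_card {κ : Type*} [DecidableEq κ] (x : ℕ → κ) (y : κ) (n : ℕ) : ((Finset.range n).filter (fun k => x k = y)).card = occ x y n := by
  rw [Finset.card_filter]; rfl

theorem laplace (hz : IsScenery d α μ z) (x : ℕ → Fin d → ℤ) (N : ℕ) {a Λ : ℝ} (ha : 0 < a) (hΛ : 0 < Λ) (hmax : ∀ y, (occ x y N : ℝ) ≤ Λ) :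
    ∫⁻ ζ, ENNReal.ofReal (Real.exp (-((∑ k ∈ Finset.range N, z (x k) ζ) / a))) ∂μ ≤
      ENNReal.ofReal (Real.exp (-(N * ((1/2) * (μ {ζ | a / Λ < z 0 ζ}).toReal / Λ)))) := by
  set q := (1/2) * (μ {ζ | a / Λ < z 0 ζ}).toReal / Λ
  set R := (Finset.range N).image x
  have e : ∀ ζ, ENNReal.ofReal (Real.exp (-((∑ k ∈ Finset.range N, z (x k) ζ) / a))) = ∏ y ∈ R, ENNReal.ofReal (Real.exp (-((occ x y N : ℝ) * z y ζ / a))) := by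
    intro ζ
    rw [Finset.sum_comp (fun y => z y ζ) x, ← ENNReal.ofReal_prod_of_nonneg (fun _ _ => (Real.exp_pos _).le), ← Real.exp_sum, Finset.sum_div, ← Finset.sum_neg_distrib]
    simp only [occ_card, nsmul_eq_mul]
    rfl
  have hN : (N:ℝ) = ∑ y ∈ R, (occ x y N : ℝ) := by
    have := Finset.sum_comp (s := Finset.range N) (fun y => (1:ℝ)) x
    simp only [occ_card, nsmul_eq_mul, mul_one, Finset.sum_const, Finset.card_range] at this
    exact this
  simp_rw [e]
  rw [lintegral_prod_eq_prod_lintegral_of_indepFun R (fun y ζ => ENNReal.ofReal (Real.exp (-((occ x y N : ℝ) * z y ζ / a))))]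
  · calc _ ≤ ∏ y ∈ R, ENNReal.ofReal (Real.exp (-((occ x y N : ℝ) * q))) :=
          Finset.prod_le_prod' fun y _ => laplace_one hz ha hΛ (by positivity) (hmax y) y
      _ = _ := by
          rw [← ENNReal.ofReal_prod_of_nonneg (fun _ _ => (Real.exp_pos _).le), ← Real.exp_sum, Finset.sum_neg_distrib, ← Finset.sum_mul, ← hN]
  · exact hz.indep.comp (fun y r => ENNReal.ofReal (Real.exp (-((occ x y N : ℝ) * r / a)))) (fun y => by fun_prop)
  · intro y
    have := hz.meas y
    fun_prop
end

section
variable {Ω Ωw : Type*} [MeasurableSpace Ω] [MeasurableSpace Ωw] {μ : Measure Ω} {d : ℕ} {α : ℝ} {z : (Fin d → ℤ) → Ω → ℝ}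
  {ν : Measure Ωw} {Y : ℝ → Ωw → (Fin d → ℤ)}

noncomputable def eD (z : (Fin d → ℤ) → Ω → ℝ) (Y : ℝ → Ωw → (Fin d → ℤ)) (N : ℕ) (a : ℝ) (ζ : Ω) (u : ℝ) (ω : Ωw) : ℝ≥0∞ :=
  ENNReal.ofReal (Real.exp (-((∑ k ∈ Finset.range N, z (Y (u + k) ω) ζ) / a)))

theorem eD_meas (hz : IsScenery d α μ z) (hY : Walk0 d ν Y) (N : ℕ) (a : ℝ) :
    Measurable (fun p : (Ω × ℝ) × Ωw => eD z Y N a p.1.1 p.1.2 p.2) := by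
  have h1 : Measurable (fun p : Ω × (Fin d → ℤ) => z p.2 p.1) := measurable_from_prod_countable_left fun y => hz.meas y
  have h2 : ∀ k : ℕ, Measurable (fun p : (Ω × ℝ) × Ωw => z (Y (p.1.2 + k) p.2) p.1.1) := by
    intro k
    have h3 : Measurable (fun p : (Ω × ℝ) × Ωw => (p.1.2 + (k:ℝ), p.2)) := by fun_prop
    have h4 : Measurable (fun p : (Ω × ℝ) × Ωw => Y (p.1.2 + k) p.2) := hY.meas.comp h3
    exact h1.comp (measurable_fst.fst.prodMk h4)
  unfold eD
  have h5 := Finset.measurable_sum (Finset.range N) fun k _ => h2 k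
  fun_prop

theorem slice1 {A B C : Type*} [MeasurableSpace A] [MeasurableSpace B] [MeasurableSpace C] {G : A → B → C → ℝ≥0∞}
    (h : Measurable fun p : (A × B) × C => G p.1.1 p.1.2 p.2) (b : B) : Measurable fun p : A × C => G p.1 b p.2 := by
  have h0 : Measurable (fun p : A × C => ((p.1, b), p.2)) := (measurable_fst.prodMk measurable_const).prodMk measurable_snd
  exact h.comp h0

theorem slice2 {A B C : Type*} [MeasurableSpace A] [MeasurableSpace B] [MeasurableSpace C] {G : A → B → C → ℝ≥0∞}
    (h : Measurable fun p : (A × B) × C => G p.1.1 p.1.2 p.2) (a : A) : Measurable fun p : B × C => G a p.1 p.2 := by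
  have h0 : Measurable (fun p : B × C => ((a, p.1), p.2)) := (measurable_const.prodMk measurable_fst).prodMk measurable_snd
  exact h.comp h0

theorem eD_meas1 (hz : IsScenery d α μ z) (hY : Walk0 d ν Y) (N : ℕ) (a u : ℝ) :
    Measurable (fun p : Ω × Ωw => eD z Y N a p.1 u p.2) := slice1 (G := eD z Y N a) (eD_meas hz hY N a) u

theorem eD_meas2 (hz : IsScenery d α μ z) (hY : Walk0 d ν Y) (N : ℕ) (a : ℝ) (ζ : Ω) :
    Measurable (fun p : ℝ × Ωw => eD z Y N a ζ p.1 p.2) := slice2 (G := eD z Y N a) (eD_meas hz hY N a) ζ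

theorem annealed (hz : IsScenery d α μ z) (hY : Walk0 d ν Y) (N : ℕ) {a Λ : ℝ} (ha : 0 < a) (hΛ : 0 < Λ) {u : ℝ} (B : ℝ≥0∞)
    (hB : ν {ω | ∃ y, Λ < occ (fun i => Y (u + i) ω) y N} ≤ B) :
    ∫⁻ ζ, ∫⁻ ω, eD z Y N a ζ u ω ∂ν ∂μ ≤ ENNReal.ofReal (Real.exp (-(N * ((1/2) * (μ {ζ | a / Λ < z 0 ζ}).toReal / Λ)))) + B := by
  have := hz.prob
  have := hY.prob
  have hm2 := eD_meas1 hz hY N a u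
  rw [lintegral_lintegral_swap hm2.aemeasurable]
  set E0 := ENNReal.ofReal (Real.exp (-(N * ((1/2) * (μ {ζ | a / Λ < z 0 ζ}).toReal / Λ))))
  set F := {ω | ∃ y, Λ < occ (fun i => Y (u + i) ω) y N}
  calc _ ≤ ∫⁻ ω, (E0 + F.indicator 1 ω) ∂ν := by
        refine lintegral_mono fun ω => ?_
        by_cases hω : ω ∈ F
        · rw [indicator_of_mem hω]
          refine le_trans ?_ le_add_self
          calc _ ≤ ∫⁻ ζ, 1 ∂μ := by
                refine lintegral_mono fun ζ => ?_
                simp only [eD]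
                rw [ENNReal.ofReal_le_one, Real.exp_le_one_iff]
                have : 0 ≤ (∑ k ∈ Finset.range N, z (Y (u + k) ω) ζ) / a := div_nonneg (Finset.sum_nonneg fun _ _ => hz.nonneg _ _) ha.le
                linarith
            _ = _ := by simp
        · refine le_trans ?_ le_self_add
          refine laplace hz (fun k => Y (u + k) ω) N ha hΛ fun y => ?_
          by_contra hc
          exact hω ⟨y, not_le.1 hc⟩
    _ ≤ E0 + ν F := by
        rw [lintegral_add_left measurable_const]
        gcongr
        · simp
        · exact lintegral_indicator_one_le _
    _ ≤ _ := by gcongr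

theorem Atime_eq (hY : Walk0 d ν Y) (z : (Fin d → ℤ) → Ω → ℝ) (hz : ∀ y ζ, 0 ≤ z y ζ) (ζ : Ω) (N : ℕ) (ω : Ωw) :
    Atime z Y ζ N ω = ∫⁻ u in Ioc (0:ℝ) 1, ENNReal.ofReal (∑ k ∈ Finset.range N, z (Y (u + k) ω) ζ) := by
  unfold Atime
  have hm : Measurable (fun u => ENNReal.ofReal (z (Y u ω) ζ)) :=
    (measurable_of_countable (fun y => ENNReal.ofReal (z y ζ))).comp (hY.meas.comp measurable_prodMk_right)
  simp_rw [ENNReal.ofReal_sum_of_nonneg fun _ _ => hz _ _]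
  have hm' : ∀ k : ℕ, Measurable (fun u : ℝ => ENNReal.ofReal (z (Y (u + k) ω) ζ)) := fun k => hm.comp (measurable_id.add_const (k:ℝ))
  rw [lintegral_finsetSum _ fun k _ => hm' k]
  induction N with
  | zero => simp
  | succ N ih =>
    rw [Finset.sum_range_succ, ← ih, Nat.cast_succ, ← Ioc_union_Ioc_eq_Ioc (show (0:ℝ) ≤ N by positivity) (show (N:ℝ) ≤ N + 1 by linarith),
      lintegral_union measurableSet_Ioc (by rw [Set.disjoint_left]; intro x hx hx'; exact absurd hx.2 (not_le.2 hx'.1))]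
    congr 1
    rw [← lintegral_indicator measurableSet_Ioc, ← lintegral_indicator measurableSet_Ioc, ← lintegral_add_right_eq_self _ (N:ℝ)]
    congr 1; ext u
    simp only [Set.indicator_apply, mem_Ioc]
    congr 1
    refine propext ⟨fun h => ⟨?_, ?_⟩, fun h => ⟨?_, ?_⟩⟩ <;> linarith [h.1, h.2]

theorem clock_slow (hz : IsScenery d α μ z) (hY : Walk0 d ν Y) (ζ : Ω) (N : ℕ) {a t : ℝ} (ha : 0 < a) (ht : (N:ℝ) ≤ t) :
    ν {ω | Atime z Y ζ t ω ≤ ENNReal.ofReal a} ≤ ENNReal.ofReal (Real.exp 1) * ∫⁻ u in Ioc (0:ℝ) 1, ∫⁻ ω, eD z Y N a ζ u ω ∂ν := by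
  have := hY.prob
  have hm2 := eD_meas2 hz hY N a ζ
  have hm3 : Measurable (fun ω => ∫⁻ u in Ioc (0:ℝ) 1, eD z Y N a ζ u ω) := Measurable.lintegral_prod_left' hm2
  rw [lintegral_lintegral_swap hm2.aemeasurable, ← lintegral_const_mul _ hm3]
  refine le_trans ?_ (mul_meas_ge_le_lintegral (hm3.const_mul _) 1)
  rw [one_mul]
  refine measure_mono fun ω hω => ?_
  simp only [Set.mem_ofPred_eq] at hω ⊢
  have h1 : Atime z Y ζ N ω ≤ ENNReal.ofReal a := le_trans (lintegral_mono_set (Ioc_subset_Ioc_right ht)) hω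
  rw [Atime_eq hY z hz.nonneg ζ N ω] at h1
  set D : ℝ → ℝ := fun u => ∑ k ∈ Finset.range N, z (Y (u + k) ω) ζ
  have hD : Measurable D := by
    refine Finset.measurable_sum _ fun k _ => ?_
    have : Measurable (fun u : ℝ => Y u ω) := hY.meas.comp measurable_prodMk_right
    exact (measurable_of_countable (fun y => z y ζ)).comp (this.comp (measurable_id.add_const (k:ℝ)))
  have hDm : Measurable (fun u => ENNReal.ofReal (D u)) := hD.ennreal_ofReal
  have hpt : ∀ u, 2 ≤ ENNReal.ofReal (Real.exp 1) * eD z Y N a ζ u ω + ENNReal.ofReal a⁻¹ * ENNReal.ofReal (D u) := by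
    intro u
    have hD0 : 0 ≤ D u := Finset.sum_nonneg fun _ _ => hz.nonneg _ _
    change 2 ≤ ENNReal.ofReal (Real.exp 1) * ENNReal.ofReal (Real.exp (-(D u / a))) + _
    rw [← ENNReal.ofReal_mul (by positivity), ← ENNReal.ofReal_mul (by positivity), ← ENNReal.ofReal_add (by positivity) (by positivity), ← Real.exp_add]
    rw [show (2:ℝ≥0∞) = ENNReal.ofReal 2 by simp]
    refine ENNReal.ofReal_le_ofReal ?_
    have := Real.add_one_le_exp (1 + -(D u / a))
    rw [inv_mul_eq_div]; linarith
  have hm4 : Measurable (fun u => eD z Y N a ζ u ω) := hm2.comp (g := fun p : ℝ × Ωw => eD z Y N a ζ p.1 p.2) (f := fun u => (u, ω)) measurable_prodMk_right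
  have hI : 2 ≤ ENNReal.ofReal (Real.exp 1) * (∫⁻ u in Ioc (0:ℝ) 1, eD z Y N a ζ u ω) + ENNReal.ofReal a⁻¹ * ∫⁻ u in Ioc (0:ℝ) 1, ENNReal.ofReal (D u) := by
    have h := lintegral_mono (μ := volume.restrict (Ioc (0:ℝ) 1)) hpt
    rw [lintegral_add_right _ (hDm.const_mul _), lintegral_const_mul _ hDm, lintegral_const_mul _ hm4] at h
    simpa using h
  have h2 : ENNReal.ofReal a⁻¹ * ∫⁻ u in Ioc (0:ℝ) 1, ENNReal.ofReal (D u) ≤ 1 := by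
    calc _ ≤ ENNReal.ofReal a⁻¹ * ENNReal.ofReal a := by gcongr
      _ = 1 := by rw [← ENNReal.ofReal_mul (by positivity), inv_mul_cancel₀ ha.ne']; simp
  have h3 := hI.trans (add_le_add_right h2 _)
  rw [← one_add_one_eq_two] at h3
  exact (ENNReal.add_le_add_iff_right ENNReal.one_ne_top).1 h3
end
end

section
open MeasureTheory ProbabilityTheory Filter Set
open scoped ENNReal NNReal

theorem qk_pow_one {n : ℕ} (hn : 0 < n) : qk n 0 ≤ (Real.sqrt n)⁻¹ := qk_upper (by exact_mod_cast hn)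

theorem G_d1 (n : ℕ) : ∑ j ∈ Finset.range (n + 1), qk j 0 ≤ 1 + 2 * Real.sqrt n := by
  induction n with
  | zero => simp [qk_zero_zero]
  | succ n ih =>
    rw [Finset.sum_range_succ]
    have h1 := qk_pow_one (Nat.succ_pos n)
    have h2 : 0 < Real.sqrt ((n + 1 : ℕ) : ℝ) := Real.sqrt_pos.2 (by positivity)
    have h3 : Real.sqrt (n:ℝ) ≤ Real.sqrt ((n + 1 : ℕ) : ℝ) := Real.sqrt_le_sqrt (by push_cast; linarith)
    have h4 : Real.sqrt ((n + 1 : ℕ) : ℝ) ^ 2 = n + 1 := by rw [Real.sq_sqrt (by positivity)]; push_cast; ring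
    have h5 : Real.sqrt (n : ℝ) ^ 2 = n := Real.sq_sqrt (by positivity)
    have h6 : (Real.sqrt ((n + 1 : ℕ) : ℝ))⁻¹ ≤ 2 * (Real.sqrt ((n + 1 : ℕ) : ℝ) - Real.sqrt n) := by
      rw [inv_eq_one_div, div_le_iff₀ h2]
      nlinarith [sq_nonneg (Real.sqrt ((n + 1 : ℕ) : ℝ) - Real.sqrt n)]
    have h7 := h1.trans h6
    linarith

theorem G_d2 {d : ℕ} (hd : 2 ≤ d) (n : ℕ) : ∑ j ∈ Finset.range (n + 1), qk j 0 ^ d ≤ 2 + Real.log n := by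
  have hh := harmonic_le_one_add_log n
  rw [Finset.sum_range_succ']
  have e : ((harmonic n : ℚ) : ℝ) = ∑ i ∈ Finset.range n, ((i + 1 : ℕ) : ℝ)⁻¹ := by
    simp [harmonic]
  have h0 : qk ((0:ℕ):ℝ) 0 ^ d = 1 := by simp [qk_zero_zero]
  have h1 : ∑ j ∈ Finset.range n, qk ((j + 1 : ℕ) : ℝ) 0 ^ d ≤ ∑ i ∈ Finset.range n, ((i + 1 : ℕ) : ℝ)⁻¹ := by
    refine Finset.sum_le_sum fun j _ => ?_
    have hq0 := qk_nonneg (show (0:ℝ) ≤ ((j + 1 : ℕ) : ℝ) by positivity) 0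
    calc qk ((j + 1 : ℕ) : ℝ) 0 ^ d ≤ qk ((j + 1 : ℕ) : ℝ) 0 ^ 2 := pow_le_pow_of_le_one hq0 (qk_le_one (by positivity) _) hd
      _ ≤ ((Real.sqrt ((j + 1 : ℕ) : ℝ))⁻¹) ^ 2 := by
          have := qk_pow_one (Nat.succ_pos j)
          gcongr
      _ = _ := by rw [inv_pow, Real.sq_sqrt (by positivity)]
  rw [h0]; linarith

theorem G_bound {d : ℕ} {κ η : ℝ} (hκ : (d = 1 ∧ κ = 1/2) ∨ (2 ≤ d ∧ κ = 0)) (hη : 0 < η) :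
    ∃ C : ℝ, 0 < C ∧ ∀ n : ℕ, 1 ≤ n → ∑ j ∈ Finset.range n, qk j 0 ^ d ≤ C * (n:ℝ) ^ (κ + η) := by
  refine ⟨3 + 1 / η, by positivity, fun n hn => ?_⟩
  have hn1 : (1:ℝ) ≤ n := by exact_mod_cast hn
  have hn0 : (0:ℝ) < n := by linarith
  have hsub : ∑ j ∈ Finset.range n, qk j 0 ^ d ≤ ∑ j ∈ Finset.range (n + 1), qk j 0 ^ d :=
    Finset.sum_le_sum_of_subset_of_nonneg (Finset.range_subset_range.2 (by omega)) fun j _ _ => pow_nonneg (qk_nonneg (by positivity) _) _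
  refine hsub.trans ?_
  have hη' : 0 < 1 / η := by positivity
  rcases hκ with ⟨rfl, rfl⟩ | ⟨hd, rfl⟩
  · simp only [pow_one]
    have h1 : Real.sqrt n ≤ (n:ℝ) ^ (1 / 2 + η) := by
      rw [Real.sqrt_eq_rpow]; exact Real.rpow_le_rpow_of_exponent_le hn1 (by linarith)
    have h2 : 1 ≤ Real.sqrt n := Real.one_le_sqrt.2 hn1
    have := G_d1 n
    nlinarith
  · have h1 := Real.log_le_rpow_div hn0.le hη
    have h2 : 1 ≤ (n:ℝ) ^ η := Real.one_le_rpow hn1 hη.le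
    have := G_d2 hd n
    rw [zero_add]
    rw [div_eq_mul_one_div] at h1
    nlinarith

theorem exp_small {δ K : ℝ} (hδ : 0 < δ) : ∀ᶠ x : ℝ in atTop, Real.exp (-(1/2 * x ^ δ)) ≤ x ^ (-K) := by
  have h := isLittleO_exp_neg_mul_rpow_atTop (show (0:ℝ) < 1/2 by norm_num) (-K / δ)
  have h2 := (h.comp_tendsto (tendsto_rpow_atTop hδ)).bound (show (0:ℝ) < 1 by norm_num)
  filter_upwards [h2, eventually_gt_atTop 0] with x hx hx0
  simp only [Function.comp, one_mul, Real.norm_eq_abs, Real.abs_exp] at hx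
  rw [abs_of_nonneg (by positivity), ← Real.rpow_mul hx0.le, mul_div_cancel₀ _ hδ.ne'] at hx
  rwa [neg_mul] at hx

section
variable {Ω Ωw : Type*} [MeasurableSpace Ω] [MeasurableSpace Ωw] {μ : Measure Ω} {d : ℕ} {α : ℝ} {z : (Fin d → ℤ) → Ω → ℝ}
  {ν : Measure Ωw} {Y : ℝ → Ωw → (Fin d → ℤ)}

theorem annealed2 (hα : 0 < α) (hz : IsScenery d α μ z) (hY : Walk0 d ν Y) {κ σ : ℝ} (hκ : (d = 1 ∧ κ = 1/2) ∨ (2 ≤ d ∧ κ = 0))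
    (hσ0 : κ < σ) (hσ : σ < (1 - κ) / α + κ) (K : ℝ) :
    ∃ C : ℝ, ∀ᶠ k : ℕ in atTop, ∀ u : ℝ, 0 ≤ u →
      ∫⁻ ζ, ∫⁻ ω, eD z Y (2 ^ k) (((2:ℝ) ^ k) ^ σ) ζ u ω ∂ν ∂μ ≤ ENNReal.ofReal (C * ((2:ℝ) ^ k) ^ (-K)) := by
  have hκ0 : 0 ≤ κ := by rcases hκ with h | h <;> linarith
  set g := 1 - κ - α * (σ - κ) with hg
  have hg0 : 0 < g := by
    have : σ - κ < (1 - κ) / α := by linarith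
    rw [lt_div_iff₀ hα] at this
    linarith
  obtain ⟨η, hη, hη1, hη2⟩ : ∃ η : ℝ, 0 < η ∧ 4 * η ≤ σ - κ ∧ η * (2 + (σ - κ)) < g := by
    refine ⟨min ((σ - κ)/4) (g / (2 * (2 + (σ - κ)))), ?_, ?_, ?_⟩
    · have : 0 < σ - κ := by linarith
      positivity
    · linarith [min_le_left ((σ - κ)/4) (g / (2 * (2 + (σ - κ))))]
    · have h1 : 0 < 2 + (σ - κ) := by linarith
      calc _ ≤ g / (2 * (2 + (σ - κ))) * (2 + (σ - κ)) := by gcongr; exact min_le_right _ _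
        _ = g / 2 := by field_simp
        _ < g := by linarith
  obtain ⟨C, hC, hG⟩ := G_bound hκ hη
  obtain ⟨p, hp⟩ := exists_nat_ge ((K + 1) / η)
  rw [div_le_iff₀ hη] at hp
  set κ' := κ + 2 * η with hκ'
  set δ := 1 - κ' - (α + η) * (σ - κ') with hδ
  have hδ0 : 0 < δ := by nlinarith
  have htk : Tendsto (fun k : ℕ => (2:ℝ) ^ k) atTop atTop := tendsto_pow_atTop_atTop_of_one_lt (by norm_num)
  have hr : Tendsto (fun k : ℕ => ((2:ℝ) ^ k) ^ (σ - κ')) atTop atTop := (tendsto_rpow_atTop (by linarith)).comp htk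
  refine ⟨1 + (p + 1).factorial * C ^ p, ?_⟩
  filter_upwards [hr.eventually (scen_low hα hz (show α < α + η by linarith)), htk.eventually (exp_small (K := K) hδ0)] with k h1 h2 u hu
  set x : ℝ := (2:ℝ) ^ k with hx
  have hx1 : 1 ≤ x := one_le_pow₀ (by norm_num)
  have hx0 : 0 < x := by linarith
  have hcast : ((2 ^ k : ℕ) : ℝ) = x := by simp [hx]
  have hΛ : 0 < x ^ κ' := by positivity
  have htail := occ_tail hY hu p (2 ^ k) hΛ
  refine (annealed hz hY (2 ^ k) (show 0 < x ^ σ by positivity) hΛ _ htail).trans ?_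
  rw [add_mul, ENNReal.ofReal_add (by positivity) (by positivity), one_mul]
  refine add_le_add (ENNReal.ofReal_le_ofReal (le_trans (Real.exp_le_exp.2 ?_) h2)) ?_
  · rw [hcast, ← Real.rpow_sub hx0]
    have e : x ^ δ = x * (x ^ (σ - κ')) ^ (-(α + η)) * x ^ (-κ') := by
      rw [← Real.rpow_mul hx0.le]
      nth_rewrite 2 [← Real.rpow_one x]
      rw [← Real.rpow_add hx0, ← Real.rpow_add hx0]
      congr 1; rw [hδ]; ring
    rw [e, Real.rpow_neg hx0.le κ', neg_le_neg_iff]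
    calc _ = x * (1 / 2 * (x ^ (σ - κ')) ^ (-(α + η)) / x ^ κ') := by ring
      _ ≤ _ := by gcongr
  · have hGk := hG (2 ^ k) Nat.one_le_two_pow
    rw [hcast] at hGk
    rw [← ENNReal.ofReal_sum_of_nonneg fun j _ => pow_nonneg (qk_nonneg (by positivity) _) _]
    calc _ ≤ ENNReal.ofReal ((x ^ κ') ^ (p + 1))⁻¹ * ((p + 1).factorial * (ENNReal.ofReal (C * x ^ (κ + η)) ^ p * (2 ^ k : ℕ))) := by gcongr
      _ = ENNReal.ofReal (((x ^ κ') ^ (p + 1))⁻¹ * ((p + 1).factorial * ((C * x ^ (κ + η)) ^ p * x))) := by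
          rw [← ENNReal.ofReal_pow (by positivity), show (((2 ^ k : ℕ)) : ℝ≥0∞) = ENNReal.ofReal x by rw [← hcast, ENNReal.ofReal_natCast], ← ENNReal.ofReal_natCast ((p + 1).factorial), ← ENNReal.ofReal_mul (by positivity), ← ENNReal.ofReal_mul (by positivity), ← ENNReal.ofReal_mul (by positivity)]
      _ = ENNReal.ofReal ((p + 1).factorial * C ^ p * (x ^ (-(κ' * (p + 1))) * x ^ ((κ + η) * p) * x ^ (1:ℝ))) := by
          congr 1
          rw [← Real.rpow_natCast (x ^ κ'), ← Real.rpow_mul hx0.le, ← Real.rpow_neg hx0.le, mul_pow, ← Real.rpow_natCast (x ^ (κ + η)), ← Real.rpow_mul hx0.le, Real.rpow_one]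
          push_cast; ring
      _ ≤ _ := by
          rw [← Real.rpow_add hx0, ← Real.rpow_add hx0]
          refine ENNReal.ofReal_le_ofReal (mul_le_mul_of_nonneg_left (Real.rpow_le_rpow_of_exponent_le hx1 ?_) (by positivity))
          rw [hκ']; nlinarith

theorem slow_clock (hα : 0 < α) (hz : IsScenery d α μ z) (hY : Walk0 d ν Y) {κ σ : ℝ} (hκ : (d = 1 ∧ κ = 1/2) ∨ (2 ≤ d ∧ κ = 0))
    (hσ0 : κ < σ) (hσ : σ < (1 - κ) / α + κ) (K : ℝ) :
    ∀ᵐ ζ ∂μ, ∀ᶠ k : ℕ in atTop, ∀ t : ℝ, (2:ℝ) ^ k ≤ t →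
      ν {ω | Atime z Y ζ t ω ≤ ENNReal.ofReal (((2:ℝ) ^ k) ^ σ)} ≤ ENNReal.ofReal (Real.exp 1 * ((2:ℝ) ^ k) ^ (-K)) := by
  have := hz.prob
  have := hY.prob
  obtain ⟨C, hC⟩ := annealed2 hα hz hY hκ hσ0 hσ (K + 1)
  have hm : ∀ k : ℕ, Measurable (fun p : Ω × ℝ => ∫⁻ ω, eD z Y (2 ^ k) (((2:ℝ) ^ k) ^ σ) p.1 p.2 ω ∂ν) :=
    fun k => Measurable.lintegral_prod_right' (eD_meas hz hY _ _)
  have hBC := borel_mean (μ := μ) (fun k ζ => ∫⁻ u in Ioc (0:ℝ) 1, ∫⁻ ω, eD z Y (2 ^ k) (((2:ℝ) ^ k) ^ σ) ζ u ω ∂ν)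
    (fun k => Measurable.lintegral_prod_right' (hm k)) (ENNReal.ofReal C) ENNReal.ofReal_ne_top (show -(K + 1) < -K by linarith) (by
      filter_upwards [hC] with k hk
      rw [lintegral_lintegral_swap (hm k).aemeasurable]
      calc _ ≤ ∫⁻ u in Ioc (0:ℝ) 1, ENNReal.ofReal (C * ((2:ℝ) ^ k) ^ (-(K + 1))) :=
            setLIntegral_mono' measurableSet_Ioc fun u hu => hk u hu.1.le
        _ = _ := by
            rw [ENNReal.ofReal_mul' (by positivity)]; simp)
  filter_upwards [hBC] with ζ hζ
  filter_upwards [hζ] with k hk t ht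
  refine (clock_slow hz hY ζ (2 ^ k) (show 0 < ((2:ℝ) ^ k) ^ σ by positivity) (by simpa using ht)).trans ?_
  rw [ENNReal.ofReal_mul (by positivity)]
  gcongr
end
end

section
open MeasureTheory ProbabilityTheory Filter Set
open scoped ENNReal NNReal

theorem qk_upper_pow {t : ℝ} (ht : 0 < t) : qk t 0 ≤ t ^ (-(1/2) : ℝ) := by
  refine (qk_upper ht).trans (le_of_eq ?_)
  rw [Real.sqrt_eq_rpow, Real.rpow_neg ht.le]

theorem qk_lower_pow {t : ℝ} (ht : 1 ≤ t) : 10⁻¹ * t ^ (-(1/2) : ℝ) ≤ qk t 0 := by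
  refine le_trans (le_of_eq ?_) (qk_lower ht)
  rw [Real.sqrt_eq_rpow, Real.rpow_neg (by linarith), mul_inv]

section
variable {Ω Ωw : Type*} [MeasurableSpace Ω] [MeasurableSpace Ωw] {μ : Measure Ω} {d : ℕ} {α : ℝ} {z : (Fin d → ℤ) → Ω → ℝ}
  {P : (Fin (d + 1) → ℤ) → Measure Ωw} {S : ℝ → Ωw → (Fin (d + 1) → ℤ)}

theorem upper_bound (hα : 0 < α) (hα1 : α ≤ 1) (hz : IsScenery d α μ z) (hS : IsCTSRW (d + 1) P S) {κ σ : ℝ}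
    (hκ : (d = 1 ∧ κ = 1/2) ∨ (2 ≤ d ∧ κ = 0)) (hσ0 : κ < σ) (hσ : σ < (1 - κ) / α + κ) :
    ∃ C : ℝ, 0 < C ∧ ∀ᵐ ζ ∂μ, ∀ᶠ t : ℝ in atTop,
      ((P 0) {ω | layeredWalk d z S t ζ ω = 0}).toReal ≤ C * t ^ (-(σ / 2 + d / 2)) := by
  have hκ0 : 0 ≤ κ := by rcases hκ with h | h <;> linarith
  have hσp : 0 < σ := by linarith
  have hκ' : (d = 1 ∧ κ = 1/2) ∨ κ = 0 := hκ.imp id And.right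
  set K : ℝ := σ / 2 + d / 2 with hK
  have hK0 : 0 ≤ K := by positivity
  refine ⟨2 ^ (σ / 2) + Real.exp 1 * 2 ^ K, by positivity, ?_⟩
  filter_upwards [slow_clock hα hz (walk0_of hS) hκ hσ0 hσ K,
    A_tail hα hα1 hz (walk0_of hS) hκ' (show (1 - κ) / α + κ < (1 - κ) / α + κ + 1 by linarith)] with ζ h1 h2
  filter_upwards [dyad_ev h1, h2, eventually_ge_atTop 1] with t ⟨k, hk, hkt, htk⟩ h2 ht
  set x : ℝ := (2:ℝ) ^ k with hx
  have hx0 : 0 < x := by positivity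
  have ht0 : 0 < t := by linarith
  have hxt : t / 2 ≤ x := by rw [pow_succ] at htk; linarith
  have hq0 : 0 ≤ qk (x ^ σ) 0 := qk_nonneg (by positivity) _
  have hq1 : 0 ≤ qk t 0 := qk_nonneg ht0.le _
  have hpow : ∀ b : ℝ, 0 ≤ b → x ^ (-b) ≤ 2 ^ b * t ^ (-b) := by
    intro b hb
    calc x ^ (-b) ≤ (t / 2) ^ (-b) := Real.rpow_le_rpow_of_nonpos (by positivity) hxt (by linarith)
      _ = 2 ^ b * t ^ (-b) := by
        rw [Real.div_rpow ht0.le (by norm_num), Real.rpow_neg (show (0:ℝ) ≤ 2 by norm_num), div_inv_eq_mul, mul_comm]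
  rw [key2 hS hz ζ ht0.le]
  refine ENNReal.toReal_le_of_le_ofReal (by positivity) ?_
  refine (upper_gen (walk0_of hS) ζ ht0.le (show 0 ≤ x ^ σ by positivity) h2.1).trans ?_
  refine (add_le_add le_rfl ((measure_mono (fun ω hω => hω.2)).trans (hk t hkt))).trans ?_
  rw [← ENNReal.ofReal_add (by positivity) (by positivity), add_mul]
  refine ENNReal.ofReal_le_ofReal (add_le_add ?_ ?_)
  · calc qk (x ^ σ) 0 * qk t 0 ^ d ≤ (x ^ σ) ^ (-(1/2) : ℝ) * (t ^ (-(1/2) : ℝ)) ^ d := by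
          gcongr
          · exact qk_upper_pow (by positivity)
          · exact qk_upper_pow ht0
      _ = x ^ (-(σ / 2)) * t ^ (-(d / 2 : ℝ)) := by
          rw [← Real.rpow_mul hx0.le, ← Real.rpow_natCast, ← Real.rpow_mul ht0.le]
          congr 2 <;> ring
      _ ≤ 2 ^ (σ / 2) * t ^ (-(σ / 2)) * t ^ (-(d / 2 : ℝ)) := by
          gcongr
          exact hpow _ (by positivity)
      _ = _ := by
          rw [mul_assoc, ← Real.rpow_add ht0]
          congr 2; rw [hK]; ring
  · rw [mul_assoc]
    gcongr
    exact hpow _ hK0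

theorem lower_bound2 (hα : 0 < α) (hα1 : α ≤ 1) (hz : IsScenery d α μ z) (hS : IsCTSRW (d + 1) P S) {κ σ : ℝ}
    (hκ : (d = 1 ∧ κ = 1/2) ∨ κ = 0) (hσ : (1 - κ) / α + κ < σ) :
    ∃ c : ℝ, 0 < c ∧ ∀ᵐ ζ ∂μ, ∀ᶠ t : ℝ in atTop,
      c * t ^ (-(σ / 2 + d / 2)) ≤ ((P 0) {ω | layeredWalk d z S t ζ ω = 0}).toReal := by
  have := hS.prob 0
  have hκ1 : 0 ≤ κ ∧ κ ≤ 1/2 := by rcases hκ with h | h <;> constructor <;> linarith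
  have hσ0 : 0 < σ := by
    have : 0 < (1 - κ) / α := div_pos (by linarith) hα
    linarith
  refine ⟨10⁻¹ * (10⁻¹ ^ d / 2), by positivity, ?_⟩
  filter_upwards [lower_bound hα hα1 hz hS hκ hσ] with ζ h
  filter_upwards [h, eventually_ge_atTop 1] with t h ht
  have ht0 : 0 < t := by linarith
  refine le_trans ?_ ((ENNReal.ofReal_le_iff_le_toReal (measure_ne_top _ _)).1 h)
  calc _ = (10⁻¹ * (t ^ σ) ^ (-(1/2) : ℝ)) * ((10⁻¹ * t ^ (-(1/2) : ℝ)) ^ d / 2) := by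
        rw [mul_pow, ← Real.rpow_mul ht0.le, ← Real.rpow_natCast (t ^ _), ← Real.rpow_mul ht0.le,
          show -(σ / 2 + (d:ℝ) / 2) = σ * (-(1/2)) + (-(1/2)) * d by ring, Real.rpow_add ht0]
        ring
    _ ≤ _ := by
        gcongr
        · exact qk_nonneg (by positivity) _
        · exact qk_lower_pow (Real.one_le_rpow ht hσ0.le)
        · exact qk_lower_pow ht

theorem log_lim {f : ℝ → ℝ} {e : ℝ}
    (hu : ∀ m : ℕ, ∃ C : ℝ, 0 < C ∧ ∃ b : ℝ, e - 1 / (m + 1) ≤ b ∧ ∀ᶠ t : ℝ in atTop, f t ≤ C * t ^ (-b))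
    (hl : ∀ m : ℕ, ∃ c : ℝ, 0 < c ∧ ∃ b : ℝ, b ≤ e + 1 / (m + 1) ∧ ∀ᶠ t : ℝ in atTop, c * t ^ (-b) ≤ f t) :
    Tendsto (fun t => Real.log (f t) / Real.log t) atTop (nhds (-e)) := by
  rw [Metric.tendsto_nhds]
  intro ε hε
  obtain ⟨m, hm⟩ := exists_nat_one_div_lt (half_pos hε)
  obtain ⟨C, hC, b, hb, hu⟩ := hu m
  obtain ⟨c, hc, b', hb', hl⟩ := hl m
  have hlog := Real.tendsto_log_atTop
  filter_upwards [hu, hl, eventually_gt_atTop 1, hlog.eventually_gt_atTop (|Real.log C| / (ε / 2)),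
    hlog.eventually_gt_atTop (|Real.log c| / (ε / 2)), hlog.eventually_gt_atTop 0] with t h1 h2 ht h3 h4 h5
  have ht0 : 0 < t := by linarith
  have hp : 0 < c * t ^ (-b') := by positivity
  have hf : 0 < f t := hp.trans_le h2
  have l1 := Real.log_le_log hf h1
  have l2 := Real.log_le_log hp h2
  rw [Real.log_mul hC.ne' (by positivity), Real.log_rpow ht0] at l1
  rw [Real.log_mul hc.ne' (by positivity), Real.log_rpow ht0] at l2
  rw [div_lt_iff₀ (by positivity)] at h3 h4
  have k1 := le_abs_self (Real.log C)
  have k2 := neg_abs_le (Real.log c)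
  rw [Real.dist_eq, abs_lt, sub_neg_eq_add]
  set L := Real.log t
  have m1 : (e - 1 / ((m:ℝ) + 1)) * L ≤ b * L := by gcongr
  have m2 : b' * L ≤ (e + 1 / ((m:ℝ) + 1)) * L := by gcongr
  have m3 : 1 / ((m:ℝ) + 1) * L < ε / 2 * L := by gcongr
  constructor
  · rw [← sub_lt_iff_lt_add, lt_div_iff₀ h5]; nlinarith
  · rw [← lt_sub_iff_add_lt, div_lt_iff₀ h5]; nlinarith

theorem main_lim (hα : 0 < α) (hα1 : α ≤ 1) (hz : IsScenery d α μ z) (hS : IsCTSRW (d + 1) P S) {κ : ℝ}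
    (hκ : (d = 1 ∧ κ = 1/2) ∨ (2 ≤ d ∧ κ = 0)) :
    ∀ᵐ ζ ∂μ, Tendsto (fun t : ℝ =>
            Real.log ((P 0) {ω | layeredWalk d z S t ζ ω = 0}).toReal / Real.log t)
          atTop (nhds (-(((1 - κ) / α + κ) / 2 + d / 2))) := by
  have hκ1 : 0 ≤ κ ∧ κ ≤ 1/2 := by rcases hκ with h | h <;> constructor <;> linarith
  have hκ' : (d = 1 ∧ κ = 1/2) ∨ κ = 0 := hκ.imp id And.right
  have hpos : 0 < (1 - κ) / α := div_pos (by linarith) hα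
  set ρ := (1 - κ) / α + κ with hρ
  have hU : ∀ m : ℕ, ∃ C : ℝ, 0 < C ∧ ∃ b : ℝ, ρ / 2 + d / 2 - 1 / (m + 1) ≤ b ∧
      ∀ᵐ ζ ∂μ, ∀ᶠ t : ℝ in atTop, ((P 0) {ω | layeredWalk d z S t ζ ω = 0}).toReal ≤ C * t ^ (-b) := by
    intro m
    have hm : (0:ℝ) < 1 / (m + 1) := by positivity
    obtain ⟨σ, h1, h2⟩ := exists_between (show max κ (ρ - 1 / (m + 1)) < ρ from max_lt (by linarith) (by linarith))
    rw [max_lt_iff] at h1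
    obtain ⟨C, hC, h⟩ := upper_bound hα hα1 hz hS hκ h1.1 h2
    exact ⟨C, hC, _, by linarith, h⟩
  have hL : ∀ m : ℕ, ∃ c : ℝ, 0 < c ∧ ∃ b : ℝ, b ≤ ρ / 2 + d / 2 + 1 / (m + 1) ∧
      ∀ᵐ ζ ∂μ, ∀ᶠ t : ℝ in atTop, c * t ^ (-b) ≤ ((P 0) {ω | layeredWalk d z S t ζ ω = 0}).toReal := by
    intro m
    have hm : (0:ℝ) < 1 / (m + 1) := by positivity
    obtain ⟨c, hc, h⟩ := lower_bound2 hα hα1 hz hS hκ' (show ρ < ρ + 1 / (m + 1) by linarith)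
    exact ⟨c, hc, _, by linarith, h⟩
  choose C hC b hb hU using hU
  choose c hc b' hb' hL using hL
  filter_upwards [ae_all_iff.2 hU, ae_all_iff.2 hL] with ζ h1 h2
  exact log_lim (fun m => ⟨C m, hC m, b m, hb m, h1 m⟩) (fun m => ⟨c m, hc m, b' m, hb' m, h2 m⟩)
end
end

end

/-- Theorem (on-diagonal heat kernel, infinite-mean case): if `𝔼[z(0)] = ∞` then ℙ-a.s.
`P₀^ω(X_t = 0) = t^{-(3α+1)/(4α)+o(1)}` for `d = 1` and
`P₀^ω(X_t = 0) = t^{-1/(2α)-d/2+o(1)}` for `d ≥ 2`. -/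
theorem stmt5 (d : ℕ) (hd : 1 ≤ d) (α : ℝ) (hα : 0 < α)
    {Ωz Ωw : Type*} [MeasurableSpace Ωz] [MeasurableSpace Ωw]
    (μ : Measure Ωz) (z : (Fin d → ℤ) → Ωz → ℝ) (hz : IsScenery d α μ z)
    (hinf : ¬ Integrable (z 0) μ)
    (P : (Fin (d + 1) → ℤ) → Measure Ωw) (S : ℝ → Ωw → (Fin (d + 1) → ℤ))
    (hS : IsCTSRW (d + 1) P S) :
    ∀ᵐ ζ ∂ μ,
      (d = 1 →
        Tendsto (fun t : ℝ =>
            Real.log ((P 0) {ω | layeredWalk d z S t ζ ω = 0}).toReal / Real.log t)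
          atTop (nhds (-((3 * α + 1) / (4 * α))))) ∧
      (2 ≤ d →
        Tendsto (fun t : ℝ =>
            Real.log ((P 0) {ω | layeredWalk d z S t ζ ω = 0}).toReal / Real.log t)
          atTop (nhds (-(1 / (2 * α)) - d / 2))) := by
  have hα1 := alpha_le hα hz hinf
  rcases hd.eq_or_lt with h | h
  · have h1 : d = 1 := h.symm
    filter_upwards [main_lim hα hα1 hz hS (κ := 1 / 2) (Or.inl ⟨h1, rfl⟩)] with ζ hζ
    refine ⟨fun _ => ?_, fun h2 => absurd h2 (by omega)⟩
    convert hζ using 2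
    rw [h1]
    push_cast
    field_simp
    ring
  · filter_upwards [main_lim hα hα1 hz hS (κ := 0) (Or.inr ⟨h, rfl⟩)] with ζ hζ
    refine ⟨fun h1 => absurd h1 (by omega), fun _ => ?_⟩
    convert hζ using 2
    field_simp
    ring
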